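/- arXiv:1406.6386 — 2 statements merged into one kernel-verified Lean document; each statement's English description precedes it below -/
import Mathlib

section
/- If Γ = {Γ_i : i < n} is an analytic n-gap with n ≥ 2, then there exists B ⊆ {0,…,n−1} of cardinality 2 such that Γ can be B-broken. -/
open Set

/-- `a ⊆* b`: all but finitely many elements of `a` belong to `b`. -/
def AlmostSub {N : Type*} (a b : Set N) : Prop := (a \ b).Finite

/-- Two families of sets are orthogonal if any two members intersect in a finite set. -/
def OrthFam {N : Type*} (I J : Set (Set N)) : Prop := ∀ x ∈ I, ∀ y ∈ J, (x ∩ y).Finite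

/-- The families `Γ i` are separated if there are sets `a i` with `x ⊆* a i` for
every `x ∈ Γ i` and `⋂ i, a i` finite. -/
def SepFam {N ι : Type*} (Γ : ι → Set (Set N)) : Prop :=
  ∃ a : ι → Set N, (∀ i, ∀ x ∈ Γ i, (x \ a i).Finite) ∧ (⋂ i, a i).Finite

/-- The families `Γ i` are countably separated. -/
def CSepFam {N ι : Type*} (Γ : ι → Set (Set N)) : Prop :=
  ∃ C : Set (Set N), C.Countable ∧ ∀ x : ι → Set N, (∀ i, x i ∈ Γ i) →
    ∃ c : ι → Set N, (∀ i, c i ∈ C) ∧ (∀ i, x i ⊆ c i) ∧ (⋂ i, c i) = ∅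

/-- A family is infinitely hereditary if every infinite subset of a member is a member. -/
def HerFam {N : Type*} (I : Set (Set N)) : Prop := ∀ x ∈ I, ∀ y ⊆ x, y.Infinite → y ∈ I

/-- `Γ` is an `n∗`-gap. -/
def NStarGap {N ι : Type*} (Γ : ι → Set (Set N)) : Prop :=
  (∀ x : ι → Set N, (∀ i, x i ∈ Γ i) → (⋂ i, x i).Finite) ∧
  ¬ SepFam Γ ∧ (∀ i, HerFam (Γ i))

/-- `Γ` is an `n`-gap: an `n∗`-gap with pairwise orthogonal families. -/
def NGap {N ι : Type*} (Γ : ι → Set (Set N)) : Prop :=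
  NStarGap Γ ∧ ∀ i j, i ≠ j → OrthFam (Γ i) (Γ j)

/-- The orthogonal of a family of sets. -/
def orthFamC {N : Type*} (I : Set (Set N)) : Set (Set N) := {y | ∀ x ∈ I, (x ∩ y).Finite}

/-- A family of subsets of `N`, viewed as a subset of the Cantor space `2^N`,
is analytic. -/
def AnalyticFam {N : Type*} (Γ : Set (Set N)) : Prop :=
  MeasureTheory.AnalyticSet {f : N → Bool | {x | f x = true} ∈ Γ}

/-- A family of subsets of `N`, viewed as a subset of the Cantor space `2^N`, is closed. -/
def ClosedFam {N : Type*} (Γ : Set (Set N)) : Prop :=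
  IsClosed {f : N → Bool | {x | f x = true} ∈ Γ}

/-- The order `≤` between multiple gaps: an injection preserving the families
and their orthogonals. -/
def GapLE {A B ι : Type*} (Γ : ι → Set (Set A)) (Δ : ι → Set (Set B)) : Prop :=
  ∃ φ : A → B, Function.Injective φ ∧ ∀ i,
    (∀ x ∈ Γ i, φ '' x ∈ Δ i) ∧ (∀ y ∈ orthFamC (Γ i), φ '' y ∈ orthFamC (Δ i))

/-- `X` is an `i`-chain in the `n`-adic tree: `X = {x₀,x₁,…}` with `x_k⌢i ≤ x_{k+1}`. -/
def IChain {n : ℕ} (i : Fin n) (X : Set (List (Fin n))) : Prop :=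
  ∃ x : ℕ → List (Fin n), X = Set.range x ∧ ∀ k, (x k ++ [i]) <+: x (k + 1)

/-- `X` is an `[i]`-chain in the `n`-adic tree: `X = {x₀,x₁,…}` with
`x_{k+1} = x_k⌢i⌢w_k` where all entries of `w_k` are `≤ i`. -/
def BChain {n : ℕ} (i : Fin n) (X : Set (List (Fin n))) : Prop :=
  ∃ x : ℕ → List (Fin n), X = Set.range x ∧
    ∀ k, ∃ w : List (Fin n), (∀ j ∈ w, j ≤ i) ∧ x (k + 1) = x k ++ i :: w

/-- The n-gap Γ is B-broken: there is an infinite M ⊆ N orthogonal to every Γ_i with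
i ∉ B such that the restrictions {Γ_i|_M : i ∈ B} form a gap. -/
def BBroken {N : Type*} {n : ℕ} (Γ : Fin n → Set (Set N)) (B : Set (Fin n)) : Prop :=
  ∃ M : Set N, M.Infinite ∧
    (∀ i : Fin n, i ∉ B → ∀ x ∈ Γ i, (M ∩ x).Finite) ∧
    NGap (fun i : B => {x ∈ Γ i.1 | x ⊆ M})

namespace AnalyticGap

/-- The families `A` and `B` cannot be separated within `M`. -/
def NonSepOn {N : Type*} (A B : Set (Set N)) (M : Set N) : Prop :=
  ∀ a b : Set N, (∀ x ∈ A, x ⊆ M → (x \ a).Finite) → (∀ y ∈ B, y ⊆ M → (y \ b).Finite) →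
    (a ∩ b).Infinite

/-- On `M` the families `Γ a` and `Γ b` form a gap, and all other families are trivial. -/
structure Isolated {N ι : Type*} (Γ : ι → Set (Set N)) (a b : ι) (M : Set N) : Prop where
  ne : a ≠ b
  nonSep : NonSepOn (Γ a) (Γ b) M
  orth : ∀ k, k ≠ a → k ≠ b → ∀ x ∈ Γ k, (M ∩ x).Finite

/-- `F` lists the members of `Γ`, with closed membership conditions. -/
structure Coding {N : Type*} (Γ : Set (Set N)) (F : (ℕ → ℕ) → Set N) : Prop where
  closed : ∀ x, IsClosed {g | x ∈ F g}
  mem : ∀ g, F g ∈ Γ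
  surj : ∀ y ∈ Γ, ∃ g, F g = y

theorem exists_coding {N : Type*} {Γ : Set (Set N)} (h : AnalyticFam Γ) (hne : Γ.Nonempty) :
    ∃ F, Coding Γ F := by
  classical
  unfold AnalyticFam at h
  rw [MeasureTheory.AnalyticSet] at h
  rcases h with h | ⟨f, hf, hr⟩
  · obtain ⟨y, hy⟩ := hne
    have : (fun n => decide (n ∈ y)) ∈ {f : N → Bool | {x | f x = true} ∈ Γ} := by
      simpa using hy
    rw [h] at this
    exact this.elim
  · refine ⟨fun g => {x | f g x = true}, ?_, ?_, ?_⟩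
    · intro x
      exact isClosed_eq ((continuous_apply x).comp hf) continuous_const
    · intro g
      have : f g ∈ Set.range f := ⟨g, rfl⟩
      rw [hr] at this
      exact this
    · intro y hy
      have : (fun n => decide (n ∈ y)) ∈ {f : N → Bool | {x | f x = true} ∈ Γ} := by
        simpa using hy
      rw [← hr] at this
      obtain ⟨g, hg⟩ := this
      exact ⟨g, by simp [hg]⟩

theorem exists_limit_code {N : Type*} {F : (ℕ → ℕ) → Set N}
    (hF : ∀ x, IsClosed {g | x ∈ F g}) (P : ℕ → Set (ℕ → ℕ)) (hP : Antitone P)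
    (hne : ∀ k, (P k).Nonempty)
    (hc : ∀ k, ∀ g ∈ P k, ∀ g' ∈ P k, ∀ i < k, g i = g' i) :
    ∃ s, ∀ x, (∃ k, ∀ g ∈ P k, x ∈ F g) → x ∈ F s := by
  choose g hg using hne
  refine ⟨fun i => g (i + 1) i, ?_⟩
  rintro x ⟨k, hk⟩
  change (fun i => g (i + 1) i) ∈ {g | x ∈ F g}
  refine IsClosed.mem_of_tendsto (f := g) (b := Filter.atTop) (hF x) ?_ ?_
  · rw [tendsto_pi_nhds]
    intro i
    refine tendsto_const_nhds.congr' ?_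
    filter_upwards [Filter.eventually_ge_atTop (i + 1)] with m hm
    exact hc (i + 1) _ (hg _) _ (hP hm (hg m)) i (Nat.lt_succ_self i)
  · filter_upwards [Filter.eventually_ge_atTop k] with m hm
    exact hk _ (hP hm (hg m))

theorem NonSepOn.infinite {N : Type*} {A B : Set (Set N)} {M : Set N} (h : NonSepOn A B M) :
    M.Infinite := by
  have := h M M (fun x _ hx => by simp [Set.sdiff_eq_empty.2 hx])
    (fun x _ hx => by simp [Set.sdiff_eq_empty.2 hx])
  simpa using this

theorem Isolated.bBroken {N : Type*} {n : ℕ} {Γ : Fin n → Set (Set N)} (hgap : NGap Γ)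
    {a b : Fin n} {M : Set N} (h : Isolated Γ a b M) :
    ∃ B : Set (Fin n), B.ncard = 2 ∧ BBroken Γ B := by
  refine ⟨{a, b}, Set.ncard_pair h.ne, M, h.nonSep.infinite, ?_, ⟨?_, ?_, ?_⟩, ?_⟩
  · intro i hi x hx
    exact h.orth i (fun e => hi (by simp [e])) (fun e => hi (by simp [e])) x hx
  · intro x hx
    refine (hgap.2 a b h.ne _ (hx ⟨a, by simp⟩).1 _ (hx ⟨b, by simp⟩).1).subset ?_
    intro p hp
    exact ⟨Set.mem_iInter.1 hp _, Set.mem_iInter.1 hp _⟩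
  · rintro ⟨c, hc, hfin⟩
    refine h.nonSep (c ⟨a, by simp⟩) (c ⟨b, by simp⟩) (fun x hx hM => hc ⟨a, by simp⟩ x ⟨hx, hM⟩)
      (fun x hx hM => hc ⟨b, by simp⟩ x ⟨hx, hM⟩) (hfin.subset ?_)
    rintro p ⟨hpa, hpb⟩
    refine Set.mem_iInter.2 ?_
    rintro ⟨i, rfl | hi⟩
    · exact hpa
    · obtain rfl : i = b := hi
      exact hpb
  · intro i x hx y hy hinf
    exact ⟨hgap.1.2.2 i.1 x hx.1 y hy hinf, hy.trans hx.2⟩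
  · intro i j hij x hx y hy
    exact hgap.2 i.1 j.1 (fun e => hij (Subtype.ext e)) x hx.1 y hy.1

theorem NGap.nonSepOn {N : Type*} {n : ℕ} {Γ : Fin n → Set (Set N)} (hgap : NGap Γ)
    {a b : Fin n} (hab : a ≠ b) : NonSepOn (Γ a) (Γ b) Set.univ := by
  classical
  intro c d hc hd hfin
  refine hgap.1.2.1 ⟨fun i => if i = a then c else if i = b then d else Set.univ, ?_, ?_⟩
  · intro i x hx
    by_cases h1 : i = a
    · subst h1; simpa using hc x hx (Set.subset_univ _)
    · by_cases h2 : i = b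
      · subst h2; simpa [h1] using hd x hx (Set.subset_univ _)
      · simp [h1, h2]
  · refine hfin.subset ?_
    intro p hp
    have h1 := Set.mem_iInter.1 hp a
    have h2 := Set.mem_iInter.1 hp b
    simp only [if_true, hab.symm, if_false] at h1 h2
    exact ⟨h1, h2⟩

/-- A sequence of values outside any given finite set can be drawn from later and later columns. -/
theorem exists_fast_seq {N : Type*} {Δ : Set (Set N)} (X : ℕ → ℕ → N)
    (hX : ∀ q j : ℕ → ℕ, (∀ i, max (q i) (j i) < q (i + 1)) → ∃ y ∈ Δ, ∀ i, X (q i) (j i) ∈ y)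
    (G : Set N) (hG : ∀ Q, ∀ E : Set N, E.Finite → ∃ q > Q, ∃ j, X q j ∈ G ∧ X q j ∉ E) :
    ∃ y ∈ Δ, ∃ z ⊆ G ∩ y, z.Infinite ∧ ∀ p ∈ z, ∃ q j, p = X q j := by
  classical
  have step : ∀ S : ℕ × ℕ × Finset N, ∃ S' : ℕ × ℕ × Finset N,
      max S.1 S.2.1 < S'.1 ∧ X S'.1 S'.2.1 ∈ G ∧ X S'.1 S'.2.1 ∉ S.2.2 ∧
        S'.2.2 = insert (X S'.1 S'.2.1) S.2.2 := by
    intro S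
    obtain ⟨q, hq, j, h1, h2⟩ := hG (max S.1 S.2.1) S.2.2 S.2.2.finite_toSet
    exact ⟨⟨q, j, insert (X q j) S.2.2⟩, hq, h1, by simpa using h2, rfl⟩
  choose f hf using step
  let S : ℕ → ℕ × ℕ × Finset N := fun n => n.rec (f (0, 0, ∅)) (fun _ s => f s)
  have hS : ∀ n, S (n + 1) = f (S n) := fun n => rfl
  have hSG : ∀ n, X (S n).1 (S n).2.1 ∈ G ∧ X (S n).1 (S n).2.1 ∈ (S n).2.2 := by
    intro n
    cases n with
    | zero =>
      refine ⟨(hf (0, 0, ∅)).2.1, ?_⟩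
      have := (hf (0, 0, ∅)).2.2.2
      change _ ∈ (f (0, 0, ∅)).2.2
      rw [this]; exact Finset.mem_insert_self _ _
    | succ n =>
      rw [hS]
      refine ⟨(hf (S n)).2.1, ?_⟩
      rw [(hf (S n)).2.2.2]; exact Finset.mem_insert_self _ _
  have hmono : Monotone (fun n => (S n).2.2) := by
    refine monotone_nat_of_le_succ fun n => ?_
    rw [hS, (hf (S n)).2.2.2]
    exact Finset.subset_insert _ _
  have hlt : ∀ m n, m < n → X (S m).1 (S m).2.1 ≠ X (S n).1 (S n).2.1 := by
    intro m n hmn e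
    obtain ⟨n, rfl⟩ : ∃ k, n = k + 1 := ⟨n - 1, by omega⟩
    have h1 := hmono (Nat.lt_succ_iff.1 hmn) (hSG m).2
    rw [e, hS] at h1
    exact (hf (S n)).2.2.1 h1
  obtain ⟨y, hy, hyX⟩ := hX (fun n => (S n).1) (fun n => (S n).2.1) (fun n => (hf (S n)).1)
  refine ⟨y, hy, Set.range fun n => X (S n).1 (S n).2.1, ?_, ?_, ?_⟩
  · rintro _ ⟨n, rfl⟩
    exact ⟨(hSG n).1, hyX n⟩
  · refine Set.infinite_range_of_injective ?_
    intro m n e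
    rcases lt_trichotomy m n with h | h | h
    · exact (hlt m n h e).elim
    · exact h
    · exact (hlt n m h e.symm).elim
  · rintro _ ⟨n, rfl⟩
    exact ⟨_, _, rfl⟩

/-- A sequence of columns in `Γ a` all of whose fast selections lie in members of `Γ l`. -/
theorem isolated_of_columns {N : Type*} {n : ℕ} {Γ : Fin n → Set (Set N)} (hgap : NGap Γ)
    {a l : Fin n} (hal : a ≠ l) (X : ℕ → ℕ → N) (hinj : ∀ q, Function.Injective (X q))
    (hcol : ∀ q, ∃ x ∈ Γ a, ∀ j, X q j ∈ x)
    (hX : ∀ q j : ℕ → ℕ, (∀ i, max (q i) (j i) < q (i + 1)) →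
      ∃ y ∈ Γ l, ∀ i, X (q i) (j i) ∈ y) :
    Isolated Γ a l {p | ∃ q j, p = X q j} := by
  have hher := hgap.1.2.2
  have hrange : ∀ q, Set.range (X q) ∈ Γ a := by
    intro q
    obtain ⟨x, hx, h⟩ := hcol q
    refine hher a x hx _ ?_ (Set.infinite_range_of_injective (hinj q))
    rintro _ ⟨j, rfl⟩; exact h j
  refine ⟨hal, ?_, ?_⟩
  · intro c d hc hd hfin
    obtain ⟨y, hy, z, hz, hzi, hzM⟩ := exists_fast_seq X hX (c \ d) (by
      intro Q E hE
      have h1 := hc _ (hrange (Q + 1)) (by rintro _ ⟨j, rfl⟩; exact ⟨_, _, rfl⟩)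
      have h2 : (Set.range (X (Q + 1)) \ ((Set.range (X (Q + 1)) \ c) ∪ (c ∩ d) ∪ E)).Infinite :=
        (Set.infinite_range_of_injective (hinj _)).sdiff ((h1.union hfin).union hE)
      obtain ⟨p, ⟨j, rfl⟩, hp⟩ := h2.nonempty
      refine ⟨Q + 1, Nat.lt_succ_self Q, j, ?_, fun h => hp (Or.inr h)⟩
      have hpc : X (Q + 1) j ∈ c := by
        by_contra h; exact hp (Or.inl (Or.inl ⟨⟨j, rfl⟩, h⟩))
      exact ⟨hpc, fun h => hp (Or.inl (Or.inr ⟨hpc, h⟩))⟩)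
    have hzl : z ∈ Γ l := hher l y hy z (fun p hp => (hz hp).2) hzi
    have := hd z hzl (fun p hp => hzM p hp)
    refine hzi (this.subset fun p hp => ⟨hp, (hz hp).1.2⟩)
  · intro k hka hkl y hy
    by_contra hinf
    have hinf : ({p | ∃ q j, p = X q j} ∩ y).Infinite := hinf
    obtain ⟨y', hy', z, hz, hzi, -⟩ := exists_fast_seq X hX y (by
      intro Q E hE
      have h1 : (⋃ q ∈ Set.Iic Q, Set.range (X q) ∩ y).Finite :=
        (Set.finite_Iic Q).biUnion fun q _ => hgap.2 a k (Ne.symm hka) _ (hrange q) _ hy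
      obtain ⟨p, ⟨⟨q, j, rfl⟩, hpy⟩, hp⟩ := (hinf.sdiff (h1.union hE)).nonempty
      refine ⟨q, ?_, j, hpy, fun h => hp (Or.inr h)⟩
      by_contra hq
      exact hp (Or.inl (Set.mem_biUnion (Set.mem_Iic.2 (not_lt.1 hq)) ⟨⟨j, rfl⟩, hpy⟩)))
    exact hzi ((hgap.2 k l hkl y hy y' hy').subset hz)

/-- Countably many sets separate, up to finite sets, the sets coded by `P` and by `Q`. -/
def CSep {N : Type*} (F F' : (ℕ → ℕ) → Set N) (P Q : Set (ℕ → ℕ)) : Prop :=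
  ∃ C : Set (Set N), C.Countable ∧
    ∀ g ∈ P, ∀ h ∈ Q, ∃ c ∈ C, (F g \ c).Finite ∧ (F' h ∩ c).Finite

theorem CSep.iUnion_left {N : Type*} {F F' : (ℕ → ℕ) → Set N} {ι : Type*} [Countable ι]
    {P : ι → Set (ℕ → ℕ)} {Q : Set (ℕ → ℕ)} (h : ∀ i, CSep F F' (P i) Q) :
    CSep F F' (⋃ i, P i) Q := by
  choose C hC h using h
  refine ⟨⋃ i, C i, Set.countable_iUnion hC, fun g hg k hk => ?_⟩
  obtain ⟨i, hi⟩ := Set.mem_iUnion.1 hg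
  obtain ⟨c, hc, h'⟩ := h i g hi k hk
  exact ⟨c, Set.mem_iUnion.2 ⟨i, hc⟩, h'⟩

theorem CSep.iUnion_right {N : Type*} {F F' : (ℕ → ℕ) → Set N} {ι : Type*} [Countable ι]
    {P : Set (ℕ → ℕ)} {Q : ι → Set (ℕ → ℕ)} (h : ∀ i, CSep F F' P (Q i)) :
    CSep F F' P (⋃ i, Q i) := by
  choose C hC h using h
  refine ⟨⋃ i, C i, Set.countable_iUnion hC, fun g hg k hk => ?_⟩
  obtain ⟨i, hi⟩ := Set.mem_iUnion.1 hk
  obtain ⟨c, hc, h'⟩ := h i g hg k hi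
  exact ⟨c, Set.mem_iUnion.2 ⟨i, hc⟩, h'⟩

theorem CSep.mono {N : Type*} {F F' : (ℕ → ℕ) → Set N} {P P' Q Q' : Set (ℕ → ℕ)}
    (h : CSep F F' P Q) (hP : P' ⊆ P) (hQ : Q' ⊆ Q) : CSep F F' P' Q' := by
  obtain ⟨C, hC, h⟩ := h
  exact ⟨C, hC, fun g hg k hk => h g (hP hg) k (hQ hk)⟩

theorem exists_point_not_cSep {N : Type*} [Countable N] {F F' : (ℕ → ℕ) → Set N}
    {P Q : Set (ℕ → ℕ)} (h : ¬ CSep F F' P Q) (E : Set N) (hE : E.Finite) :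
    ∃ p ∉ E, ¬ CSep F F' {g ∈ P | p ∈ F g} Q ∧ ¬ CSep F F' P {g ∈ Q | p ∈ F' g} := by
  by_contra hcon
  push Not at hcon
  let A : Set N := {p | p ∉ E ∧ CSep F F' {g ∈ P | p ∈ F g} Q}
  let B : Set N := {p | p ∉ E ∧ ¬ CSep F F' {g ∈ P | p ∈ F g} Q}
  obtain ⟨C, hC, h1⟩ := CSep.iUnion_left (P := fun p : A => {g ∈ P | p.1 ∈ F g})
    (fun p => p.2.2)
  obtain ⟨D, hD, h2⟩ := CSep.iUnion_right (Q := fun p : B => {g ∈ Q | p.1 ∈ F' g})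
    (fun p => hcon p.1 p.2.1 p.2.2)
  refine h ⟨insert B (C ∪ D), (hC.union hD).insert B, fun g hg k hk => ?_⟩
  by_cases hA : ∃ p ∈ A, p ∈ F g
  · obtain ⟨p, hpA, hp⟩ := hA
    obtain ⟨c, hc, h'⟩ := h1 g (Set.mem_iUnion.2 ⟨⟨p, hpA⟩, hg, hp⟩) k hk
    exact ⟨c, Or.inr (Or.inl hc), h'⟩
  by_cases hB : ∃ p ∈ B, p ∈ F' k
  · obtain ⟨p, hpB, hp⟩ := hB
    obtain ⟨c, hc, h'⟩ := h2 g hg k (Set.mem_iUnion.2 ⟨⟨p, hpB⟩, hk, hp⟩)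
    exact ⟨c, Or.inr (Or.inr hc), h'⟩
  push Not at hA hB
  refine ⟨B, Or.inl rfl, hE.subset ?_, Set.finite_empty.subset ?_⟩
  · rintro p ⟨hp, hpB⟩
    by_contra hpE
    by_cases hc : CSep F F' {g ∈ P | p ∈ F g} Q
    · exact hA p ⟨hpE, hc⟩ hp
    · exact hpB ⟨hpE, hc⟩
  · rintro p ⟨hp, hpB⟩
    exact hB p hpB hp

theorem not_cSep_fix {N : Type*} {F F' : (ℕ → ℕ) → Set N}
    {P Q : Set (ℕ → ℕ)} (h : ¬ CSep F F' P Q) (n : ℕ) :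
    ∃ i j, ¬ CSep F F' {g ∈ P | g n = i} {g ∈ Q | g n = j} := by
  by_contra hcon
  push Not at hcon
  refine h ((CSep.iUnion_left fun i => CSep.iUnion_right (hcon i)).mono ?_ ?_)
  · exact fun g hg => Set.mem_iUnion.2 ⟨g n, hg, rfl⟩
  · exact fun g hg => Set.mem_iUnion.2 ⟨g n, hg, rfl⟩

/-- A binary tree of points whose `false`-chains lie in members of `A` and whose `true`-chains
lie in members of `B`. Nodes are lists, the root being at the end. -/
structure ChainTree {N : Type*} (A B : Set (Set N)) (u : List Bool → N) : Prop where
  chain_false : ∀ t : ℕ → List Bool, (∀ k, (false :: t k) <:+ t (k + 1)) → ∃ y ∈ A, ∀ k, u (t k) ∈ y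
  chain_true : ∀ t : ℕ → List Bool, (∀ k, (true :: t k) <:+ t (k + 1)) → ∃ y ∈ B, ∀ k, u (t k) ∈ y
  ne : ∀ i η η', (i :: η) <:+ η' → u η ≠ u η'

/-- Monotonicity along a tree follows from monotonicity at each step. -/
theorem suffix_induction {α β : Type*} [Preorder β] (f : List α → β)
    (h : ∀ i s, f s ≤ f (i :: s)) {s t : List α} (hst : s <:+ t) : f s ≤ f t := by
  obtain ⟨w, rfl⟩ := hst
  induction w with
  | nil => exact le_rfl
  | cons i w ih => exact ih.trans (h i (w ++ s))

theorem length_ge_of_chain {α : Type*} {t : ℕ → List α}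
    (ht : ∀ k, ∃ i, (i :: t k) <:+ t (k + 1)) (k : ℕ) : k ≤ (t k).length := by
  induction k with
  | zero => exact Nat.zero_le _
  | succ k ih =>
    obtain ⟨i, hi⟩ := ht k
    have := hi.length_le
    simp only [List.length_cons] at this
    omega

/-- Sets of codes attached to the nodes of a tree, decreasing and fixing more coordinates,
provide codes along chains. -/
theorem exists_code_of_chain {N α : Type*} {Γ : Set (Set N)} {F : (ℕ → ℕ) → Set N}
    (hF : Coding Γ F) (P : List α → Set (ℕ → ℕ)) (hne : ∀ s, (P s).Nonempty)
    (hanti : ∀ i s, P (i :: s) ⊆ P s)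
    (hfix : ∀ i s, ∀ g ∈ P (i :: s), ∀ g' ∈ P (i :: s), g s.length = g' s.length)
    (t : ℕ → List α) (ht : ∀ k, ∃ i, (i :: t k) <:+ t (k + 1)) (x : ℕ → N)
    (hx : ∀ k, ∀ g ∈ P (t (k + 1)), x k ∈ F g) : ∃ y ∈ Γ, ∀ k, x k ∈ y := by
  have hmono : ∀ {s s' : List α}, s <:+ s' → P s' ⊆ P s := fun h =>
    suffix_induction (β := (Set (ℕ → ℕ))ᵒᵈ) (fun s => OrderDual.toDual (P s)) hanti h
  have hfix' : ∀ s : List α, ∀ g ∈ P s, ∀ g' ∈ P s, ∀ i < s.length, g i = g' i := by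
    intro s
    induction s with
    | nil => simp
    | cons a s ih =>
      intro g hg g' hg' i hi
      rcases Nat.lt_succ_iff_lt_or_eq.1 hi with h | rfl
      · exact ih g (hanti a s hg) g' (hanti a s hg') i h
      · exact hfix a s g hg g' hg'
  have hsuf : ∀ k, t k <:+ t (k + 1) := fun k =>
    (List.suffix_cons _ _).trans (ht k).choose_spec
  obtain ⟨s, hs⟩ := exists_limit_code hF.closed (fun k => P (t k))
    (antitone_nat_of_succ_le fun k => hmono (hsuf k)) (fun k => hne _)
    (fun k g hg g' hg' i hi => hfix' _ g hg g' hg' i (hi.trans_le (length_ge_of_chain ht k)))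
  exact ⟨F s, hF.mem s, fun k => hs _ ⟨k + 1, hx k⟩⟩

theorem exists_chainTree {N : Type*} [Countable N] {A B : Set (Set N)} {F F' : (ℕ → ℕ) → Set N}
    (hF : Coding A F) (hF' : Coding B F') (h : ¬ CSep F F' Set.univ Set.univ) :
    ∃ u, ChainTree A B u := by
  classical
  let State := {S : Set (ℕ → ℕ) × Set (ℕ → ℕ) × Finset N // ¬ CSep F F' S.1 S.2.1}
  have step : ∀ (n : ℕ) (S : State), ∃ p : N, ∃ T : Bool → State, p ∉ S.1.2.2 ∧ ∀ i,
      (T i).1.1 ⊆ S.1.1 ∧ (T i).1.2.1 ⊆ S.1.2.1 ∧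
      (∀ g ∈ (T i).1.1, ∀ g' ∈ (T i).1.1, g n = g' n) ∧
      (∀ g ∈ (T i).1.2.1, ∀ g' ∈ (T i).1.2.1, g n = g' n) ∧
      (T i).1.2.2 = insert p S.1.2.2 ∧
      (i = false → ∀ g ∈ (T i).1.1, p ∈ F g) ∧ (i = true → ∀ g ∈ (T i).1.2.1, p ∈ F' g) := by
    rintro n ⟨⟨P, Q, E⟩, hS⟩
    obtain ⟨p, hp, h0, h1⟩ := exists_point_not_cSep hS E E.finite_toSet
    obtain ⟨i0, j0, h0⟩ := not_cSep_fix h0 n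
    obtain ⟨i1, j1, h1⟩ := not_cSep_fix h1 n
    refine ⟨p, fun i => if i then ⟨⟨_, _, insert p E⟩, h1⟩ else ⟨⟨_, _, insert p E⟩, h0⟩,
      by simpa using hp, ?_⟩
    rintro (_ | _)
    · refine ⟨fun g hg => hg.1.1, fun g hg => hg.1, ?_, ?_, rfl, fun _ g hg => hg.1.2, by simp⟩
      · exact fun g hg g' hg' => hg.2.trans hg'.2.symm
      · exact fun g hg g' hg' => hg.2.trans hg'.2.symm
    · refine ⟨fun g hg => hg.1, fun g hg => hg.1.1, ?_, ?_, rfl, by simp, fun _ g hg => hg.1.2⟩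
      · exact fun g hg g' hg' => hg.2.trans hg'.2.symm
      · exact fun g hg g' hg' => hg.2.trans hg'.2.symm
  choose p T hp hT using step
  let St : List Bool → State := fun η =>
    List.rec ⟨⟨Set.univ, Set.univ, ∅⟩, h⟩ (fun i s S => T s.length S i) η
  have hSt : ∀ i s, St (i :: s) = T s.length (St s) i := fun i s => rfl
  let u : List Bool → N := fun s => p s.length (St s)
  have hE : ∀ {s t : List Bool}, s <:+ t → (St s).1.2.2 ⊆ (St t).1.2.2 := fun hst =>
    suffix_induction (fun s => (St s).1.2.2) (fun i s => by
      rw [hSt, (hT _ _ i).2.2.2.2.1]; exact Finset.subset_insert _ _) hst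
  have hmono1 : ∀ {s t : List Bool}, s <:+ t → (St t).1.1 ⊆ (St s).1.1 := fun hst =>
    suffix_induction (β := (Set (ℕ → ℕ))ᵒᵈ) (fun s => OrderDual.toDual (St s).1.1)
      (fun i s => (hT s.length (St s) i).1) hst
  have hmono2 : ∀ {s t : List Bool}, s <:+ t → (St t).1.2.1 ⊆ (St s).1.2.1 := fun hst =>
    suffix_induction (β := (Set (ℕ → ℕ))ᵒᵈ) (fun s => OrderDual.toDual (St s).1.2.1)
      (fun i s => (hT s.length (St s) i).2.1) hst
  refine ⟨u, ?_, ?_, ?_⟩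
  · intro t ht
    refine exists_code_of_chain hF (fun s => (St s).1.1) ?_ (fun i s => (hT s.length (St s) i).1)
      (fun i s => (hT s.length (St s) i).2.2.1) t (fun k => ⟨_, ht k⟩) (fun k => u (t k)) ?_
    · intro s
      by_contra hcon
      rw [Set.not_nonempty_iff_eq_empty] at hcon
      exact (St s).2 ⟨∅, Set.countable_empty, by simp [hcon]⟩
    · intro k g hg
      exact (hT _ _ false).2.2.2.2.2.1 rfl g (hmono1 (ht k) hg)
  · intro t ht
    refine exists_code_of_chain hF' (fun s => (St s).1.2.1) ?_
      (fun i s => (hT s.length (St s) i).2.1)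
      (fun i s => (hT s.length (St s) i).2.2.2.1) t (fun k => ⟨_, ht k⟩) (fun k => u (t k)) ?_
    · intro s
      by_contra hcon
      rw [Set.not_nonempty_iff_eq_empty] at hcon
      exact (St s).2 ⟨∅, Set.countable_empty, by simp [hcon]⟩
    · intro k g hg
      exact (hT _ _ true).2.2.2.2.2.2 rfl g (hmono2 (ht k) hg)
  · intro i s t hst e
    have h1 : u s ∈ (St (i :: s)).1.2.2 := by
      rw [hSt, (hT _ _ i).2.2.2.2.1]; exact Finset.mem_insert_self _ _
    have h2 := hE hst h1
    rw [e] at h2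
    exact hp _ _ h2

/-- The nodes `s` and `t` split at some node, `s` going in the direction `o`. -/
def Split (o : Bool) (s t : List Bool) : Prop := ∃ ζ, (o :: ζ) <:+ s ∧ ((!o) :: ζ) <:+ t

theorem eq_of_cons_suffix {α : Type*} {i j : α} {ζ t : List α} (h : (i :: ζ) <:+ t)
    (h' : (j :: ζ) <:+ t) : i = j := by
  have := (List.suffix_of_suffix_length_le h h' (by simp)).eq_of_length (by simp)
  simp at this
  exact this

theorem suffix_of_cons_suffix {α : Type*} {i j : α} {ζ ξ t : List α} (h : (i :: ζ) <:+ t)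
    (h' : (j :: ξ) <:+ t) (hl : ζ.length < ξ.length) : (i :: ζ) <:+ ξ :=
  List.suffix_of_suffix_length_le h ((List.suffix_cons _ _).trans h') (by simpa using hl)

theorem Split.not_suffix {o : Bool} {s t : List Bool} (h : Split o s t) : ¬ s <:+ t := by
  obtain ⟨ζ, h1, h2⟩ := h
  intro hst
  have := eq_of_cons_suffix (h1.trans hst) h2
  simp at this

theorem Split.symm {o : Bool} {s t : List Bool} (h : Split o s t) : Split (!o) t s := by
  obtain ⟨ζ, h1, h2⟩ := h
  exact ⟨ζ, h2, by simpa using h1⟩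

theorem Split.not_split {o : Bool} {s t : List Bool} (h : Split o s t) : ¬ Split (!o) s t := by
  rintro ⟨ξ, h3, h4⟩
  obtain ⟨ζ, h1, h2⟩ := h
  rw [Bool.not_not] at h4
  rcases lt_trichotomy ζ.length ξ.length with hl | hl | hl
  · have := eq_of_cons_suffix (suffix_of_cons_suffix h1 h3 hl) (suffix_of_cons_suffix h2 h4 hl)
    simp at this
  · have h5 := (List.suffix_of_suffix_length_le h1 h3 (by simp [hl])).eq_of_length (by simp [hl])
    simp at h5
  · have := eq_of_cons_suffix (suffix_of_cons_suffix h3 h1 hl) (suffix_of_cons_suffix h4 h2 hl)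
    simp at this

/-- Two distinct nodes are either comparable or split. -/
theorem node_cases (s t : List Bool) :
    s = t ∨ (∃ i, (i :: s) <:+ t) ∨ (∃ i, (i :: t) <:+ s) ∨ ∃ o, Split o s t := by
  have grow : ∀ {s t : List Bool} (i : Bool), (∃ j, (j :: s) <:+ t) → ∃ j, (j :: s) <:+ i :: t :=
    fun i ⟨j, hj⟩ => ⟨j, hj.trans (List.suffix_cons _ _)⟩
  induction s with
  | nil =>
    rcases List.eq_nil_or_concat t with rfl | ⟨t, i, rfl⟩
    · exact Or.inl rfl
    · exact Or.inr (Or.inl ⟨i, ⟨t, by simp⟩⟩)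
  | cons i s ih =>
    rcases ih with rfl | ⟨j, hj⟩ | ⟨j, hj⟩ | ⟨o, ζ, h1, h2⟩
    · exact Or.inr (Or.inr (Or.inl ⟨i, List.suffix_rfl⟩))
    · by_cases hij : i = j
      · subst hij
        obtain ⟨w, hw⟩ := hj
        rcases List.eq_nil_or_concat w with rfl | ⟨w, k, rfl⟩
        · exact Or.inl (by simpa using hw)
        · exact Or.inr (Or.inl ⟨k, ⟨w, by simpa using hw⟩⟩)
      · have : j = !i := by cases i <;> cases j <;> simp_all
        subst this
        exact Or.inr (Or.inr (Or.inr ⟨i, s, List.suffix_rfl, hj⟩))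
    · exact Or.inr (Or.inr (Or.inl (grow i ⟨j, hj⟩)))
    · exact Or.inr (Or.inr (Or.inr ⟨o, ζ, h1.trans (List.suffix_cons _ _), h2⟩))

/-- A copy of the binary tree inside itself. -/
structure Copy where
  toFun : List Bool → List Bool
  step : ∀ i η, (i :: toFun η) <:+ toFun (i :: η)

namespace Copy

instance : CoeFun Copy fun _ => List Bool → List Bool := ⟨Copy.toFun⟩

/-- The set of nodes of a copy. -/
def nodes (φ : Copy) : Set (List Bool) := Set.range φ

instance : Preorder Copy := Preorder.lift nodes

theorem le_def {φ ψ : Copy} : φ ≤ ψ ↔ ∀ η, φ η ∈ ψ.nodes :=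
  Set.range_subset_iff

theorem apply_mem (φ : Copy) (η : List Bool) : φ η ∈ φ.nodes := ⟨η, rfl⟩

theorem suffix (φ : Copy) {s t : List Bool} (h : s <:+ t) : φ s <:+ φ t := by
  obtain ⟨w, rfl⟩ := h
  induction w with
  | nil => exact List.suffix_rfl
  | cons i w ih => exact ih.trans ((List.suffix_cons _ _).trans (φ.step i (w ++ s)))

theorem cons_suffix (φ : Copy) {i : Bool} {s t : List Bool} (h : (i :: s) <:+ t) :
    (i :: φ s) <:+ φ t := (φ.step i s).trans (φ.suffix h)

theorem split (φ : Copy) {o : Bool} {s t : List Bool} (h : Split o s t) : Split o (φ s) (φ t) := by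
  obtain ⟨ζ, h1, h2⟩ := h
  exact ⟨φ ζ, φ.cons_suffix h1, φ.cons_suffix h2⟩

theorem split_of_split (φ : Copy) {o : Bool} {s t : List Bool} (h : Split o (φ s) (φ t)) :
    Split o s t := by
  rcases node_cases s t with rfl | ⟨i, hi⟩ | ⟨i, hi⟩ | ⟨o', h'⟩
  · exact (h.not_suffix List.suffix_rfl).elim
  · exact (h.not_suffix (φ.suffix ((List.suffix_cons _ _).trans hi))).elim
  · exact (h.symm.not_suffix (φ.suffix ((List.suffix_cons _ _).trans hi))).elim
  · by_cases ho : o' = o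
    · exact ho ▸ h'
    · have : o' = !o := by cases o <;> cases o' <;> simp_all
      subst this
      exact (h.not_split (φ.split h')).elim

/-- The composition of two copies. -/
def comp (φ ψ : Copy) : Copy := ⟨fun η => φ (ψ η), fun i η => φ.cons_suffix (ψ.step i η)⟩

theorem comp_le (φ ψ : Copy) : φ.comp ψ ≤ φ := le_def.2 fun η => φ.apply_mem (ψ η)

/-- The part of a copy above a node. -/
def cone (φ : Copy) (ν : List Bool) : Copy := ⟨fun ξ => φ (ξ ++ ν), fun i ξ => φ.step i (ξ ++ ν)⟩

theorem cone_le (φ : Copy) (ν : List Bool) : φ.cone ν ≤ φ := le_def.2 fun _ => φ.apply_mem _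

/-- The identical copy. -/
def id : Copy := ⟨fun η => η, fun _ _ => List.suffix_rfl⟩

theorem step_of_le_cone {φ ψ : Copy} {i : Bool} (h : ψ ≤ φ.cone [i]) :
    (i :: φ []) <:+ ψ [] := by
  obtain ⟨ξ, hξ⟩ := le_def.1 h []
  rw [← hξ]
  exact φ.cons_suffix ⟨ξ, rfl⟩

end Copy

theorem finite_length_le (n : ℕ) : {η : List Bool | η.length ≤ n}.Finite :=
  List.finite_length_le _ n

theorem exists_suffix_of_length {α : Type*} (σ : List α) {n : ℕ} (h : n ≤ σ.length) :
    ∃ η, η.length = n ∧ η <:+ σ :=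
  ⟨σ.drop (σ.length - n), by simp; omega, List.drop_suffix _ _⟩

theorem exists_copy_of_dense (χ : List Bool → Prop) (h : ∀ ν, ∃ ξ, ν <:+ ξ ∧ χ ξ) :
    ∃ ψ : Copy, ∀ η, χ (ψ η) := by
  choose e he hχ using h
  let f : List Bool → List Bool := fun η => List.rec (e []) (fun i _ s => e (i :: s)) η
  refine ⟨⟨f, fun i η => he (i :: f η)⟩, fun η => ?_⟩
  cases η with
  | nil => exact hχ _
  | cons i η => exact hχ _

theorem exists_copy_mono (χ : List Bool → Prop) :
    ∃ ψ : Copy, (∀ η, χ (ψ η)) ∨ ∀ η, ¬ χ (ψ η) := by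
  by_cases h : ∀ ν, ∃ ξ, ν <:+ ξ ∧ χ ξ
  · obtain ⟨ψ, hψ⟩ := exists_copy_of_dense χ h
    exact ⟨ψ, Or.inl hψ⟩
  · push Not at h
    obtain ⟨ν, hν⟩ := h
    exact ⟨Copy.id.cone ν, Or.inr fun η => hν _ ⟨η, rfl⟩⟩

theorem exists_copy_colour {κ : Type*} (L : List κ) (R : κ → List Bool → Prop)
    (h : ∀ x, ∃ k ∈ L, R k x) : ∃ ψ : Copy, ∃ k ∈ L, ∀ η, R k (ψ η) := by
  induction L generalizing R with
  | nil => obtain ⟨k, hk, -⟩ := h []; simp at hk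
  | cons k L ih =>
    obtain ⟨ψ, hψ | hψ⟩ := exists_copy_mono (R k)
    · exact ⟨ψ, k, by simp, hψ⟩
    · obtain ⟨ψ', k', hk', h'⟩ := ih (fun k x => R k (ψ x)) (fun x => by
        obtain ⟨k', hk', h'⟩ := h (ψ x)
        rcases List.mem_cons.1 hk' with rfl | hk'
        · exact (hψ x h').elim
        · exact ⟨k', hk', h'⟩)
      exact ⟨ψ.comp ψ', k', by simp [hk'], h'⟩

/-- Copies chosen successively on both sides of every node fuse into one copy. -/
theorem exists_fusion (φ : Copy) (R : ℕ → (Bool → Copy) → Prop)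
    (h : ∀ n, ∀ g ≤ φ, ∃ G : Bool → Copy, (∀ i, G i ≤ g.cone [i]) ∧ R n G) :
    ∃ φ' ≤ φ, ∀ η : List Bool, ∃ G, R η.length G ∧
      ∀ i ξ, (i :: η) <:+ ξ → φ' ξ ∈ (G i).nodes := by
  choose! G hG hR using h
  let T : List Bool → Copy := fun η => List.rec φ (fun i s g => G s.length g i) η
  have hT : ∀ i s, T (i :: s) = G s.length (T s) i := fun i s => rfl
  have hle : ∀ η, T η ≤ φ := by
    intro η
    induction η with
    | nil => exact le_rfl
    | cons i η ih => exact (hG _ _ ih i).trans ((Copy.cone_le _ _).trans ih)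
  have hanti : ∀ {s t : List Bool}, s <:+ t → T t ≤ T s := fun hst =>
    suffix_induction (β := Copyᵒᵈ) (fun s => OrderDual.toDual (T s))
      (fun i s => (hG s.length (T s) (hle s) i).trans (Copy.cone_le _ _)) hst
  refine ⟨⟨fun η => T η [], fun i η => Copy.step_of_le_cone (hG _ _ (hle η) i)⟩, ?_, ?_⟩
  · exact Copy.le_def.2 fun η => hle η ((T η).apply_mem [])
  · exact fun η => ⟨G η.length (T η), hR _ _ (hle η), fun i ξ hξ =>
      hanti hξ ((T ξ).apply_mem [])⟩

/-- Every set of nodes in `P` is almost disjoint from the copy `φ`. -/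
def Kills (P : Set ((ℕ → ℕ) × Set (List Bool))) (φ : Copy) : Prop :=
  ∀ p ∈ P, (p.2 ∩ φ.nodes).Finite

/-- No smaller copy kills `P`. -/
def Alive (P : Set ((ℕ → ℕ) × Set (List Bool))) (φ : Copy) : Prop :=
  ∀ φ' ≤ φ, ¬ Kills P φ'

/-- The members of `P` passing through the node `x`. -/
def through (P : Set ((ℕ → ℕ) × Set (List Bool))) (x : List Bool) :
    Set ((ℕ → ℕ) × Set (List Bool)) := {p ∈ P | x ∈ p.2}

theorem Kills.mono {P Q : Set ((ℕ → ℕ) × Set (List Bool))} {φ ψ : Copy} (h : Kills P φ)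
    (hQ : Q ⊆ P) (hψ : ψ ≤ φ) : Kills Q ψ :=
  fun p hp => (h p (hQ hp)).subset (Set.inter_subset_inter_right _ hψ)

theorem Alive.of_le {P : Set ((ℕ → ℕ) × Set (List Bool))} {φ ψ : Copy} (h : Alive P φ)
    (hψ : ψ ≤ φ) : Alive P ψ := fun φ' hφ' => h φ' (hφ'.trans hψ)

theorem Alive.nonempty {P : Set ((ℕ → ℕ) × Set (List Bool))} {φ : Copy} (h : Alive P φ) :
    P.Nonempty := by
  by_contra hP
  rw [Set.not_nonempty_iff_eq_empty] at hP
  exact h φ le_rfl (by simp [hP, Kills])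

theorem Alive.exists_of_iUnion {P : Set ((ℕ → ℕ) × Set (List Bool))}
    {Q : ℕ → Set ((ℕ → ℕ) × Set (List Bool))} (hPQ : P ⊆ ⋃ n, Q n) {φ : Copy} (h : Alive P φ) :
    ∃ n, ∃ φ' ≤ φ, Alive (Q n) φ' := by
  by_contra hcon
  push Not at hcon
  have hk : ∀ n, ∀ φ' ≤ φ, ∃ φ'' ≤ φ', Kills (Q n) φ'' := by
    intro n φ' hφ'
    have := hcon n φ' hφ'
    unfold Alive at this
    push Not at this
    exact this
  obtain ⟨φ', hφ', hf⟩ := exists_fusion φ (fun n G => ∀ i, Kills (Q n) (G i)) (by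
    intro n g hg
    choose G hG hGk using fun i : Bool => hk n (g.cone [i]) ((g.cone_le _).trans hg)
    exact ⟨G, hG, hGk⟩)
  refine h φ' hφ' fun p hp => ?_
  obtain ⟨n, hn⟩ := Set.mem_iUnion.1 (hPQ hp)
  choose G hG hGm using hf
  have hfin : (Set.image φ' {η | η.length ≤ n} ∪
      ⋃ η ∈ {η : List Bool | η.length ≤ n}, ⋃ i : Bool, if η.length = n then
        p.2 ∩ (G η i).nodes else ∅).Finite := by
    refine ((finite_length_le n).image _).union ((finite_length_le n).biUnion fun η _ =>
      Set.finite_iUnion fun i => ?_)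
    split_ifs with hη
    · exact hG η i p (hη ▸ hn)
    · exact Set.finite_empty
  refine hfin.subset ?_
  rintro _ ⟨hpx, σ, rfl⟩
  by_cases hσ : σ.length ≤ n
  · exact Or.inl ⟨σ, hσ, rfl⟩
  · obtain ⟨ν, hν, hνσ⟩ := exists_suffix_of_length σ (n := n + 1) (by omega)
    obtain ⟨i, η, rfl⟩ := List.exists_cons_of_length_eq_add_one hν
    have hη : η.length = n := by simpa using hν
    refine Or.inr (Set.mem_biUnion (x := η) (by simp [hη]) (Set.mem_iUnion.2 ⟨i, ?_⟩))
    rw [if_pos hη]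
    exact ⟨hpx, hGm η i σ hνσ⟩

theorem Alive.exists_fix {P : Set ((ℕ → ℕ) × Set (List Bool))} {φ : Copy} (h : Alive P φ) (n : ℕ) :
    ∃ Q ⊆ P, ∃ φ' ≤ φ, Alive Q φ' ∧ ∀ p ∈ Q, ∀ q ∈ Q, ∀ i < n, p.1 i = q.1 i := by
  induction n with
  | zero => exact ⟨P, subset_rfl, φ, le_rfl, h, by simp⟩
  | succ n ih =>
    obtain ⟨Q, hQ, φ', hφ', hA, hfix⟩ := ih
    obtain ⟨m, φ'', hφ'', hA'⟩ := hA.exists_of_iUnion (Q := fun m => {p ∈ Q | p.1 n = m})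
      (fun p hp => Set.mem_iUnion.2 ⟨p.1 n, hp, rfl⟩)
    refine ⟨_, fun p hp => hQ hp.1, φ'', hφ''.trans hφ', hA', ?_⟩
    intro p hp q hq i hi
    rcases Nat.lt_succ_iff_lt_or_eq.1 hi with hi | rfl
    · exact hfix p hp.1 q hq.1 i hi
    · exact hp.2.trans hq.2.symm

theorem Alive.exists_fix_list (n : ℕ) (L : List (Set ((ℕ → ℕ) × Set (List Bool)))) {φ : Copy}
    (h : ∀ P ∈ L, Alive P φ) :
    ∃ φ' ≤ φ, ∃ L' : List (Set ((ℕ → ℕ) × Set (List Bool))),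
      (∀ Q ∈ L', Alive Q φ' ∧ ∃ P ∈ L, Q ⊆ P) ∧
      ∀ P ∈ L, ∃ Q ∈ L', Q ⊆ P ∧ ∀ p ∈ Q, ∀ q ∈ Q, ∀ i < n, p.1 i = q.1 i := by
  induction L with
  | nil => exact ⟨φ, le_rfl, [], by simp, by simp⟩
  | cons P L ih =>
    obtain ⟨φ', hφ', L', h1, h2⟩ := ih (fun P hP => h P (by simp [hP]))
    obtain ⟨Q, hQ, φ'', hφ'', hA, hfix⟩ := ((h P (by simp)).of_le hφ').exists_fix n
    refine ⟨φ'', hφ''.trans hφ', Q :: L', ?_, ?_⟩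
    · intro R hR
      rcases List.mem_cons.1 hR with rfl | hR
      · exact ⟨hA, P, by simp, hQ⟩
      · obtain ⟨h3, P', hP', h4⟩ := h1 R hR
        exact ⟨h3.of_le hφ'', P', by simp [hP'], h4⟩
    · intro R hR
      rcases List.mem_cons.1 hR with rfl | hR
      · exact ⟨Q, by simp, hQ, hfix⟩
      · obtain ⟨Q', hQ', h3⟩ := h2 R hR
        exact ⟨Q', by simp [hQ'], h3⟩

/-- If no pair of smaller copies makes all traces alive, then traces can be made not alive on
finitely many copies. -/
theorem exists_not_alive_list {P : Set ((ℕ → ℕ) × Set (List Bool))} {g l : Copy}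
    (h : ∀ g' ≤ g, ∀ l' ≤ l, ∃ x ∈ g'.nodes, ¬ Alive (through P x) l') (J : List Copy)
    (hJ : ∀ l' ∈ J, l' ≤ l) {g' : Copy} (hg' : g' ≤ g) :
    ∃ g'' ≤ g', ∀ x ∈ g''.nodes, ∀ l' ∈ J, ¬ Alive (through P x) l' := by
  induction J with
  | nil => exact ⟨g', le_rfl, by simp⟩
  | cons k J ih =>
    obtain ⟨g₁, hg₁, h₁⟩ := ih (fun l' hl' => hJ l' (by simp [hl']))
    obtain ⟨ψ, hψ⟩ := exists_copy_mono (fun η => Alive (through P (g₁ η)) k)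
    rcases hψ with hψ | hψ
    · obtain ⟨_, ⟨η, rfl⟩, hx⟩ := h (g₁.comp ψ) ((Copy.comp_le _ _).trans (hg₁.trans hg')) k
        (hJ k (by simp))
      exact (hx (hψ η)).elim
    · refine ⟨g₁.comp ψ, (Copy.comp_le _ _).trans hg₁, ?_⟩
      rintro _ ⟨η, rfl⟩ l' hl'
      rcases List.mem_cons.1 hl' with rfl | hl'
      · exact hψ η
      · exact h₁ _ (g₁.apply_mem _) l' hl'

theorem exists_kills_finite {P : Set ((ℕ → ℕ) × Set (List Bool))} {g l : Copy}
    (h : ∀ g' ≤ g, ∀ l' ≤ l, ∃ x ∈ g'.nodes, ¬ Alive (through P x) l')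
    (I J : List (List Bool)) (G L : List Bool → Copy) (hG : ∀ η, G η ≤ g) (hL : ∀ η, L η ≤ l) :
    ∃ G' L' : List Bool → Copy, (∀ η, G' η ≤ G η) ∧ (∀ η, L' η ≤ L η) ∧
      ∀ η ∈ I, ∀ μ ∈ J, Kills (through P (G' η [])) (L' μ) := by
  classical
  induction I with
  | nil => exact ⟨G, L, fun _ => le_rfl, fun _ => le_rfl, by simp⟩
  | cons η I ih =>
    obtain ⟨G', L', h1, h2, h3⟩ := ih
    obtain ⟨k, hk, hka⟩ := exists_not_alive_list h (J.map L')
      (by simp only [List.mem_map]; rintro _ ⟨μ, -, rfl⟩; exact (h2 μ).trans (hL μ))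
      ((h1 η).trans (hG η))
    have hex : ∀ μ, ∃ m ≤ L' μ, μ ∈ J → Kills (through P (k [])) m := by
      intro μ
      by_cases hμ : μ ∈ J
      · have := hka _ (k.apply_mem []) (L' μ) (List.mem_map_of_mem hμ)
        unfold Alive at this
        push Not at this
        obtain ⟨m, hm, hm'⟩ := this
        exact ⟨m, hm, fun _ => hm'⟩
      · exact ⟨L' μ, le_rfl, fun h => (hμ h).elim⟩
    choose M hM hMk using hex
    refine ⟨Function.update G' η k, M, ?_, fun μ => (hM μ).trans (h2 μ), ?_⟩
    · intro ν
      by_cases hν : ν = η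
      · subst hν; simpa using hk.trans (h1 ν)
      · simpa [hν] using h1 ν
    · intro ν hν μ hμ
      by_cases hνη : ν = η
      · subst hνη; simpa using hMk μ hμ
      · have hνI : ν ∈ I := by simpa [hνη] using hν
        simpa [hνη] using (h3 ν hνI μ hμ).mono subset_rfl (hM μ)

/-- A sequence of labellings of the nodes by decreasing copies has a limit copy. -/
theorem exists_limit_copy (g : Copy) (G : ℕ → List Bool → Copy) (hle : ∀ n η, G n η ≤ g)
    (h : ∀ n i η, G (n + 1) (i :: η) ≤ (G n η).cone [i]) :
    ∃ g' ≤ g, (∀ η, g' η = G η.length η []) ∧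
      ∀ η ξ, η <:+ ξ → g' ξ ∈ (G η.length η).nodes := by
  refine ⟨⟨fun η => G η.length η [], fun i η => Copy.step_of_le_cone (h η.length i η)⟩, ?_,
    fun _ => rfl, ?_⟩
  · exact Copy.le_def.2 fun η => hle _ _ ((G η.length η).apply_mem [])
  · intro η ξ hξ
    have : G ξ.length ξ ≤ G η.length η :=
      suffix_induction (β := Copyᵒᵈ) (fun s => OrderDual.toDual (G s.length s))
        (fun i s => (h s.length i s).trans (Copy.cone_le _ _)) hξ
    exact this (Copy.apply_mem _ [])

theorem exists_alive_or_kills (P : Set ((ℕ → ℕ) × Set (List Bool))) (g l : Copy) :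
    ∃ g' ≤ g, ∃ l' ≤ l, (∀ x ∈ g'.nodes, Alive (through P x) l') ∨
      ∀ x ∈ g'.nodes, Kills (through P x) l' := by
  classical
  by_cases h : ∀ g' ≤ g, ∀ l' ≤ l, ∃ x ∈ g'.nodes, ¬ Alive (through P x) l'
  swap
  · push Not at h
    obtain ⟨g', hg', l', hl', h⟩ := h
    exact ⟨g', hg', l', hl', Or.inl h⟩
  let State := {S : (List Bool → Copy) × (List Bool → Copy) //
    (∀ η, S.1 η ≤ g) ∧ ∀ η, S.2 η ≤ l}
  have step : ∀ (n : ℕ) (S : State), ∃ T : State, (∀ η, T.1.1 η ≤ S.1.1 η) ∧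
      (∀ η, T.1.2 η ≤ S.1.2 η) ∧ ∀ η μ : List Bool, η.length = n → μ.length = n →
        Kills (through P (T.1.1 η [])) (T.1.2 μ) := by
    intro n S
    let I := (List.finite_length_eq Bool n).toFinset.toList
    obtain ⟨G, L, h1, h2, h3⟩ := exists_kills_finite h I I S.1.1 S.1.2 S.2.1 S.2.2
    exact ⟨⟨⟨G, L⟩, fun η => (h1 η).trans (S.2.1 η), fun η => (h2 η).trans (S.2.2 η)⟩, h1, h2,
      fun η μ hη hμ => h3 η (by simp [I, hη]) μ (by simp [I, hμ])⟩
  choose T hT1 hT2 hT3 using step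
  let next : State → State := fun S =>
    ⟨⟨fun η => (S.1.1 η.tail).cone [η.headD false], fun η => (S.1.2 η.tail).cone [η.headD false]⟩,
      fun η => (Copy.cone_le _ _).trans (S.2.1 _), fun η => (Copy.cone_le _ _).trans (S.2.2 _)⟩
  let S : ℕ → State := fun n =>
    n.rec (T 0 ⟨⟨fun _ => g, fun _ => l⟩, fun _ => le_rfl, fun _ => le_rfl⟩)
      (fun n s => T (n + 1) (next s))
  have hS : ∀ n, S (n + 1) = T (n + 1) (next (S n)) := fun n => rfl
  obtain ⟨g', hg', hg1, -⟩ := exists_limit_copy g (fun n => (S n).1.1) (fun n => (S n).2.1)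
    (fun n i η => by rw [hS]; exact hT1 (n + 1) (next (S n)) (i :: η))
  obtain ⟨l', hl', -, hl2⟩ := exists_limit_copy l (fun n => (S n).1.2) (fun n => (S n).2.2)
    (fun n i η => by rw [hS]; exact hT2 (n + 1) (next (S n)) (i :: η))
  have hK : ∀ η μ : List Bool, η.length = μ.length →
      Kills (through P (g' η)) ((S μ.length).1.2 μ) := by
    intro η μ hημ
    rw [hg1, hημ]
    cases hn : μ.length with
    | zero => exact hT3 0 _ η μ (hημ.trans hn) hn
    | succ n => exact hT3 (n + 1) _ η μ (hημ.trans hn) hn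
  refine ⟨g', hg', l', hl', Or.inr ?_⟩
  rintro _ ⟨η, rfl⟩ p hp
  have hfin : (Set.image l' {σ | σ.length ≤ η.length} ∪
      ⋃ μ ∈ {μ : List Bool | μ.length = η.length}, p.2 ∩ ((S μ.length).1.2 μ).nodes).Finite :=
    ((finite_length_le _).image _).union ((List.finite_length_eq Bool _).biUnion
      fun μ hμ => hK η μ hμ.symm p hp)
  refine hfin.subset ?_
  rintro _ ⟨hpx, σ, rfl⟩
  by_cases hσ : σ.length ≤ η.length
  · exact Or.inl ⟨σ, hσ, rfl⟩
  · obtain ⟨μ, hμ, hμσ⟩ := exists_suffix_of_length σ (n := η.length) (by omega)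
    exact Or.inr (Set.mem_biUnion hμ ⟨hpx, hl2 μ σ hμσ⟩)

theorem exists_alive_list_or_kills (L : List (Set ((ℕ → ℕ) × Set (List Bool)))) (g l : Copy) :
    ∃ g' ≤ g, ∃ l' ≤ l, (∀ x ∈ g'.nodes, ∀ P ∈ L, Alive (through P x) l') ∨
      ∃ P ∈ L, ∀ x ∈ g'.nodes, Kills (through P x) l' := by
  induction L with
  | nil => exact ⟨g, le_rfl, l, le_rfl, Or.inl (by simp)⟩
  | cons P L ih =>
    obtain ⟨g₁, hg₁, l₁, hl₁, h | ⟨Q, hQ, h⟩⟩ := ih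
    · obtain ⟨g₂, hg₂, l₂, hl₂, h' | h'⟩ := exists_alive_or_kills P g₁ l₁
      · refine ⟨g₂, hg₂.trans hg₁, l₂, hl₂.trans hl₁, Or.inl ?_⟩
        intro x hx Q hQ
        rcases List.mem_cons.1 hQ with rfl | hQ
        · exact h' x hx
        · exact (h x (hg₂ hx) Q hQ).of_le hl₂
      · exact ⟨g₂, hg₂.trans hg₁, l₂, hl₂.trans hl₁, Or.inr ⟨P, by simp, h'⟩⟩
    · exact ⟨g₁, hg₁, l₁, hl₁, Or.inr ⟨Q, by simp [hQ], h⟩⟩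

/-- Codes of members of a family together with sequences of nodes, pairwise split in the
direction `o`, whose values are in the coded member. -/
def combs {N : Type*} (F : (ℕ → ℕ) → Set N) (u : List Bool → N) (o : Bool) :
    Set ((ℕ → ℕ) × Set (List Bool)) :=
  {p | (∃ A : ℕ → List Bool, p.2 = Set.range A ∧ ∀ i j, i < j → Split o (A i) (A j)) ∧
    ∀ w ∈ p.2, u w ∈ F p.1}

theorem exists_alive_through {N : Type*} {F : (ℕ → ℕ) → Set N} {u : List Bool → N} {o : Bool}
    (L : List (Set ((ℕ → ℕ) × Set (List Bool)))) (φ : Copy) (hsub : ∀ P ∈ L, P ⊆ combs F u o)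
    (hL : ∀ P ∈ L, Alive P φ) :
    ∃ θ : Copy, ∃ φ' ≤ φ, ∀ x ∈ θ.nodes, ∀ P ∈ L, Alive (through P x) φ' := by
  by_contra hcon
  push Not at hcon
  obtain ⟨φ₁, hφ₁, h₁⟩ := exists_fusion φ
    (fun _ G => ∃ P ∈ L, ∀ x ∈ (G o).nodes, Kills (through P x) (G (!o))) (by
    intro _ g hg
    obtain ⟨g₁, hg₁, l₁, hl₁, h | h⟩ := exists_alive_list_or_kills L (g.cone [o]) (g.cone [!o])
    · obtain ⟨x, hx, P, hP, h'⟩ := hcon g₁ l₁ (hl₁.trans ((g.cone_le _).trans hg))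
      exact (h' (h x hx P hP)).elim
    · refine ⟨fun i => if i = o then g₁ else l₁, ?_, by simpa using h⟩
      intro i
      by_cases hi : i = o
      · subst hi; simpa using hg₁
      · have : i = !o := by cases i <;> cases o <;> simp_all
        subst this; simpa using hl₁)
  obtain ⟨ψ, P, hP, hψ⟩ := exists_copy_colour L
    (fun P η => ∃ G : Bool → Copy, (∀ x ∈ (G o).nodes, Kills (through P x) (G (!o))) ∧
      ∀ i ξ, (i :: η) <:+ ξ → φ₁ ξ ∈ (G i).nodes) (by
    intro η
    obtain ⟨G, ⟨P, hP, hG⟩, hG'⟩ := h₁ η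
    exact ⟨P, hP, G, hG, hG'⟩)
  choose G hG hGm using hψ
  let φ₂ := φ₁.comp ψ
  refine hL P hP φ₂ ((Copy.comp_le _ _).trans hφ₁) fun p hp => ?_
  by_contra hinf
  have hinf : (p.2 ∩ φ₂.nodes).Infinite := hinf
  obtain ⟨⟨A, hA, hsplit⟩, -⟩ := hsub P hP hp
  obtain ⟨x, hxp, τ, hτ⟩ := hinf.nonempty
  have hx' := hxp
  rw [hA] at hx'
  obtain ⟨i₀, hi₀⟩ := hx'
  have hfin : (A '' Set.Iic i₀ ∪ ⋃ ζ ∈ {ζ | ζ <:+ τ}, if (o :: ζ) <:+ τ then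
      p.2 ∩ (G ζ (!o)).nodes else ∅).Finite := by
    refine ((Set.finite_Iic i₀).image A).union (Set.Finite.biUnion ?_ ?_)
    · exact (List.finite_toSet τ.tails).subset fun ζ hζ => (List.mem_tails _ _).2 hζ
    · intro ζ _
      split_ifs with hζ
      · exact hG ζ _ (hGm ζ o (ψ τ) (ψ.cons_suffix hζ)) p ⟨hp, by
          change φ₂ τ ∈ p.2
          rw [hτ]; exact hxp⟩
      · exact Set.finite_empty
  refine hinf (hfin.subset ?_)
  rintro y ⟨hyp, σ, rfl⟩
  have hy' := hyp
  rw [hA] at hy'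
  obtain ⟨j, hj⟩ := hy'
  by_cases hij : j ≤ i₀
  · exact Or.inl ⟨j, hij, hj⟩
  · obtain ⟨ζ, h1, h2⟩ : Split o τ σ := by
      refine φ₂.split_of_split ?_
      have := hsplit i₀ j (by omega)
      rwa [hi₀, hj, ← hτ] at this
    refine Or.inr (Set.mem_biUnion (x := ζ) ((List.suffix_cons _ _).trans h1) ?_)
    rw [if_pos h1]
    exact ⟨hyp, hGm ζ (!o) (ψ σ) (ψ.cons_suffix h2)⟩

instance (o : Bool) : IsTrans (List Bool) (Split o) where
  trans := by
    rintro a b c ⟨ζ, h1, h2⟩ ⟨ξ, h3, h4⟩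
    rcases lt_trichotomy ζ.length ξ.length with hl | hl | hl
    · exact ⟨ζ, h1, (suffix_of_cons_suffix h2 h3 hl).trans ((List.suffix_cons _ _).trans h4)⟩
    · have := (List.suffix_of_suffix_length_le h2 h3 (by simp [hl])).eq_of_length (by simp [hl])
      simp at this
    · exact ⟨ξ, (suffix_of_cons_suffix h3 h2 hl).trans ((List.suffix_cons _ _).trans h1), h4⟩

instance (i : Bool) : IsTrans (List Bool) (fun a b => (i :: a) <:+ b) where
  trans _ _ _ h h' := h.trans ((List.suffix_cons _ _).trans h')

theorem alive_combs {N : Type*} {Γ₀ Γ₁ Γ₂ : Set (Set N)} {u : List Bool → N}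
    (hu : ChainTree Γ₀ Γ₁ u) {F : (ℕ → ℕ) → Set N} (hF : Coding Γ₂ F) (h₀ : OrthFam Γ₂ Γ₀)
    (h₁ : OrthFam Γ₂ Γ₁) {φ : Copy} (h : ∀ φ' ≤ φ, ∃ y ∈ Γ₂, (y ∩ u '' φ'.nodes).Infinite) :
    ∃ o, ∃ φ' ≤ φ, Alive (combs F u o) φ' := by
  have hal : Alive (combs F u false ∪ combs F u true) φ := by
    intro φ' hφ' hk
    obtain ⟨y, hy, hinf⟩ := h φ' hφ'
    obtain ⟨g, rfl⟩ := hF.surj y hy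
    choose! s hs hsu using fun (x : N) (hx : x ∈ F g ∩ u '' φ'.nodes) => hx.2
    let e := hinf.natEmbedding
    let t : ℕ → List Bool := fun n => s (e n)
    have htu : ∀ n, u (t n) = (e n).1 := fun n => hsu _ (e n).2
    have hte : Function.Injective fun n => u (t n) := by
      intro m n hmn
      simp only [htu] at hmn
      exact e.injective (Subtype.ext hmn)
    have hcontra : ∀ (f : ℕ ↪o ℕ) (Δ : Set (Set N)), OrthFam Γ₂ Δ →
        ¬ ∃ z ∈ Δ, ∀ k, u (t (f k)) ∈ z := by
      rintro f Δ hΔ ⟨z, hz, hzk⟩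
      refine Set.infinite_range_of_injective (f := fun k => u (t (f k)))
        (hte.comp f.injective) ((hΔ _ hy z hz).subset ?_)
      rintro _ ⟨k, rfl⟩
      exact ⟨by simpa only [htu] using (e (f k)).2.1, hzk k⟩
    have hcomb : ∀ (f : ℕ ↪o ℕ) (o : Bool),
        ¬ ∀ m n, m < n → Split o (t (f m)) (t (f n)) := by
      intro f o hsp
      have hmem : ((g, Set.range fun k => t (f k)) : (ℕ → ℕ) × Set (List Bool)) ∈
          combs F u false ∪ combs F u true := by
        have : ((g, Set.range fun k => t (f k)) : (ℕ → ℕ) × Set (List Bool)) ∈ combs F u o := by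
          refine ⟨⟨_, rfl, hsp⟩, ?_⟩
          rintro _ ⟨k, rfl⟩
          simpa only [htu] using (e (f k)).2.1
        cases o
        · exact Or.inl this
        · exact Or.inr this
      have hfin := hk _ hmem
      refine Set.infinite_range_of_injective (f := fun k => t (f k)) ?_ (hfin.subset ?_)
      · intro m n hmn
        exact f.injective (hte (congrArg u hmn))
      · rintro _ ⟨k, rfl⟩
        exact ⟨⟨k, rfl⟩, hs _ (e (f k)).2⟩
    obtain ⟨f₁, hf₁ | hf₁⟩ :=
      exists_increasing_or_nonincreasing_subseq (fun a b => (false :: a) <:+ b) t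
    · exact hcontra f₁ Γ₀ h₀ (hu.chain_false _ fun k => hf₁ k (k + 1) k.lt_succ_self)
    obtain ⟨f₂, hf₂ | hf₂⟩ :=
      exists_increasing_or_nonincreasing_subseq (fun a b => (true :: a) <:+ b) (t ∘ f₁)
    · exact hcontra (f₂.trans f₁) Γ₁ h₁ (hu.chain_true _ fun k => hf₂ k (k + 1) k.lt_succ_self)
    obtain ⟨f₃, hf₃ | hf₃⟩ :=
      exists_increasing_or_nonincreasing_subseq (Split false) (t ∘ f₁ ∘ f₂)
    · exact hcomb (f₂.trans f₁ |> f₃.trans) false hf₃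
    obtain ⟨f₄, hf₄ | hf₄⟩ :=
      exists_increasing_or_nonincreasing_subseq (Split true) (t ∘ f₁ ∘ f₂ ∘ f₃)
    · exact hcomb (f₄.trans (f₃.trans (f₂.trans f₁))) true hf₄
    let r : ℕ → List Bool := fun n => t (f₁ (f₂ (f₃ (f₄ n))))
    have hlen : ∀ n, (r (n + 1)).length < (r n).length := by
      intro n
      have hlt : n < n + 1 := n.lt_succ_self
      rcases node_cases (r n) (r (n + 1)) with e | ⟨i, hi⟩ | ⟨i, hi⟩ | ⟨o, ho⟩
      · have := f₄.injective (f₃.injective (f₂.injective (f₁.injective (hte (congrArg u e)))))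
        omega
      · cases i
        · exact (hf₁ _ _ (f₂.strictMono (f₃.strictMono (f₄.strictMono hlt))) hi).elim
        · exact (hf₂ _ _ (f₃.strictMono (f₄.strictMono hlt)) hi).elim
      · simpa using hi.length_le
      · cases o
        · exact (hf₃ _ _ (f₄.strictMono hlt) ho).elim
        · exact (hf₄ _ _ hlt ho).elim
    have hle : ∀ n, (r n).length + n ≤ (r 0).length := by
      intro n
      induction n with
      | zero => simp
      | succ n ih => have := hlen n; omega
    have := hle ((r 0).length + 1)
    omega
  obtain ⟨n, φ', hφ', h'⟩ := hal.exists_of_iUnion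
    (Q := fun n => if n = 0 then combs F u false else combs F u true) (by
      rintro p (hp | hp)
      · exact Set.mem_iUnion.2 ⟨0, by simpa using hp⟩
      · exact Set.mem_iUnion.2 ⟨1, by simpa using hp⟩)
  by_cases hn : n = 0
  · exact ⟨false, φ', hφ', by simpa [hn] using h'⟩
  · exact ⟨true, φ', hφ', by simpa [hn] using h'⟩

theorem exists_columns_of_alive {N : Type*} {Γ₀ Γ₁ Γ₂ : Set (Set N)} {u : List Bool → N}
    (hu : ChainTree Γ₀ Γ₁ u) {F : (ℕ → ℕ) → Set N} (hF : Coding Γ₂ F) {o : Bool} {φ : Copy}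
    (h : Alive (combs F u o) φ) :
    ∃ X : ℕ → ℕ → N, (∀ q, Function.Injective (X q)) ∧ (∀ q, ∃ x ∈ Γ₀, ∀ j, X q j ∈ x) ∧
      ∀ q j : ℕ → ℕ, (∀ i, max (q i) (j i) < q (i + 1)) → ∃ y ∈ Γ₂, ∀ i, X (q i) (j i) ∈ y := by
  classical
  let Pc := Set ((ℕ → ℕ) × Set (List Bool))
  let State := {S : Copy × List Pc × List (Pc × Copy) //
    (∀ P ∈ S.2.1, P ⊆ combs F u o ∧ Alive P S.1) ∧
    ∀ R ∈ S.2.2, R.1 ⊆ combs F u o ∧ ∀ x ∈ R.2.nodes, Alive (through R.1 x) S.1}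
  have step : ∀ (n : ℕ) (S : State), ∃ (θ : Copy) (T : State),
      S.1.2.1 ⊆ T.1.2.1 ∧ S.1.2.2 ⊆ T.1.2.2 ∧ (∀ P ∈ S.1.2.1, (P, θ) ∈ T.1.2.2) ∧
      ∀ R ∈ T.1.2.2, ∀ j ≤ n, ∃ Q ∈ T.1.2.1, Q ⊆ through R.1 (R.2 (List.replicate j false)) ∧
        ∀ p ∈ Q, ∀ q ∈ Q, ∀ i < n + 1, p.1 i = q.1 i := by
    rintro n ⟨⟨φ, D, O⟩, hD, hO⟩
    obtain ⟨θ, φ₁, hφ₁, hθ⟩ := exists_alive_through D φ (fun P hP => (hD P hP).1)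
      (fun P hP => (hD P hP).2)
    let O' : List (Pc × Copy) := O ++ D.map fun P => (P, θ)
    have hO' : ∀ R ∈ O', R.1 ⊆ combs F u o ∧ ∀ x ∈ R.2.nodes, Alive (through R.1 x) φ₁ := by
      intro R hR
      rcases List.mem_append.1 hR with hR | hR
      · exact ⟨(hO R hR).1, fun x hx => ((hO R hR).2 x hx).of_le hφ₁⟩
      · obtain ⟨P, hP, rfl⟩ := List.mem_map.1 hR
        exact ⟨(hD P hP).1, fun x hx => hθ x hx P hP⟩
    let L : List Pc := O'.flatMap fun R =>
      (List.range (n + 1)).map fun j => through R.1 (R.2 (List.replicate j false))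
    have hL : ∀ P ∈ L, P ⊆ combs F u o ∧ Alive P φ₁ := by
      intro P hP
      obtain ⟨R, hR, hP⟩ := List.mem_flatMap.1 hP
      obtain ⟨j, -, rfl⟩ := List.mem_map.1 hP
      exact ⟨fun p hp => (hO' R hR).1 hp.1, (hO' R hR).2 _ (R.2.apply_mem _)⟩
    obtain ⟨φ₂, hφ₂, L', h1, h2⟩ := Alive.exists_fix_list (n + 1) L fun P hP => (hL P hP).2
    refine ⟨θ, ⟨⟨φ₂, D ++ L', O'⟩, ?_, ?_⟩, ?_, ?_, ?_, ?_⟩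
    · intro P hP
      rcases List.mem_append.1 hP with hP | hP
      · exact ⟨(hD P hP).1, (hD P hP).2.of_le (hφ₂.trans hφ₁)⟩
      · obtain ⟨hal, Q, hQ, hPQ⟩ := h1 P hP
        exact ⟨hPQ.trans (hL Q hQ).1, hal⟩
    · exact fun R hR => ⟨(hO' R hR).1, fun x hx => ((hO' R hR).2 x hx).of_le hφ₂⟩
    · exact List.subset_append_left _ _
    · exact List.subset_append_left _ _
    · exact fun P hP => List.mem_append_right _ (List.mem_map_of_mem hP)
    · intro R hR j hj
      obtain ⟨Q, hQ, h3⟩ := h2 (through R.1 (R.2 (List.replicate j false)))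
        (List.mem_flatMap.2 ⟨R, hR, List.mem_map.2 ⟨j, by simp; omega, rfl⟩⟩)
      exact ⟨Q, List.mem_append_right _ hQ, h3⟩
  choose θ T hT1 hT2 hT3 hT4 using step
  let S : ℕ → State := fun n =>
    n.rec ⟨⟨φ, [combs F u o], []⟩, by simpa using h, by simp⟩ (fun n s => T n s)
  have hS : ∀ n, S (n + 1) = T n (S n) := fun n => rfl
  have hD : ∀ {m n}, m ≤ n → (S m).1.2.1 ⊆ (S n).1.2.1 := by
    intro m n hmn
    induction n, hmn using Nat.le_induction with
    | base => exact List.Subset.refl _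
    | succ n _ ih => exact List.Subset.trans ih (hT1 n (S n))
  have hO : ∀ {m n}, m ≤ n → (S m).1.2.2 ⊆ (S n).1.2.2 := by
    intro m n hmn
    induction n, hmn using Nat.le_induction with
    | base => exact List.Subset.refl _
    | succ n _ ih => exact List.Subset.trans ih (hT2 n (S n))
  let Θ : ℕ → Copy := fun n => θ n (S n)
  have hΘ : ∀ q j, (false :: Θ q (List.replicate j false)) <:+ Θ q (List.replicate (j + 1) false) :=
    fun q j => (Θ q).step false (List.replicate j false)
  refine ⟨fun q j => u (Θ q (List.replicate j false)), ?_, ?_, ?_⟩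
  · intro q
    have hlt : ∀ i j, i < j → u (Θ q (List.replicate i false)) ≠
        u (Θ q (List.replicate j false)) := by
      intro i j hij
      refine hu.ne false _ _ ((Θ q).cons_suffix ?_)
      refine ⟨List.replicate (j - (i + 1)) false, ?_⟩
      rw [← List.replicate_succ, List.replicate_append_replicate]
      congr 1; omega
    intro i j hij
    rcases lt_trichotomy i j with h | h | h
    · exact (hlt i j h hij).elim
    · exact h
    · exact (hlt j i h hij.symm).elim
  · exact fun q => hu.chain_false _ (hΘ q)
  · intro q j hqj
    have hq : ∀ i, i ≤ q i := by
      intro i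
      induction i with
      | zero => exact Nat.zero_le _
      | succ i ih => have := hqj i; omega
    have hnext : ∀ (i : ℕ) (P : {P : Pc // P ∈ (S (q i)).1.2.1}),
        ∃ Q : {P : Pc // P ∈ (S (q (i + 1))).1.2.1},
        Q.1 ⊆ through P.1 (Θ (q i) (List.replicate (j i) false)) ∧
        ∀ a ∈ Q.1, ∀ b ∈ Q.1, ∀ k < i + 1, a.1 k = b.1 k := by
      rintro i ⟨P, hP⟩
      have h1 := hT3 (q i) (S (q i)) P hP
      have h2 : (P, Θ (q i)) ∈ (T (max (q i) (j i)) (S (max (q i) (j i)))).1.2.2 :=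
        hO (m := q i + 1) (n := max (q i) (j i) + 1) (by omega) h1
      obtain ⟨Q, hQ, h3, h4⟩ := hT4 _ _ _ h2 (j i) (le_max_right _ _)
      refine ⟨⟨Q, hD (m := max (q i) (j i) + 1) (hqj i) hQ⟩, h3, ?_⟩
      intro a ha b hb k hk
      have := hq i
      exact h4 a ha b hb k (by omega)
    choose nx hnx1 hnx2 using hnext
    let P : ∀ i, {P : Pc // P ∈ (S (q i)).1.2.1} := fun i =>
      i.rec ⟨combs F u o, hD (Nat.zero_le _) (by simp [S])⟩ (fun i P => nx i P)
    have hP : ∀ i, P (i + 1) = nx i (P i) := fun i => rfl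
    obtain ⟨s, hs⟩ := exists_limit_code hF.closed (fun i => Prod.fst '' (P i).1)
      (antitone_nat_of_succ_le fun i => Set.image_mono fun p hp => (hnx1 i (P i) hp).1)
      (fun i => ((((S (q i)).2.1 _ (P i).2).2).nonempty).image _) (by
        rintro (_ | k) _ ⟨a, ha, rfl⟩ _ ⟨b, hb, rfl⟩ i hi
        · omega
        · exact hnx2 k (P k) a ha b hb i hi)
    refine ⟨F s, hF.mem s, fun i => hs _ ⟨i + 1, ?_⟩⟩
    rintro _ ⟨p, hp, rfl⟩
    have hp' := hnx1 i (P i) hp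
    exact (((S (q i)).2.1 _ (P i).2).1 hp'.1).2 _ hp'.2

/-- A copy meeting no other family gives an isolated pair. -/
theorem isolated_of_copy {N : Type*} {n : ℕ} {Γ : Fin n → Set (Set N)} (hgap : NGap Γ)
    {a b : Fin n} (hab : a ≠ b) {u : List Bool → N} (hu : ChainTree (Γ a) (Γ b) u) (φ : Copy)
    (h : ∀ k, k ≠ a → k ≠ b → ∀ y ∈ Γ k, (y ∩ u '' φ.nodes).Finite) :
    Isolated Γ a b (u '' φ.nodes) := by
  have hinj : ∀ (t : ℕ → List Bool) (i : Bool), (∀ k, (i :: t k) <:+ t (k + 1)) →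
      Function.Injective fun k => u (t k) := by
    intro t i ht
    have hlt : ∀ m k, m < k → u (t m) ≠ u (t k) := by
      intro m k hmk
      refine hu.ne i _ _ ?_
      induction k, (show m + 1 ≤ k from hmk) using Nat.le_induction with
      | base => exact ht m
      | succ k hk ih => exact (ih hk).trans ((List.suffix_cons _ _).trans (ht k))
    intro m k hmk
    rcases lt_trichotomy m k with h | h | h
    · exact (hlt m k h hmk).elim
    · exact h
    · exact (hlt k m h hmk.symm).elim
  have hchain : ∀ (i : Bool) (Δ : Set (Set N)) (c : Set N), HerFam Δ →
      (∀ t : ℕ → List Bool, (∀ k, (i :: t k) <:+ t (k + 1)) → ∃ y ∈ Δ, ∀ k, u (t k) ∈ y) →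
      (∀ x ∈ Δ, x ⊆ u '' φ.nodes → (x \ c).Finite) →
      ∀ ν, ∃ ζ, ν <:+ ζ ∧ ∀ ξ, (i :: ζ) <:+ ξ → u (φ ξ) ∈ c := by
    intro i Δ c hher hΔ hc ν
    by_contra hcon
    push Not at hcon
    choose! e he hec using hcon
    let t : ℕ → List Bool := fun k => k.rec (e ν) (fun _ s => e s)
    have ht : ∀ k, t (k + 1) = e (t k) := fun k => rfl
    have hνt : ∀ k, ν <:+ t k := by
      intro k
      induction k with
      | zero => exact (List.suffix_cons _ _).trans (he ν List.suffix_rfl)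
      | succ k ih => exact ih.trans ((List.suffix_cons _ _).trans (he _ ih))
    have hstep : ∀ k, (i :: φ (t k)) <:+ φ (t (k + 1)) := fun k => φ.cons_suffix (he _ (hνt k))
    obtain ⟨y, hy, hyt⟩ := hΔ (fun k => φ (t k)) hstep
    have hinf := Set.infinite_range_of_injective (hinj _ i hstep)
    have hmem := hher y hy (Set.range fun k => u (φ (t k))) (by rintro _ ⟨k, rfl⟩; exact hyt k) hinf
    refine hinf ((hc _ hmem ?_).subset ?_)
    · rintro _ ⟨k, rfl⟩; exact ⟨_, φ.apply_mem _, rfl⟩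
    · rintro _ ⟨k, rfl⟩
      refine ⟨⟨k, rfl⟩, ?_⟩
      cases k with
      | zero => exact hec ν List.suffix_rfl
      | succ k => exact hec _ (hνt k)
  refine ⟨hab, ?_, fun k hka hkb y hy => by rw [Set.inter_comm]; exact h k hka hkb y hy⟩
  intro c d hc hd
  obtain ⟨ζ, -, hζ⟩ := hchain false (Γ a) c (hgap.1.2.2 a) hu.chain_false hc []
  obtain ⟨ξ, hξ, hξd⟩ := hchain true (Γ b) d (hgap.1.2.2 b) hu.chain_true hd (false :: ζ)
  have hrep : ∀ k, (true :: ξ) <:+ List.replicate k true ++ (true :: ξ) := fun k => ⟨_, rfl⟩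
  refine (Set.infinite_range_of_injective
    (hinj (fun k => φ (List.replicate k true ++ (true :: ξ))) true fun k => ?_)).mono ?_
  · exact φ.step true _
  · rintro _ ⟨k, rfl⟩
    exact ⟨hζ _ (hξ.trans ((List.suffix_cons _ _).trans (hrep k))), hξd _ (hrep k)⟩

theorem exists_isolated_of_not_cSep {N : Type*} [Countable N] {n : ℕ} {Γ : Fin n → Set (Set N)}
    (hgap : NGap Γ) (hana : ∀ i, AnalyticFam (Γ i)) {a b : Fin n} (hab : a ≠ b)
    {F F' : (ℕ → ℕ) → Set N} (hF : Coding (Γ a) F) (hF' : Coding (Γ b) F')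
    (h : ¬ CSep F F' Set.univ Set.univ) : ∃ a b M, Isolated Γ a b M := by
  classical
  obtain ⟨u, hu⟩ := exists_chainTree hF hF' h
  by_contra hcon
  have hone : ∀ k, k ≠ a → k ≠ b → ∀ φ : Copy, ∃ φ' ≤ φ, ∀ y ∈ Γ k, (y ∩ u '' φ'.nodes).Finite := by
    intro k hka hkb φ
    by_contra hk
    push Not at hk
    obtain ⟨y, hy, -⟩ := hk φ le_rfl
    obtain ⟨G, hG⟩ := exists_coding (hana k) ⟨y, hy⟩
    obtain ⟨o, φ', -, hal⟩ := alive_combs hu hG (hgap.2 k a hka) (hgap.2 k b hkb) hk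
    obtain ⟨X, hX1, hX2, hX3⟩ := exists_columns_of_alive hu hG hal
    exact hcon ⟨a, k, _, isolated_of_columns hgap hka.symm X hX1 hX2 hX3⟩
  have hall : ∀ s : Finset (Fin n), ∃ φ : Copy, ∀ k ∈ s, k ≠ a → k ≠ b →
      ∀ y ∈ Γ k, (y ∩ u '' φ.nodes).Finite := by
    intro s
    induction s using Finset.induction_on with
    | empty => exact ⟨Copy.id, by simp⟩
    | insert k s _ ih =>
      obtain ⟨φ, hφ⟩ := ih
      by_cases hk : k ≠ a ∧ k ≠ b
      · obtain ⟨φ', hφ', h'⟩ := hone k hk.1 hk.2 φ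
        refine ⟨φ', fun l hl hla hlb y hy => ?_⟩
        rcases Finset.mem_insert.1 hl with rfl | hl
        · exact h' y hy
        · exact (hφ l hl hla hlb y hy).subset
            (Set.inter_subset_inter_right _ (Set.image_mono hφ'))
      · refine ⟨φ, fun l hl hla hlb y hy => ?_⟩
        rcases Finset.mem_insert.1 hl with rfl | hl
        · exact (hk ⟨hla, hlb⟩).elim
        · exact hφ l hl hla hlb y hy
  obtain ⟨φ, hφ⟩ := hall Finset.univ
  exact hcon ⟨a, b, _, isolated_of_copy hgap hab hu φ fun k => hφ k (Finset.mem_univ k)⟩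

/-- An infinitely branching tree of points whose sets of immediate successors lie in members of
`A` and whose chains lie in members of `B`. Nodes are lists, the root being at the end; the value
at the root is irrelevant. -/
structure SplitTree {N : Type*} (A B : Set (Set N)) (u : List ℕ → N) : Prop where
  split : ∀ s, ∃ z ∈ A, ∀ q, u (q :: s) ∈ z
  inj : ∀ s, Function.Injective fun q => u (q :: s)
  chain : ∀ t : ℕ → List ℕ, (∀ k, t k ≠ []) → (∀ k, ∃ q, (q :: t k) <:+ t (k + 1)) →
    ∃ y ∈ B, ∀ k, u (t k) ∈ y
  ne : ∀ q s t, s ≠ [] → (q :: s) <:+ t → u s ≠ u t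

namespace SplitTree

theorem column_mem {N : Type*} {A B : Set (Set N)} {u : List ℕ → N} (hu : SplitTree A B u)
    (hA : HerFam A) (s : List ℕ) : (Set.range fun q => u (q :: s)) ∈ A := by
  obtain ⟨z, hz, h⟩ := hu.split s
  exact hA z hz _ (by rintro _ ⟨q, rfl⟩; exact h q) (Set.infinite_range_of_injective (hu.inj s))

theorem chain_injective {N : Type*} {A B : Set (Set N)} {u : List ℕ → N} (hu : SplitTree A B u)
    {t : ℕ → List ℕ} (hne : ∀ k, t k ≠ []) (ht : ∀ k, ∃ q, (q :: t k) <:+ t (k + 1)) :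
    Function.Injective fun k => u (t k) := by
  have hlt : ∀ m k, m < k → u (t m) ≠ u (t k) := by
    intro m k hmk
    obtain ⟨q, hq⟩ := ht m
    refine hu.ne q _ _ (hne m) ?_
    induction k, (show m + 1 ≤ k from hmk) using Nat.le_induction with
    | base => exact hq
    | succ k hk ih =>
      obtain ⟨q', hq'⟩ := ht k
      exact (ih hk).trans ((List.suffix_cons _ _).trans hq')
  intro m k hmk
  rcases lt_trichotomy m k with h | h | h
  · exact (hlt m k h hmk).elim
  · exact h
  · exact (hlt k m h hmk.symm).elim

theorem chain_mem {N : Type*} {A B : Set (Set N)} {u : List ℕ → N} (hu : SplitTree A B u)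
    (hB : HerFam B) {t : ℕ → List ℕ} (hne : ∀ k, t k ≠ [])
    (ht : ∀ k, ∃ q, (q :: t k) <:+ t (k + 1)) : (Set.range fun k => u (t k)) ∈ B := by
  obtain ⟨z, hz, h⟩ := hu.chain t hne ht
  exact hB z hz _ (by rintro _ ⟨q, rfl⟩; exact h q)
    (Set.infinite_range_of_injective (hu.chain_injective hne ht))

theorem nonSepOn {N : Type*} {A B : Set (Set N)} {u : List ℕ → N} (hu : SplitTree A B u)
    (hA : HerFam A) (hB : HerFam B) : NonSepOn A B (u '' {s | s ≠ []}) := by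
  intro c d hc hd hfin
  have hex : ∀ s, ∃ q, u (q :: s) ∈ c \ d := by
    intro s
    have h1 := hc _ (hu.column_mem hA s) (by rintro _ ⟨q, rfl⟩; exact ⟨_, by simp, rfl⟩)
    obtain ⟨p, ⟨q, rfl⟩, hp⟩ :=
      ((Set.infinite_range_of_injective (hu.inj s)).sdiff (h1.union hfin)).nonempty
    have hpc : u (q :: s) ∈ c := by
      by_contra h
      exact hp (Or.inl ⟨⟨q, rfl⟩, h⟩)
    exact ⟨q, hpc, fun h => hp (Or.inr ⟨hpc, h⟩)⟩
  choose e he using hex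
  let t : ℕ → List ℕ := fun k => k.rec [e []] (fun _ s => e s :: s)
  have hne : ∀ k, t k ≠ [] := by
    intro k
    cases k <;> simp [t]
  have ht : ∀ k, ∃ q, (q :: t k) <:+ t (k + 1) := fun k => ⟨e (t k), List.suffix_rfl⟩
  have h1 := hd _ (hu.chain_mem hB hne ht) (by rintro _ ⟨k, rfl⟩; exact ⟨_, hne k, rfl⟩)
  refine Set.infinite_range_of_injective (hu.chain_injective hne ht) (h1.subset ?_)
  rintro _ ⟨k, rfl⟩
  refine ⟨⟨k, rfl⟩, ?_⟩
  cases k with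
  | zero => exact (he []).2
  | succ k => exact (he (t k)).2

end SplitTree

/-- The map of trees sending the `q`-th successor of `s` to the `r s q`-th successor of `t s`. -/
def treeMap (t : List ℕ → List ℕ) (r : List ℕ → ℕ → ℕ) : List ℕ → List ℕ
  | [] => []
  | q :: s => r s q :: t s

theorem exists_cons_suffix {α : Type*} {s t : List α} (h : s <:+ t) (hl : s.length < t.length) :
    ∃ q, (q :: s) <:+ t := by
  obtain ⟨w, rfl⟩ := h
  rcases List.eq_nil_or_concat w with rfl | ⟨w, k, rfl⟩
  · simp at hl
  · exact ⟨k, w, by simp⟩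

theorem suffix_of_cons_suffix_cons {α : Type*} {q r : α} {s t : List α}
    (h : (q :: s) <:+ r :: t) : s <:+ t := by
  rcases List.suffix_cons_iff.1 h with h | h
  · simp only [List.cons.injEq] at h
    exact h.2 ▸ List.suffix_rfl
  · exact (List.suffix_cons _ _).trans h

theorem treeMap_suffix {t : List ℕ → List ℕ} {r : List ℕ → ℕ → ℕ}
    (h : ∀ q s, (r s q :: t s) <:+ t (q :: s)) {s s' : List ℕ} (hs : s ≠ []) (hss : s <:+ s') :
    treeMap t r s <:+ t s' := by
  have hmono : t s <:+ t s' := by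
    obtain ⟨w, rfl⟩ := hss
    induction w with
    | nil => exact List.suffix_rfl
    | cons i w ih => exact ih.trans ((List.suffix_cons _ _).trans (h i (w ++ s)))
  cases s with
  | nil => exact (hs rfl).elim
  | cons q s => exact (h q s).trans hmono

theorem treeMap_cons_suffix {t : List ℕ → List ℕ} {r : List ℕ → ℕ → ℕ}
    (h : ∀ q s, (r s q :: t s) <:+ t (q :: s)) {q : ℕ} {s s' : List ℕ} (hs : s ≠ [])
    (hss : (q :: s) <:+ s') : ∃ i, (i :: treeMap t r s) <:+ treeMap t r s' := by
  cases s' with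
  | nil => simp at hss
  | cons q' s' =>
    have h1 := treeMap_suffix h hs (suffix_of_cons_suffix_cons hss)
    refine exists_cons_suffix (h1.trans (List.suffix_cons _ _)) ?_
    have := h1.length_le
    have h2 : treeMap t r (q' :: s') = r s' q' :: t s' := rfl
    rw [h2, List.length_cons]
    omega

theorem SplitTree.comp {N : Type*} {A B : Set (Set N)} {u : List ℕ → N} (hu : SplitTree A B u)
    {t : List ℕ → List ℕ} {r : List ℕ → ℕ → ℕ} (hr : ∀ s, Function.Injective (r s))
    (h : ∀ q s, (r s q :: t s) <:+ t (q :: s)) : SplitTree A B (u ∘ treeMap t r) := by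
  have hne : ∀ s, s ≠ [] → treeMap t r s ≠ [] := by
    intro s hs
    cases s with
    | nil => exact (hs rfl).elim
    | cons q s => simp [treeMap]
  refine ⟨?_, ?_, ?_, ?_⟩
  · intro s
    obtain ⟨z, hz, h'⟩ := hu.split (t s)
    exact ⟨z, hz, fun q => h' (r s q)⟩
  · exact fun s => (hu.inj (t s)).comp (hr s)
  · intro w hw hstep
    refine hu.chain (fun k => treeMap t r (w k)) (fun k => hne _ (hw k)) fun k => ?_
    obtain ⟨q, hq⟩ := hstep k
    exact treeMap_cons_suffix h (hw k) hq
  · intro q s s' hs hss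
    obtain ⟨i, hi⟩ := treeMap_cons_suffix h hs hss
    exact hu.ne i _ _ (hne s hs) hi

/-- The sets coded by `P` are almost covered by countably many sets orthogonal to `A`. -/
def Small {N : Type*} (A : Set (Set N)) (F : (ℕ → ℕ) → Set N) (P : Set (ℕ → ℕ)) : Prop :=
  ∃ C : Set (Set N), C.Countable ∧ C ⊆ orthFamC A ∧ ∀ g ∈ P, ∃ c ∈ C, (F g \ c).Finite

theorem Small.of_iUnion {N : Type*} {A : Set (Set N)} {F : (ℕ → ℕ) → Set N} {ι : Type*}
    [Countable ι] {P : Set (ℕ → ℕ)} {Q : ι → Set (ℕ → ℕ)} (h : ∀ i, Small A F (Q i))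
    (hP : P ⊆ ⋃ i, Q i) : Small A F P := by
  choose C hC hCA h using h
  refine ⟨⋃ i, C i, Set.countable_iUnion hC, Set.iUnion_subset hCA, fun g hg => ?_⟩
  obtain ⟨i, hi⟩ := Set.mem_iUnion.1 (hP hg)
  obtain ⟨c, hc, h'⟩ := h i g hi
  exact ⟨c, Set.mem_iUnion.2 ⟨i, hc⟩, h'⟩

theorem exists_infinite_not_small {N : Type*} [Countable N] {A : Set (Set N)}
    {F : (ℕ → ℕ) → Set N} {P : Set (ℕ → ℕ)} (h : ¬ Small A F P) :
    ∃ z ∈ A, (z ∩ {x | ¬ Small A F {g ∈ P | x ∈ F g}}).Infinite := by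
  by_contra hcon
  push Not at hcon
  let S : Set N := {x | ¬ Small A F {g ∈ P | x ∈ F g}}
  obtain ⟨C, hC, hCA, h1⟩ := Small.of_iUnion (P := ⋃ x : ↥Sᶜ, {g ∈ P | x.1 ∈ F g})
    (Q := fun x : ↥Sᶜ => {g ∈ P | x.1 ∈ F g}) (fun x => not_not.1 x.2) subset_rfl
  refine h ⟨insert S C, hC.insert S, Set.insert_subset hcon hCA, fun g hg => ?_⟩
  by_cases hS : F g ⊆ S
  · exact ⟨S, Set.mem_insert _ _, by simp [Set.sdiff_eq_empty.2 hS]⟩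
  · obtain ⟨x, hx, hxS⟩ := Set.not_subset.1 hS
    obtain ⟨c, hc, h'⟩ := h1 g (Set.mem_iUnion.2 ⟨⟨x, hxS⟩, hg, hx⟩)
    exact ⟨c, Set.mem_insert_of_mem _ hc, h'⟩

theorem exists_splitTree_of_not_small {N : Type*} [Countable N] {A B : Set (Set N)}
    {F : (ℕ → ℕ) → Set N} (hF : Coding B F) (h : ¬ Small A F Set.univ) :
    ∃ u, SplitTree A B u := by
  classical
  let State := {S : Set (ℕ → ℕ) × Finset N // ¬ Small A F S.1}
  have step : ∀ (n : ℕ) (S : State), ∃ (x : ℕ → N) (T : ℕ → State), Function.Injective x ∧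
      (∃ z ∈ A, ∀ q, x q ∈ z) ∧ ∀ q, x q ∉ S.1.2 ∧ (T q).1.1 ⊆ S.1.1 ∧
      (∀ g ∈ (T q).1.1, x q ∈ F g) ∧ (∀ g ∈ (T q).1.1, ∀ g' ∈ (T q).1.1, g n = g' n) ∧
      (T q).1.2 = insert (x q) S.1.2 := by
    rintro n ⟨⟨P, E⟩, hS⟩
    obtain ⟨z, hz, hinf⟩ := exists_infinite_not_small hS
    let e := (hinf.sdiff E.finite_toSet).natEmbedding
    have hfix : ∀ q, ∃ m, ¬ Small A F {g ∈ P | (e q).1 ∈ F g ∧ g n = m} := by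
      intro q
      by_contra hcon
      push Not at hcon
      exact (e q).2.1.2 (Small.of_iUnion hcon
        fun g hg => Set.mem_iUnion.2 ⟨g n, hg.1, hg.2, rfl⟩)
    choose m hm using hfix
    refine ⟨fun q => (e q).1, fun q => ⟨⟨_, insert (e q).1 E⟩, hm q⟩, ?_, ⟨z, hz, ?_⟩, ?_⟩
    · exact fun i j hij => e.injective (Subtype.ext hij)
    · exact fun q => (e q).2.1.1
    · exact fun q => ⟨by simpa using (e q).2.2, fun g hg => hg.1, fun g hg => hg.2.1,
        fun g hg g' hg' => hg.2.2.trans hg'.2.2.symm, rfl⟩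
  choose x T hinj hcol hT using step
  let St : List ℕ → State := fun s =>
    List.rec ⟨⟨Set.univ, ∅⟩, h⟩ (fun q s S => T s.length S q) s
  have hSt : ∀ q s, St (q :: s) = T s.length (St s) q := fun q s => rfl
  let u : List ℕ → N := fun s => x s.tail.length (St s.tail) (s.headD 0)
  have hu : ∀ q s, u (q :: s) = x s.length (St s) q := fun q s => rfl
  have hE : ∀ {s t : List ℕ}, s <:+ t → (St s).1.2 ⊆ (St t).1.2 := fun hst =>
    suffix_induction (fun s => (St s).1.2) (fun i s => by
      rw [hSt, (hT _ _ i).2.2.2.2]; exact Finset.subset_insert _ _) hst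
  have hanti : ∀ q s, (St (q :: s)).1.1 ⊆ (St s).1.1 := fun q s => (hT _ _ q).2.1
  refine ⟨u, fun s => hcol s.length (St s), fun s => hinj s.length (St s), ?_, ?_⟩
  · intro t hne ht
    refine exists_code_of_chain hF (fun s => (St s).1.1) ?_ hanti
      (fun q s => (hT _ _ q).2.2.2.1) t ht (fun k => u (t k)) ?_
    · intro s
      by_contra hcon
      rw [Set.not_nonempty_iff_eq_empty] at hcon
      exact (St s).2 ⟨∅, Set.countable_empty, by simp, by simp [hcon]⟩
    · intro k g hg
      obtain ⟨q, hq⟩ := ht k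
      obtain ⟨p, s, hps⟩ := List.exists_cons_of_ne_nil (hne k)
      have : g ∈ (St (t k)).1.1 :=
        suffix_induction (β := (Set (ℕ → ℕ))ᵒᵈ) (fun s => OrderDual.toDual (St s).1.1)
          hanti ((List.suffix_cons _ _).trans hq) hg
      rw [hps] at this ⊢
      exact (hT _ _ p).2.2.1 g this
  · intro q s t hs hst e
    obtain ⟨p, s, rfl⟩ := List.exists_cons_of_ne_nil hs
    cases t with
    | nil => simp at hst
    | cons p' t =>
      have h1 : u (p :: s) ∈ (St (p :: s)).1.2 := by
        rw [hSt, (hT _ _ p).2.2.2.2]; exact Finset.mem_insert_self _ _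
      have h2 := hE (suffix_of_cons_suffix_cons hst) h1
      rw [e] at h2
      exact (hT _ _ p').1 h2

theorem Small.exists_seq {N : Type*} {A B : Set (Set N)} {F : (ℕ → ℕ) → Set N} (hF : Coding B F)
    (h : Small A F Set.univ) : ∃ c : ℕ → Set N, (∀ n, ∀ x ∈ A, (x ∩ c n).Finite) ∧
      ∀ y ∈ B, ∃ n, (y \ c n).Finite := by
  obtain ⟨C, hC, hCA, h⟩ := h
  obtain ⟨c, hc⟩ := (hC.insert ∅).exists_eq_range (Set.insert_nonempty _ _)
  refine ⟨c, fun n x hx => ?_, fun y hy => ?_⟩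
  · have : c n ∈ insert ∅ C := hc ▸ Set.mem_range_self n
    rcases this with h' | h'
    · simp [h']
    · exact hCA h' x hx
  · obtain ⟨g, rfl⟩ := hF.surj y hy
    obtain ⟨d, hd, h'⟩ := h g (Set.mem_univ _)
    have : d ∈ Set.range c := hc ▸ Set.mem_insert_of_mem _ hd
    obtain ⟨n, rfl⟩ := this
    exact ⟨n, h'⟩

theorem exists_splitTree {N : Type*} [Countable N] {A B : Set (Set N)}
    {F F' : (ℕ → ℕ) → Set N} (hF : Coding A F) (hF' : Coding B F')
    (h : NonSepOn A B Set.univ) : (∃ u, SplitTree A B u) ∨ ∃ u, SplitTree B A u := by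
  by_contra hcon
  push Not at hcon
  have h1 : Small A F' Set.univ := by
    by_contra h'
    obtain ⟨u, hu⟩ := exists_splitTree_of_not_small hF' h'
    exact hcon.1 u hu
  have h2 : Small B F Set.univ := by
    by_contra h'
    obtain ⟨u, hu⟩ := exists_splitTree_of_not_small hF h'
    exact hcon.2 u hu
  obtain ⟨c, hcA, hcB⟩ := h1.exists_seq hF'
  obtain ⟨d, hdB, hdA⟩ := h2.exists_seq hF
  let a : Set N := ⋃ n, d n \ ⋃ m ∈ Set.Iic n, c m
  have := h a aᶜ (by
    intro x hx _
    obtain ⟨n, hn⟩ := hdA x hx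
    refine (hn.union ((Set.finite_Iic n).biUnion fun m _ => hcA m x hx)).subset ?_
    rintro p ⟨hpx, hpa⟩
    by_cases hpd : p ∈ d n
    · right
      by_contra hp
      refine hpa (Set.mem_iUnion.2 ⟨n, hpd, fun hp' => hp ?_⟩)
      obtain ⟨m, hm, hpm⟩ := Set.mem_iUnion₂.1 hp'
      exact Set.mem_iUnion₂.2 ⟨m, hm, hpx, hpm⟩
    · exact Or.inl ⟨hpx, hpd⟩) (by
    intro y hy _
    obtain ⟨m, hm⟩ := hcB y hy
    refine (hm.union ((Set.finite_Iic m).biUnion fun n _ => hdB n y hy)).subset ?_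
    rintro p ⟨hpy, hpa⟩
    by_cases hpc : p ∈ c m
    · right
      obtain ⟨n, hpd, hpn⟩ := Set.mem_iUnion.1 (not_not.1 hpa)
      have hnm : n ≤ m := by
        by_contra hlt
        exact hpn (Set.mem_iUnion₂.2 ⟨m, (not_le.1 hlt).le, hpc⟩)
      exact Set.mem_iUnion₂.2 ⟨n, hnm, hpy, hpd⟩
    · exact Or.inl ⟨hpy, hpc⟩)
  simp at this

/-- Membership in each `c j` stabilizes along the tree of points `v`. -/
structure Homogeneous {N : Type*} (c : ℕ → Set N) (v : List ℕ → N) : Prop where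
  level : ∀ s j, j < s.length → ∃ e : Prop, ∀ q t, (q :: s) <:+ t → (v t ∈ c j ↔ e)
  tail : ∀ s j, ∃ e : Prop, ∃ q₀, ∀ q ≥ q₀, ∀ r t, (r :: q :: s) <:+ t → (v t ∈ c j ↔ e)

/-- Above `τ`, the pattern `ε` of membership in the first `m` sets `c j` occurs at infinitely many
successors of densely many nodes. -/
def Persistent {N : Type*} (c : ℕ → Set N) (u : List ℕ → N) (τ : List ℕ) (m : ℕ) (ε : ℕ → Bool) :
    Prop :=
  ∀ τ', τ <:+ τ' → ∃ t, τ' <:+ t ∧ {q | ∀ j < m, (u (q :: t) ∈ c j ↔ ε j = true)}.Infinite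

theorem Persistent.exists_succ {N : Type*} {c : ℕ → Set N} {u : List ℕ → N} {τ : List ℕ} {m : ℕ}
    {ε : ℕ → Bool} (h : Persistent c u τ m ε) :
    ∃ τ' ε', τ <:+ τ' ∧ (∀ j < m, ε' j = ε j) ∧ Persistent c u τ' (m + 1) ε' := by
  have hup : ∀ e, ∀ j < m, Function.update ε m e j = ε j := fun e j hj =>
    Function.update_of_ne hj.ne _ _
  by_cases h1 : Persistent c u τ (m + 1) (Function.update ε m true)
  · exact ⟨τ, _, List.suffix_rfl, hup _, h1⟩
  unfold Persistent at h1
  push Not at h1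
  obtain ⟨τ₁, hτ₁, h1⟩ := h1
  refine ⟨τ₁, _, hτ₁, hup false, fun τ' hτ' => ?_⟩
  obtain ⟨t, ht, hinf⟩ := h τ' (hτ₁.trans hτ')
  refine ⟨t, ht, (hinf.sdiff (h1 t (hτ'.trans ht))).mono ?_⟩
  rintro q ⟨hq, hq'⟩ j hj
  rcases Nat.lt_succ_iff_lt_or_eq.1 hj with hj | rfl
  · rw [hup _ j hj]; exact hq j hj
  · rw [Function.update_self]
    refine ⟨fun hmem => (hq' fun i hi => ?_).elim, fun hf => by simp at hf⟩
    rcases Nat.lt_succ_iff_lt_or_eq.1 hi with hi | rfl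
    · rw [hup _ i hi]; exact hq i hi
    · simpa using hmem

theorem Persistent.exists_add {N : Type*} {c : ℕ → Set N} {u : List ℕ → N} {τ : List ℕ} {m : ℕ}
    {ε : ℕ → Bool} (h : Persistent c u τ m ε) (k : ℕ) :
    ∃ τ' ε', τ <:+ τ' ∧ (∀ j < m, ε' j = ε j) ∧ Persistent c u τ' (m + k) ε' := by
  induction k with
  | zero => exact ⟨τ, ε, List.suffix_rfl, fun _ _ => rfl, h⟩
  | succ k ih =>
    obtain ⟨τ₁, ε₁, h1, h2, h3⟩ := ih
    obtain ⟨τ₂, ε₂, h4, h5, h6⟩ := h3.exists_succ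
    exact ⟨τ₂, ε₂, h1.trans h4, fun j hj => (h5 j (by omega)).trans (h2 j hj), h6⟩

theorem Persistent.exists_step {N : Type*} {c : ℕ → Set N} {u : List ℕ → N} {τ : List ℕ} {m : ℕ}
    {ε : ℕ → Bool} (h : Persistent c u τ m ε) :
    ∃ (t : List ℕ) (r : ℕ → ℕ) (T : ℕ → List ℕ) (M : ℕ → ℕ) (E : ℕ → ℕ → Bool),
      τ <:+ t ∧ Function.Injective r ∧ (∀ j, ∃ e q₀, ∀ q ≥ q₀, E q j = e) ∧ ∀ q,
      (∀ j < m, (u (r q :: t) ∈ c j ↔ ε j = true)) ∧ (r q :: t) <:+ T q ∧ m + q + 1 ≤ M q ∧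
      (∀ j < m, E q j = ε j) ∧ Persistent c u (T q) (M q) (E q) := by
  obtain ⟨t, ht, hinf⟩ := h τ List.suffix_rfl
  let r := hinf.natEmbedding
  have hex : ∀ q, ∃ τ' ε', ((r q).1 :: t) <:+ τ' ∧ (∀ j < m, ε' j = ε j) ∧
      Persistent c u τ' (m + (q + 1)) ε' := fun q =>
    Persistent.exists_add (fun τ' hτ' => h τ' (ht.trans ((List.suffix_cons _ _).trans hτ'))) _
  choose T E hT hE hP using hex
  obtain ⟨a, φ, hφ, hlim⟩ := CompactSpace.tendsto_subseq E
  refine ⟨t, fun q => (r (φ q)).1, fun q => T (φ q), fun q => m + (φ q + 1), fun q => E (φ q),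
    ht, ?_, ?_, fun q => ⟨(r (φ q)).2, hT _, ?_, hE _, hP _⟩⟩
  · exact fun i j hij => hφ.injective (r.injective (Subtype.ext hij))
  · intro j
    have h1 := tendsto_pi_nhds.1 hlim j
    rw [nhds_discrete, Filter.tendsto_pure] at h1
    obtain ⟨q₀, hq₀⟩ := Filter.eventually_atTop.1 h1
    exact ⟨a j, q₀, hq₀⟩
  · have := hφ.id_le q
    simp only [id] at this ⊢
    omega

theorem SplitTree.exists_homogeneous {N : Type*} {A B : Set (Set N)} {u : List ℕ → N}
    (hu : SplitTree A B u) (c : ℕ → Set N) : ∃ v, SplitTree A B v ∧ Homogeneous c v := by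
  let State := {S : List ℕ × ℕ × (ℕ → Bool) // Persistent c u S.1 S.2.1 S.2.2}
  have step : ∀ S : State, ∃ (t : List ℕ) (r : ℕ → ℕ) (T : ℕ → State),
      S.1.1 <:+ t ∧ Function.Injective r ∧ (∀ j, ∃ e q₀, ∀ q ≥ q₀, (T q).1.2.2 j = e) ∧ ∀ q,
      (∀ j < S.1.2.1, (u (r q :: t) ∈ c j ↔ S.1.2.2 j = true)) ∧ (r q :: t) <:+ (T q).1.1 ∧
      S.1.2.1 + q + 1 ≤ (T q).1.2.1 ∧ (∀ j < S.1.2.1, (T q).1.2.2 j = S.1.2.2 j) := by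
    rintro ⟨S, hS⟩
    obtain ⟨t, r, T, M, E, h1, h2, h3, h4⟩ := hS.exists_step
    exact ⟨t, r, fun q => ⟨(T q, M q, E q), (h4 q).2.2.2.2⟩, h1, h2, h3,
      fun q => ⟨(h4 q).1, (h4 q).2.1, (h4 q).2.2.1, (h4 q).2.2.2.1⟩⟩
  choose t r T ht hr hev hT using step
  have h0 : Persistent c u [] 0 (fun _ => true) := fun τ _ =>
    ⟨τ, List.suffix_rfl, by simpa using Set.infinite_univ⟩
  let St : List ℕ → State := fun s => List.rec ⟨([], 0, fun _ => true), h0⟩ (fun q _ S => T S q) s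
  have hSt : ∀ q s, St (q :: s) = T (St s) q := fun q s => rfl
  have hlen : ∀ s, s.length ≤ (St s).1.2.1 := by
    intro s
    induction s with
    | nil => exact Nat.zero_le _
    | cons q s ih =>
      have := (hT (St s) q).2.2.1
      rw [hSt, List.length_cons]
      omega
  have hagree : ∀ s s', s <:+ s' → (St s).1.2.1 ≤ (St s').1.2.1 ∧
      ∀ j < (St s).1.2.1, (St s').1.2.2 j = (St s).1.2.2 j := by
    rintro s _ ⟨w, rfl⟩
    induction w with
    | nil => exact ⟨le_rfl, fun _ _ => rfl⟩
    | cons q w ih =>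
      have h1 := hT (St (w ++ s)) q
      rw [List.cons_append, hSt]
      exact ⟨by have := h1.2.2.1; have := ih.1; omega,
        fun j hj => (h1.2.2.2 j (hj.trans_le ih.1)).trans (ih.2 j hj)⟩
  have hmem : ∀ s q w, (q :: s) <:+ w → ∀ j < (St s).1.2.1,
      (u (treeMap (fun s => t (St s)) (fun s => r (St s)) w) ∈ c j ↔ (St s).1.2.2 j = true) := by
    intro s q w hw j hj
    cases w with
    | nil => simp at hw
    | cons q' w =>
      obtain ⟨h1, h2⟩ := hagree s w (suffix_of_cons_suffix_cons hw)
      rw [← h2 j hj]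
      exact (hT (St w) q').1 j (hj.trans_le h1)
  refine ⟨u ∘ treeMap (fun s => t (St s)) (fun s => r (St s)), hu.comp (fun s => hr _)
    (fun q s => (hT (St s) q).2.1.trans (ht _)), fun s j hj => ⟨(St s).1.2.2 j = true, ?_⟩, ?_⟩
  · exact fun q w hw => hmem s q w hw j (hj.trans_le (hlen s))
  · intro s j
    obtain ⟨e, q₀, he⟩ := hev (St s) j
    refine ⟨e = true, max q₀ j, fun q hq i w hw => ?_⟩
    have h1 := (hT (St s) q).2.2.1
    have h2 := hmem (q :: s) i w hw j (by rw [hSt]; have := le_of_max_le_right hq; omega)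
    rw [hSt, he q (le_of_max_le_left hq)] at h2
    exact h2

/-- The sets of nodes in `P` are almost covered by a single set with finitely many successors of
each node. -/
def Thin {α : Type*} (P : Set (α × Set (List ℕ))) : Prop :=
  ∃ G : Set (List ℕ), (∀ t, {r | r :: t ∈ G}.Finite) ∧ ∀ p ∈ P, (p.2 \ G).Finite

theorem Thin.of_iUnion {α ι : Type*} [Countable ι] {P : Set (α × Set (List ℕ))}
    {Q : ι → Set (α × Set (List ℕ))} (h : ∀ i, Thin (Q i)) (hP : P ⊆ ⋃ i, Q i) : Thin P := by
  choose G hG h using h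
  obtain ⟨f, hf⟩ := Countable.exists_injective_nat ι
  refine ⟨{w | ∃ i, f i ≤ Encodable.encode w.tail ∧ w ∈ G i}, fun t => ?_, fun p hp => ?_⟩
  · refine (((Set.finite_Iic (Encodable.encode t)).preimage hf.injOn).biUnion
      fun i _ => hG i t).subset ?_
    rintro r ⟨i, hi, hr⟩
    exact Set.mem_iUnion₂.2 ⟨i, hi, hr⟩
  · obtain ⟨i, hi⟩ := Set.mem_iUnion.1 (hP hp)
    have hfin : ((Encodable.encode : List ℕ → ℕ) ⁻¹' Set.Iio (f i)).Finite :=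
      (Set.finite_Iio _).preimage Encodable.encode_injective.injOn
    refine (((h i p hi).union (Set.finite_singleton [])).union
      (hfin.biUnion fun t _ => (hG i t).image fun r => r :: t)).subset ?_
    rintro w ⟨hw, hw'⟩
    by_cases hwG : w ∈ G i
    · cases w with
      | nil => exact Or.inl (Or.inr rfl)
      | cons r t =>
        refine Or.inr (Set.mem_iUnion₂.2 ⟨t, ?_, r, hwG, rfl⟩)
        by_contra hlt
        exact hw' ⟨i, not_lt.1 hlt, hwG⟩
    · exact Or.inl (Or.inl ⟨hw, hwG⟩)

/-- Codes together with sets of nodes above `s` with values in the coded set, which have only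
finitely many elements above each successor of `s`. -/
def fans {N : Type*} (F : (ℕ → ℕ) → Set N) (u : List ℕ → N) (s : List ℕ) :
    Set ((ℕ → ℕ) × Set (List ℕ)) :=
  {p | (∀ w ∈ p.2, ∃ r t q, w = r :: t ∧ (q :: s) <:+ t) ∧ (∀ w ∈ p.2, u w ∈ F p.1) ∧
    ∀ q, {w ∈ p.2 | (q :: s) <:+ w}.Finite}

theorem exists_infinite_not_thin {N : Type*} {F : (ℕ → ℕ) → Set N} {u : List ℕ → N} {s : List ℕ}
    {P : Set ((ℕ → ℕ) × Set (List ℕ))} (hP : P ⊆ fans F u s) (h : ¬ Thin P) (Q : ℕ) :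
    ∃ t, (∃ q ≥ Q, (q :: s) <:+ t) ∧ {r | ¬ Thin {p ∈ P | r :: t ∈ p.2}}.Infinite := by
  by_contra hcon
  push Not at hcon
  let S : Set (List ℕ) := {w | Thin {p ∈ P | w ∈ p.2}}
  obtain ⟨G, hG, hGP⟩ := Thin.of_iUnion (P := ⋃ w : S, {p ∈ P | w.1 ∈ p.2})
    (Q := fun w : S => {p ∈ P | w.1 ∈ p.2}) (fun w => w.2) subset_rfl
  refine h ⟨{w | (∃ q ≥ Q, (q :: s) <:+ w.tail) ∧ ¬ Thin {p ∈ P | w ∈ p.2}} ∪ G,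
    fun t => ?_, fun p hp => ?_⟩
  · by_cases ht : ∃ q ≥ Q, (q :: s) <:+ t
    · refine ((hcon t ht).union (hG t)).subset ?_
      rintro r (hr | hr)
      · exact Or.inl hr.2
      · exact Or.inr hr
    · refine (hG t).subset ?_
      rintro r (hr | hr)
      · exact (ht hr.1).elim
      · exact hr
  · by_cases hw : ∃ w ∈ p.2, w ∈ S
    · obtain ⟨w, hw, hwS⟩ := hw
      refine (hGP p (Set.mem_iUnion.2 ⟨⟨w, hwS⟩, hp, hw⟩)).subset ?_
      exact Set.sdiff_subset_sdiff_right Set.subset_union_right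
    · push Not at hw
      refine ((Set.finite_Iio Q).biUnion fun q _ => (hP hp).2.2 q).subset ?_
      rintro w ⟨hwp, hwG⟩
      obtain ⟨r, t, q, rfl, hq⟩ := (hP hp).1 w hwp
      refine Set.mem_iUnion₂.2 ⟨q, ?_, hwp, hq.trans (List.suffix_cons _ _)⟩
      by_contra hlt
      exact hwG (Or.inl ⟨⟨q, not_lt.1 hlt, hq⟩, hw _ hwp⟩)

theorem SplitTree.exists_of_not_thin {N : Type*} {A B B' : Set (Set N)} {u : List ℕ → N}
    (hu : SplitTree A B u) {F : (ℕ → ℕ) → Set N} (hF : Coding B' F) {s₀ : List ℕ}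
    (h : ¬ Thin (fans F u s₀)) : ∃ w : List ℕ → List ℕ, SplitTree A B' (u ∘ w) ∧
      ∀ q s, ∃ r, ∃ q' ≥ Encodable.encode s, (r :: q' :: s₀) <:+ w (q :: s) := by
  classical
  let State := {S : Set ((ℕ → ℕ) × Set (List ℕ)) × Finset N // S.1 ⊆ fans F u s₀ ∧ ¬ Thin S.1}
  have step : ∀ (s : List ℕ) (S : State), ∃ (t : List ℕ) (r : ℕ → ℕ) (T : ℕ → State),
      (∃ q ≥ Encodable.encode s, (q :: s₀) <:+ t) ∧ Function.Injective r ∧ ∀ q,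
      u (r q :: t) ∉ S.1.2 ∧ (T q).1.1 ⊆ S.1.1 ∧ (∀ p ∈ (T q).1.1, r q :: t ∈ p.2) ∧
      (∀ p ∈ (T q).1.1, ∀ p' ∈ (T q).1.1, p.1 s.length = p'.1 s.length) ∧
      (T q).1.2 = insert (u (r q :: t)) S.1.2 := by
    rintro s ⟨⟨P, E⟩, hS, hS'⟩
    obtain ⟨t, ht, hinf⟩ := exists_infinite_not_thin hS hS' (Encodable.encode s)
    have hE : {r | u (r :: t) ∈ E}.Finite := E.finite_toSet.preimage (hu.inj t).injOn
    let e := (hinf.sdiff hE).natEmbedding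
    have hfix : ∀ q, ∃ m, ¬ Thin {p ∈ P | (e q).1 :: t ∈ p.2 ∧ p.1 s.length = m} := by
      intro q
      by_contra hcon
      push Not at hcon
      exact (e q).2.1 (Thin.of_iUnion hcon
        fun p hp => Set.mem_iUnion.2 ⟨p.1 s.length, hp.1, hp.2, rfl⟩)
    choose m hm using hfix
    refine ⟨t, fun q => (e q).1, fun q => ⟨⟨_, insert (u ((e q).1 :: t)) E⟩,
      fun p hp => hS hp.1, hm q⟩, ht, ?_, ?_⟩
    · exact fun i j hij => e.injective (Subtype.ext hij)
    · exact fun q => ⟨(e q).2.2, fun p hp => hp.1, fun p hp => hp.2.1,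
        fun p hp p' hp' => hp.2.2.trans hp'.2.2.symm, rfl⟩
  choose t r T ht hr hT using step
  let St : List ℕ → State := fun s =>
    List.rec ⟨⟨fans F u s₀, ∅⟩, subset_rfl, h⟩ (fun q s S => T s S q) s
  have hSt : ∀ q s, St (q :: s) = T s (St s) q := fun q s => rfl
  let w : List ℕ → List ℕ := fun s => r s.tail (St s.tail) (s.headD 0) :: t s.tail (St s.tail)
  have hw : ∀ q s, w (q :: s) = r s (St s) q :: t s (St s) := fun q s => rfl
  have hE : ∀ {s t : List ℕ}, s <:+ t → (St s).1.2 ⊆ (St t).1.2 := fun hst =>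
    suffix_induction (fun s => (St s).1.2) (fun i s => by
      rw [hSt, (hT _ _ i).2.2.2.2]; exact Finset.subset_insert _ _) hst
  have hanti : ∀ q s, (St (q :: s)).1.1 ⊆ (St s).1.1 := fun q s => (hT _ _ q).2.1
  refine ⟨w, ⟨?_, ?_, ?_, ?_⟩, ?_⟩
  · intro s
    obtain ⟨z, hz, h'⟩ := hu.split (t s (St s))
    exact ⟨z, hz, fun q => h' _⟩
  · exact fun s => (hu.inj (t s (St s))).comp (hr s (St s))
  · intro x hne hx
    refine exists_code_of_chain hF (fun s => Prod.fst '' (St s).1.1) ?_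
      (fun q s => Set.image_mono (hanti q s)) ?_ x hx (fun k => u (w (x k))) ?_
    · intro s
      rw [Set.image_nonempty]
      by_contra hcon
      rw [Set.not_nonempty_iff_eq_empty] at hcon
      exact (St s).2.2 ⟨∅, by simp, by simp [hcon]⟩
    · rintro q s _ ⟨p, hp, rfl⟩ _ ⟨p', hp', rfl⟩
      exact (hT _ _ q).2.2.2.1 p hp p' hp'
    · rintro k _ ⟨p, hp, rfl⟩
      obtain ⟨q, hq⟩ := hx k
      obtain ⟨i, s, his⟩ := List.exists_cons_of_ne_nil (hne k)
      have hp' : p ∈ (St (x k)).1.1 :=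
        suffix_induction (β := (Set ((ℕ → ℕ) × Set (List ℕ)))ᵒᵈ)
          (fun s => OrderDual.toDual (St s).1.1) hanti ((List.suffix_cons _ _).trans hq) hp
      refine ((St (x k)).2.1 hp').2.1 _ ?_
      rw [his] at hp' ⊢
      exact (hT _ _ i).2.2.1 p hp'
  · intro q s s' hs hss e
    obtain ⟨p, s, rfl⟩ := List.exists_cons_of_ne_nil hs
    cases s' with
    | nil => simp at hss
    | cons p' s' =>
      have h1 : u (w (p :: s)) ∈ (St (p :: s)).1.2 := by
        rw [hSt, (hT _ _ p).2.2.2.2]; exact Finset.mem_insert_self _ _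
      have h2 := hE (suffix_of_cons_suffix_cons hss) h1
      have e' : u (w (p :: s)) = u (w (p' :: s')) := e
      rw [e'] at h2
      exact (hT _ _ p').1 h2
  · intro q s
    obtain ⟨q', hq', hsuf⟩ := ht s (St s)
    obtain ⟨i, hi⟩ := exists_cons_suffix (hsuf.trans (List.suffix_cons (r s (St s) q) _))
      (Nat.lt_succ_iff.2 hsuf.length_le)
    exact ⟨i, q', hq', hi⟩

/-- Any two members of different families are separated, up to finite sets, by some `c j`. -/
def Separates {N ι : Type*} (c : ℕ → Set N) (Γ : ι → Set (Set N)) : Prop :=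
  ∀ a b, a ≠ b → ∀ x ∈ Γ a, ∀ y ∈ Γ b, ∃ j, (x \ c j).Finite ∧ (y ∩ c j).Finite

theorem exists_isolated_of_not_thin {N ι : Type*} {Γ : ι → Set (Set N)}
    (hher : ∀ i, HerFam (Γ i)) (horth : ∀ i j, i ≠ j → OrthFam (Γ i) (Γ j)) {c : ℕ → Set N}
    (hc : Separates c Γ) {a k : ι} (hak : a ≠ k) {B : Set (Set N)} {u : List ℕ → N}
    (hu : SplitTree (Γ a) B u) (hom : Homogeneous c u) {F : (ℕ → ℕ) → Set N}
    (hF : Coding (Γ k) F) {s₀ : List ℕ} (h : ¬ Thin (fans F u s₀)) :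
    ∃ M, Isolated Γ a k M := by
  obtain ⟨w, hw, hsuf⟩ := hu.exists_of_not_thin hF h
  refine ⟨_, hak, hw.nonSepOn (hher a) (hher k), fun l hla hlk y hy => ?_⟩
  by_contra hinf
  let x : ℕ → List ℕ := fun m => 0 :: List.replicate m 0
  have hxne : ∀ m, x m ≠ [] := fun m => List.cons_ne_nil _ _
  have hx : ∀ m, ∃ q, (q :: x m) <:+ x (m + 1) := fun m => ⟨0, List.suffix_rfl⟩
  obtain ⟨j, hyj, hzj⟩ := hc l k hlk y hy _ (hw.chain_mem (hher k) hxne hx)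
  obtain ⟨e, q₀, he⟩ := hom.tail s₀ j
  have hfin : ((Encodable.encode : List ℕ → ℕ) ⁻¹' Set.Iio q₀).Finite :=
    (Set.finite_Iio _).preimage Encodable.encode_injective.injOn
  have he' : ∀ q s, q₀ ≤ Encodable.encode s → (u (w (q :: s)) ∈ c j ↔ e) := by
    intro q s hs
    obtain ⟨r, q', hq', hr⟩ := hsuf q s
    exact he q' (hs.trans hq') r _ hr
  have hpos : e := by
    obtain ⟨p, ⟨⟨s, hs, rfl⟩, hpy⟩, hp⟩ := (Set.Infinite.sdiff hinf
      (hyj.union (hfin.biUnion fun s _ => horth a l hla.symm _ (hw.column_mem (hher a) s) y hy))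
        ).nonempty
    obtain ⟨q, s, rfl⟩ := List.exists_cons_of_ne_nil hs
    refine (he' q s ?_).1 ?_
    · by_contra hlt
      exact hp (Or.inr (Set.mem_iUnion₂.2 ⟨s, not_le.1 hlt, ⟨q, rfl⟩, hpy⟩))
    · by_contra hcj
      exact hp (Or.inl ⟨hpy, hcj⟩)
  have hinj := hw.chain_injective hxne hx
  have hbad : {m | (u ∘ w) (x m) ∈ c j}.Finite := by
    refine (hzj.preimage hinj.injOn).subset fun m hm => ⟨⟨m, rfl⟩, hm⟩
  have hsmall : {m | Encodable.encode (List.replicate m 0) < q₀}.Finite := by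
    refine Set.Finite.preimage (f := fun m => Encodable.encode (List.replicate m 0))
      (Function.Injective.injOn ?_) (Set.finite_Iio q₀)
    exact Encodable.encode_injective.comp (List.replicate_left_injective 0)
  obtain ⟨m, hm⟩ := (hbad.union hsmall).infinite_compl.nonempty
  refine hm (Or.inl ((he' 0 (List.replicate m 0) ?_).2 hpos))
  by_contra hlt
  exact hm (Or.inr (not_le.1 hlt))

theorem SplitTree.exists_isolated {N ι : Type*} [Finite ι] {Γ : ι → Set (Set N)}
    (hher : ∀ i, HerFam (Γ i)) (horth : ∀ i j, i ≠ j → OrthFam (Γ i) (Γ j)) {c : ℕ → Set N}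
    (hc : Separates c Γ) {a b : ι} (hab : a ≠ b) {u : List ℕ → N}
    (hu : SplitTree (Γ a) (Γ b) u) (hom : Homogeneous c u)
    (h : ∀ s k, k ≠ a → ∃ G : Set (List ℕ), (∀ t, {r | r :: t ∈ G}.Finite) ∧
      ∀ y ∈ Γ k, ∀ A : Set (List ℕ), (∀ w ∈ A, ∃ r t q, w = r :: t ∧ (q :: s) <:+ t) →
        (∀ w ∈ A, u w ∈ y) → (∀ q, {w ∈ A | (q :: s) <:+ w}.Finite) → (A \ G).Finite) :
    ∃ M, Isolated Γ a b M := by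
  choose! G hG hGA using h
  have hgood : ∀ t, {r | ∀ s, s <:+ t → ∀ k, k ≠ a → r :: t ∉ G s k}.Infinite := by
    intro t
    have hfin : {r | ∃ s, s <:+ t ∧ ∃ k, k ≠ a ∧ r :: t ∈ G s k}.Finite := by
      refine ((List.finite_toSet t.tails).biUnion fun s _ => Set.Finite.biUnion
        (Set.toFinite {k | k ≠ a}) fun k hk => hG s k hk t).subset ?_
      rintro r ⟨s, hs, k, hk, hr⟩
      exact Set.mem_iUnion₂.2 ⟨s, (List.mem_tails _ _).2 hs, Set.mem_iUnion₂.2 ⟨k, hk, hr⟩⟩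
    exact hfin.infinite_compl.mono fun r (hr : ¬ _) s hs k hk hrG => hr ⟨s, hs, k, hk, hrG⟩
  have hex : ∀ t, ∃ f : ℕ → ℕ, Function.Injective f ∧
      ∀ q s, s <:+ t → ∀ k, k ≠ a → f q :: t ∉ G s k := fun t =>
    ⟨fun q => (Set.Infinite.natEmbedding _ (hgood t) q).1,
      fun i j hij => (Set.Infinite.natEmbedding _ (hgood t)).injective (Subtype.ext hij),
      fun q => (Set.Infinite.natEmbedding _ (hgood t) q).2⟩
  choose e he heG using hex
  let φ : List ℕ → List ℕ := fun s => List.rec [] (fun q _ t => e t q :: t) s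
  have hφ : treeMap φ (fun s q => e (φ s) q) = φ := by
    funext s
    cases s <;> rfl
  have hv : SplitTree (Γ a) (Γ b) (u ∘ φ) := by
    rw [← hφ]
    exact hu.comp (fun s => he _) (fun q s => List.suffix_rfl)
  refine ⟨_, hab, hv.nonSepOn (hher a) (hher b), fun k hka hkb y hy => ?_⟩
  by_contra hinf
  obtain ⟨W, hWφ, hW⟩ := Set.SurjOn.exists_bijOn_subset (f := u) (s := φ '' {s | s ≠ []})
    (t := (u ∘ φ) '' {s | s ≠ []} ∩ y) (by rw [Set.image_comp]; exact Set.inter_subset_left)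
  have hWy : ∀ w ∈ W, u w ∈ y := fun w hw => (hW.mapsTo hw).2
  have hWinf : W.Infinite := fun hfin => hinf (hW.image_eq ▸ hfin.image u)
  let Big : List ℕ → Prop := fun t => {w ∈ W | t <:+ w}.Infinite
  by_cases hbr : ∀ t, Big t → ∃ q, Big (q :: t)
  · choose f hf using hbr
    let β : ℕ → {t // Big t} := fun m =>
      m.rec ⟨[], by simpa [Big] using hWinf⟩ (fun _ t => ⟨f t.1 t.2 :: t.1, hf t.1 t.2⟩)
    have hβ : ∀ m, (β (m + 1)).1 = f (β m).1 (β m).2 :: (β m).1 := fun m => rfl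
    have hlen : ∀ m, (β m).1.length = m := by
      intro m
      induction m with
      | zero => rfl
      | succ m ih => rw [hβ, List.length_cons, ih]
    have hmono : ∀ m m', m ≤ m' → (β m).1 <:+ (β m').1 := by
      intro m m' hm
      induction m', hm using Nat.le_induction with
      | base => exact List.suffix_rfl
      | succ m' _ ih => exact ih.trans (by rw [hβ]; exact List.suffix_cons _ _)
    let x : ℕ → List ℕ := fun m => (β (m + 1)).1
    have hxne : ∀ m, x m ≠ [] := fun m => List.cons_ne_nil _ _
    have hx : ∀ m, ∃ q, (q :: x m) <:+ x (m + 1) := fun m => ⟨_, List.suffix_rfl⟩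
    obtain ⟨j, hyj, hzj⟩ := hc k b hkb y hy _ (hu.chain_mem (hher b) hxne hx)
    obtain ⟨p, hp⟩ := hom.level (β (j + 1)).1 j ((hlen (j + 1)).symm ▸ Nat.lt_succ_self j)
    have hbad : {m | u (x m) ∈ c j}.Finite :=
      (hzj.preimage (hu.chain_injective hxne hx).injOn).subset fun m hm => ⟨⟨m, rfl⟩, hm⟩
    obtain ⟨m, hm⟩ := (hbad.union (Set.finite_Iio (j + 1))).infinite_compl.nonempty
    have hm' : j + 1 ≤ m := not_lt.1 fun hlt => hm (Or.inr hlt)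
    refine hm (Or.inl ((hp _ _ (hmono (j + 2) (m + 1) (by omega))).2 ?_))
    have hinf' : (u '' {w ∈ W | (β (j + 2)).1 <:+ w}).Infinite :=
      (β (j + 2)).2.image (hW.injOn.mono fun w hw => hw.1)
    obtain ⟨_, ⟨w, ⟨hwW, hw⟩, rfl⟩, hwj⟩ := (hinf'.sdiff hyj).nonempty
    refine (hp _ w hw).1 ?_
    by_contra hcj
    exact hwj ⟨hWy w hwW, hcj⟩
  · push Not at hbr
    obtain ⟨s, hs, hsq⟩ := hbr
    have hA := hGA s k hka y hy {w ∈ W | ∃ r t q, w = r :: t ∧ (q :: s) <:+ t}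
      (fun w hw => hw.2) (fun w hw => hWy w hw.1)
      (fun q => (Set.not_infinite.1 (hsq q)).subset fun w hw => ⟨hw.1.1, hw.2⟩)
    have hchild : {w ∈ W | ∃ q, w = q :: s}.Finite := by
      refine Set.Finite.of_finite_image ((horth a k hka.symm _ (hu.column_mem (hher a) s) y
        hy).subset ?_) (hW.injOn.mono fun w hw => hw.1)
      rintro _ ⟨_, ⟨hwW, q, rfl⟩, rfl⟩
      exact ⟨⟨q, rfl⟩, hWy _ hwW⟩
    refine hs (((hA.union hchild).union (Set.finite_singleton s)).subset ?_)
    rintro w ⟨hwW, hsw⟩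
    by_cases hws : s = w
    · exact Or.inr hws.symm
    refine Or.inl ?_
    obtain ⟨x, hx, rfl⟩ := hWφ hwW
    obtain ⟨i, x, rfl⟩ := List.exists_cons_of_ne_nil hx
    have hcons : φ (i :: x) = e (φ x) i :: φ x := rfl
    rw [hcons] at hsw hws hwW ⊢
    rcases List.suffix_cons_iff.1 hsw with h' | h'
    · exact (hws h').elim
    rcases eq_or_ne s (φ x) with hsx | hsx
    · exact Or.inr ⟨hwW, e (φ x) i, by rw [hsx]⟩
    · have hlt : s.length < (φ x).length :=
        lt_of_le_of_ne h'.length_le fun hl => hsx (h'.eq_of_length hl)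
      obtain ⟨q, hq⟩ := exists_cons_suffix h' hlt
      exact Or.inl ⟨⟨hwW, _, _, q, rfl, hq⟩, heG (φ x) i s h' k hka⟩

theorem exists_separates {N ι : Type*} [Countable ι] {Γ : ι → Set (Set N)}
    (hana : ∀ i, AnalyticFam (Γ i))
    (h : ∀ a b, a ≠ b → ∀ F F', Coding (Γ a) F → Coding (Γ b) F' → CSep F F' univ univ) :
    ∃ c : ℕ → Set N, Separates c Γ := by
  have hpair : ∀ p : ι × ι, ∃ C : Set (Set N), C.Countable ∧ (p.1 ≠ p.2 →
      ∀ x ∈ Γ p.1, ∀ y ∈ Γ p.2, ∃ d ∈ C, (x \ d).Finite ∧ (y ∩ d).Finite) := by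
    rintro ⟨a, b⟩
    by_cases hne : a ≠ b ∧ (Γ a).Nonempty ∧ (Γ b).Nonempty
    · obtain ⟨F, hF⟩ := exists_coding (hana a) hne.2.1
      obtain ⟨F', hF'⟩ := exists_coding (hana b) hne.2.2
      obtain ⟨C, hC, hsep⟩ := h a b hne.1 F F' hF hF'
      refine ⟨C, hC, fun _ x hx y hy => ?_⟩
      obtain ⟨g, rfl⟩ := hF.surj x hx
      obtain ⟨g', rfl⟩ := hF'.surj y hy
      exact hsep g (mem_univ _) g' (mem_univ _)
    · exact ⟨∅, countable_empty, fun hab x hx y hy => (hne ⟨hab, ⟨x, hx⟩, ⟨y, hy⟩⟩).elim⟩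
  choose C hC hsep using hpair
  obtain ⟨c, hc⟩ := ((countable_iUnion hC).insert ∅).exists_eq_range (insert_nonempty _ _)
  refine ⟨c, fun a b hab x hx y hy => ?_⟩
  obtain ⟨d, hd, hd'⟩ := hsep (a, b) hab x hx y hy
  have hmem : d ∈ range c := hc ▸ mem_insert_of_mem _ (mem_iUnion.2 ⟨_, hd⟩)
  obtain ⟨j, rfl⟩ := hmem
  exact ⟨j, hd'⟩

theorem exists_isolated_of_splitTree {N ι : Type*} [Finite ι] {Γ : ι → Set (Set N)}
    (hher : ∀ i, HerFam (Γ i)) (horth : ∀ i j, i ≠ j → OrthFam (Γ i) (Γ j))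
    (hana : ∀ i, AnalyticFam (Γ i)) {c : ℕ → Set N} (hc : Separates c Γ) {a b : ι} (hab : a ≠ b)
    {u : List ℕ → N} (hu : SplitTree (Γ a) (Γ b) u) : ∃ a b M, Isolated Γ a b M := by
  obtain ⟨v, hv, hom⟩ := hu.exists_homogeneous c
  by_contra hcon
  push Not at hcon
  obtain ⟨M, hM⟩ := hv.exists_isolated hher horth hc hab hom (by
    intro s k hk
    rcases (Γ k).eq_empty_or_nonempty with hne | hne
    · exact ⟨∅, by simp, by simp [hne]⟩
    obtain ⟨F, hF⟩ := exists_coding (hana k) hne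
    have hthin : Thin (fans F v s) := by
      by_contra hth
      obtain ⟨M, hM⟩ := exists_isolated_of_not_thin hher horth hc hk.symm hv hom hF hth
      exact hcon a k M hM
    obtain ⟨G, hG, hGP⟩ := hthin
    refine ⟨G, hG, fun y hy A h1 h2 h3 => ?_⟩
    obtain ⟨g, rfl⟩ := hF.surj y hy
    exact hGP (g, A) ⟨h1, h2, h3⟩)
  exact hcon a b M hM

theorem NonSepOn.left_nonempty {N : Type*} {A B : Set (Set N)} {M : Set N} (h : NonSepOn A B M) :
    A.Nonempty := by
  by_contra hA
  rw [Set.not_nonempty_iff_eq_empty] at hA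
  simpa using h ∅ univ (by simp [hA]) (by simp)

theorem NonSepOn.right_nonempty {N : Type*} {A B : Set (Set N)} {M : Set N}
    (h : NonSepOn A B M) : B.Nonempty := by
  by_contra hB
  rw [Set.not_nonempty_iff_eq_empty] at hB
  simpa using h univ ∅ (by simp) (by simp [hB])

theorem exists_isolated {N : Type*} [Countable N] {n : ℕ} {Γ : Fin n → Set (Set N)}
    (hgap : NGap Γ) (hana : ∀ i, AnalyticFam (Γ i)) {a b : Fin n} (hab : a ≠ b) :
    ∃ a b M, Isolated Γ a b M := by
  by_cases h : ∀ a b, a ≠ b → ∀ F F', Coding (Γ a) F → Coding (Γ b) F' → CSep F F' univ univ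
  · obtain ⟨c, hc⟩ := exists_separates hana h
    have hns := NGap.nonSepOn hgap hab
    obtain ⟨F, hF⟩ := exists_coding (hana a) hns.left_nonempty
    obtain ⟨F', hF'⟩ := exists_coding (hana b) hns.right_nonempty
    rcases exists_splitTree hF hF' hns with ⟨u, hu⟩ | ⟨u, hu⟩
    · exact exists_isolated_of_splitTree hgap.1.2.2 hgap.2 hana hc hab hu
    · exact exists_isolated_of_splitTree hgap.1.2.2 hgap.2 hana hc hab.symm hu
  · push Not at h
    obtain ⟨a, b, hab, F, F', hF, hF', h⟩ := h
    exact exists_isolated_of_not_cSep hgap hana hab hF hF' h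

end AnalyticGap

/-- every analytic n-gap (n ≥ 2) can be B-broken for some two-element
set B ⊆ {0,…,n−1}. -/
theorem statement_14 (n : ℕ) (hn : 2 ≤ n) (N : Type) [Countable N]
    (Γ : Fin n → Set (Set N)) (hgap : NGap Γ) (hana : ∀ i, AnalyticFam (Γ i)) :
    ∃ B : Set (Fin n), B.ncard = 2 ∧ BBroken Γ B := by
  obtain ⟨a, b, M, h⟩ := AnalyticGap.exists_isolated hgap hana
    (a := ⟨0, by omega⟩) (b := ⟨1, by omega⟩) (by simp)
  exact h.bBroken hgap
end

section
/- If 𝒜 is an uncountable analytic almost disjoint family of subsets of a countable set N, then there exist injective functions u : 2^{<ω} → N and a : 2^ω → 𝒜 such that (1) u(b_x) ⊆ a(x) for every x ∈ 2^ω, and (2) u(c) ∈ 𝒜^⊥ for every c ⊆ 2^{<ω} with c ∩ b_x finite for every x ∈ 2^ω. -/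
open Set

/-- The branch of the dyadic tree determined by x ∈ 2^ω: the set of its finite
initial segments. -/
def branch (x : ℕ → Bool) : Set (List Bool) :=
  Set.range fun k : ℕ => List.ofFn fun i : Fin k => x i

/-! ### Initial segments and cones in the dyadic tree -/

/-- The initial segment of length `n` of `x`. -/
def initSeg (x : ℕ → Bool) (n : ℕ) : List Bool := List.ofFn fun i : Fin n => x i

/-- The set of extensions of `w` in the dyadic tree. -/
def cone (w : List Bool) : Set (List Bool) := {t | w <+: t}

lemma initSeg_succ (x : ℕ → Bool) (n : ℕ) : initSeg x (n + 1) = initSeg x n ++ [x n] := by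
  simp [-List.ofFn_succ, initSeg, List.ofFn_succ_last]

@[simp] lemma initSeg_zero (x : ℕ → Bool) : initSeg x 0 = [] := by simp [initSeg]

@[simp] lemma length_initSeg (x : ℕ → Bool) (n : ℕ) : (initSeg x n).length = n := by
  simp [initSeg]

lemma mem_branch_iff {x : ℕ → Bool} {t : List Bool} :
    t ∈ branch x ↔ t = initSeg x t.length := by
  constructor
  · rintro ⟨k, rfl⟩
    simp [initSeg]
  · intro h
    exact ⟨t.length, h.symm⟩

lemma initSeg_mem_branch (x : ℕ → Bool) (n : ℕ) : initSeg x n ∈ branch x := ⟨n, rfl⟩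

lemma initSeg_prefix_of_le (x : ℕ → Bool) {m n : ℕ} (h : m ≤ n) :
    initSeg x m <+: initSeg x n := by
  induction n, h using Nat.le_induction with
  | base => exact List.prefix_rfl
  | succ n _ ih => exact ih.trans (by rw [initSeg_succ]; exact List.prefix_append _ _)

lemma prefix_or_prefix_of_mem_branch {x : ℕ → Bool} {s t : List Bool} (hs : s ∈ branch x)
    (ht : t ∈ branch x) : s <+: t ∨ t <+: s := by
  obtain ⟨m, rfl⟩ := hs
  obtain ⟨n, rfl⟩ := ht
  exact (le_total m n).imp (initSeg_prefix_of_le x) (initSeg_prefix_of_le x)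

lemma branch_infinite (x : ℕ → Bool) : (branch x).Infinite := by
  refine Set.infinite_range_of_injective fun m n h => ?_
  simpa using congrArg List.length h

lemma branch_injective : Function.Injective branch := by
  intro x y h
  funext n
  have h1 : initSeg x (n + 1) ∈ branch y := h ▸ initSeg_mem_branch x (n + 1)
  rw [mem_branch_iff, length_initSeg, initSeg_succ, initSeg_succ] at h1
  simpa using (List.append_inj' h1 rfl).2

lemma not_prefix_of_concat {w t : List Bool} {j : Bool} (h : w ++ [j] <+: t) :
    ¬ w ++ [!j] <+: t := by
  intro h'
  have := (List.prefix_of_prefix_length_le h h' (by simp)).eq_of_length (by simp)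
  cases j <;> simp at this

lemma prefix_splitting_node {p w a b : List Bool} {j : Bool} (hpa : p <+: a) (hpb : p <+: b)
    (hwa : w ++ [j] <+: a) (hwb : w ++ [!j] <+: b) : p <+: w := by
  rcases List.prefix_or_prefix_of_prefix hpa hwa with h | h
  · rcases List.prefix_concat_iff.1 h with rfl | h
    · exact absurd hwb (not_prefix_of_concat hpb)
    · exact h
  · exact absurd hwb (not_prefix_of_concat (h.trans hpb))

lemma not_comparable_of_concat {w a b : List Bool} {j : Bool} (hwa : w ++ [j] <+: a)
    (hwb : w ++ [!j] <+: b) : ¬ a <+: b :=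
  fun h => not_prefix_of_concat (hwa.trans h) hwb

/-- The side on which two incomparable nodes split does not depend on the splitting node. -/
lemma splitting_side_unique {w w' a b : List Bool} {i j : Bool} (hwa : w ++ [i] <+: a)
    (hwb : w ++ [!i] <+: b) (hwa' : w' ++ [j] <+: a) (hwb' : w' ++ [!j] <+: b) : j = i := by
  have h1 : w <+: w' := prefix_splitting_node ((List.prefix_append _ _).trans hwa)
    ((List.prefix_append _ _).trans hwb) hwa' hwb'
  have h2 : w' <+: w := prefix_splitting_node ((List.prefix_append _ _).trans hwa')
    ((List.prefix_append _ _).trans hwb') hwa hwb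
  obtain rfl := h1.eq_of_length_le h2.length_le
  have := (List.prefix_of_prefix_length_le hwa hwa' (by simp)).eq_of_length (by simp)
  simpa using this.symm

lemma exists_prefix_split {s t : List Bool} (h : ¬ s <+: t) (h' : ¬ t <+: s) :
    ∃ w j, w ++ [j] <+: s ∧ w ++ [!j] <+: t := by
  induction s generalizing t with
  | nil => exact absurd ⟨t, rfl⟩ h
  | cons a s ih =>
    cases t with
    | nil => exact absurd ⟨a :: s, rfl⟩ h'
    | cons b t =>
      by_cases hab : a = b
      · subst hab
        simp only [List.cons_prefix_cons, true_and] at h h'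
        obtain ⟨w, j, h1, h2⟩ := ih h h'
        exact ⟨a :: w, j, by simpa using h1, by simpa using h2⟩
      · refine ⟨[], a, by simp, ?_⟩
        cases a <;> cases b <;> simp_all

lemma exists_suffix_split {s t : List Bool} (h : ¬ s <:+ t) (h' : ¬ t <:+ s) :
    ∃ r j, j :: r <:+ s ∧ (!j) :: r <:+ t := by
  obtain ⟨w, j, h1, h2⟩ := exists_prefix_split (s := s.reverse) (t := t.reverse)
    (by simpa using h) (by simpa using h')
  refine ⟨w.reverse, j, ?_, ?_⟩
  · simpa using List.reverse_suffix.2 h1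
  · simpa using List.reverse_suffix.2 h2

/-- An infinite set of pairwise comparable nodes lies on a branch. -/
lemma exists_branch_of_chain {S : Set (List Bool)} (hS : S.Infinite)
    (hc : ∀ s ∈ S, ∀ t ∈ S, s <+: t ∨ t <+: s) : ∃ x, S ⊆ branch x := by
  have hlong : ∀ n, ∃ s ∈ S, n < s.length := by
    intro n
    by_contra! h
    exact hS ((List.finite_length_le Bool n).subset h)
  choose e heS hel using hlong
  refine ⟨fun n => (e n)[n]'(hel n), fun t ht => ?_⟩
  rw [mem_branch_iff]
  refine List.ext_getElem (by simp) fun n h1 h2 => ?_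
  simp only [initSeg, List.getElem_ofFn]
  rcases hc t ht (e n) (heS n) with h | h
  · exact h.getElem h1
  · exact (h.getElem (hel n)).symm

/-! ### Branching sets of nodes -/

/-- A set of nodes is branching if it is nonempty and each of its elements has two
incomparable extensions in the set. -/
def Branching (T : Set (List Bool)) : Prop :=
  T.Nonempty ∧ ∀ t ∈ T, ∃ w, t <+: w ∧ ∀ j, ∃ a ∈ T, w ++ [j] <+: a

/-- The sets `Q false`, `Q true` are branching subsets of `P` lying on the two sides of a node. -/
def SplitPair (P : Set (List Bool)) (Q : Bool → Set (List Bool)) : Prop :=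
  (∀ j, Branching (Q j) ∧ Q j ⊆ P) ∧ ∃ w, ∀ j, Q j ⊆ cone (w ++ [j])

lemma branching_univ : Branching univ :=
  ⟨⟨[], trivial⟩, fun t _ => ⟨t, List.prefix_rfl, fun j => ⟨t ++ [j], trivial, List.prefix_rfl⟩⟩⟩

lemma Branching.inter_cone {P : Set (List Bool)} (hP : Branching P) {w : List Bool}
    (h : (P ∩ cone w).Nonempty) : Branching (P ∩ cone w) := by
  refine ⟨h, fun t ht => ?_⟩
  obtain ⟨w', hw', ha⟩ := hP.2 t ht.1
  refine ⟨w', hw', fun j => ?_⟩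
  obtain ⟨a, haP, haw⟩ := ha j
  exact ⟨a, ⟨haP, ht.2.trans (hw'.trans ((List.prefix_append _ _).trans haw))⟩, haw⟩

lemma Branching.inter_cone_self {P : Set (List Bool)} (hP : Branching P) {a : List Bool}
    (h : a ∈ P) : Branching (P ∩ cone a) :=
  hP.inter_cone ⟨a, h, List.prefix_rfl⟩

lemma Branching.exists_splitPair {P : Set (List Bool)} (hP : Branching P) :
    ∃ Q, SplitPair P Q := by
  obtain ⟨t, ht⟩ := hP.1
  obtain ⟨w, -, ha⟩ := hP.2 t ht
  refine ⟨fun j => P ∩ cone (w ++ [j]), fun j => ⟨hP.inter_cone ?_, inter_subset_left⟩, w,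
    fun j => inter_subset_right⟩
  obtain ⟨a, haP, haw⟩ := ha j
  exact ⟨a, haP, haw⟩

lemma SplitPair.mono {P P' : Set (List Bool)} {Q : Bool → Set (List Bool)} (h : SplitPair P Q)
    (hP : P ⊆ P') : SplitPair P' Q :=
  ⟨fun j => ⟨(h.1 j).1, (h.1 j).2.trans hP⟩, h.2⟩

lemma SplitPair.shrink {P : Set (List Bool)} {Q Q' : Bool → Set (List Bool)} (h : SplitPair P Q)
    (hQ : ∀ j, Branching (Q' j) ∧ Q' j ⊆ Q j) : SplitPair P Q' :=
  ⟨fun j => ⟨(hQ j).1, (hQ j).2.trans (h.1 j).2⟩, h.2.imp fun _ hw j => (hQ j).2.trans (hw j)⟩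

lemma Branching.exists_length {P : Set (List Bool)} (hP : Branching P) (n : ℕ) :
    ∃ t ∈ P, n ≤ t.length := by
  induction n with
  | zero => exact hP.1.imp fun t ht => ⟨ht, Nat.zero_le _⟩
  | succ n ih =>
    obtain ⟨t, ht, hn⟩ := ih
    obtain ⟨w, htw, ha⟩ := hP.2 t ht
    obtain ⟨a, haP, haw⟩ := ha true
    have h1 := htw.length_le
    have h2 := haw.length_le
    simp only [List.length_append, List.length_singleton] at h2
    exact ⟨a, haP, by omega⟩

/-- A set either contains a branching subset of `A` or misses a cone of `A`. -/
lemma Branching.exists_cone_disjoint {A X : Set (List Bool)} (hA : Branching A)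
    (hX : ∀ A' ⊆ A, Branching A' → ¬ A' ⊆ X) : ∃ a ∈ A, ∀ t ∈ A ∩ cone a, t ∉ X := by
  by_contra! h
  refine hX (A ∩ X) inter_subset_left ⟨?_, fun t ht => ?_⟩ inter_subset_right
  · obtain ⟨a, ha⟩ := hA.1
    obtain ⟨t, ht, htX⟩ := h a ha
    exact ⟨t, ht.1, htX⟩
  · obtain ⟨w, htw, ha⟩ := hA.2 t ht.1
    refine ⟨w, htw, fun j => ?_⟩
    obtain ⟨a, haA, haw⟩ := ha j
    obtain ⟨b, hb, hbX⟩ := h a haA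
    exact ⟨b, ⟨hb.1, hbX⟩, haw.trans hb.2⟩

/-! ### Schemes of sets of nodes

Schemes are indexed by finite sequences written backwards: the children of `s` are
`false :: s` and `true :: s`. -/

/-- A tree of sets `P s` with distinguished nodes `v s ∈ P s`, such that the children of `s`
consist of extensions of `v s` and lie on the two sides of a node. -/
structure IsScheme (P : List Bool → Set (List Bool)) (v : List Bool → List Bool) : Prop where
  mem : ∀ s, v s ∈ P s
  sub : ∀ s j, P (j :: s) ⊆ P s ∩ cone (v s)
  split : ∀ s, ∃ w, ∀ j, P (j :: s) ⊆ cone (w ++ [j])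

lemma suffix_eq_or_cons {s r : List Bool} (h : s <:+ r) : r = s ∨ ∃ j, j :: s <:+ r := by
  obtain ⟨l, rfl⟩ := h
  rcases List.eq_nil_or_concat l with rfl | ⟨l', j, rfl⟩
  · exact Or.inl rfl
  · exact Or.inr ⟨j, l', by simp⟩

namespace IsScheme

variable {P : List Bool → Set (List Bool)} {v : List Bool → List Bool}

lemma anti (h : IsScheme P v) {s r : List Bool} (hs : s <:+ r) : P r ⊆ P s := by
  obtain ⟨l, rfl⟩ := hs
  induction l with
  | nil => exact Subset.rfl
  | cons a l ih => exact ((h.sub _ _).trans inter_subset_left).trans ih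

lemma mem_of_suffix (h : IsScheme P v) {s r : List Bool} (hs : s <:+ r) : v r ∈ P s :=
  h.anti hs (h.mem r)

lemma prefix_of_suffix (h : IsScheme P v) {s r : List Bool} (hs : s <:+ r) : v s <+: v r := by
  rcases suffix_eq_or_cons hs with rfl | ⟨j, hj⟩
  · exact List.prefix_rfl
  · exact (h.sub s j (h.mem_of_suffix hj)).2

lemma exists_side (h : IsScheme P v) {s t : List Bool} (h1 : ¬ s <:+ t) (h2 : ¬ t <:+ s) :
    ∃ r w j, j :: r <:+ s ∧ (!j) :: r <:+ t ∧ w ++ [j] <+: v s ∧ w ++ [!j] <+: v t := by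
  obtain ⟨r, j, hs, ht⟩ := exists_suffix_split h1 h2
  obtain ⟨w, hw⟩ := h.split r
  exact ⟨r, w, j, hs, ht, hw j (h.mem_of_suffix hs), hw _ (h.mem_of_suffix ht)⟩

lemma length_lt (h : IsScheme P v) (s : List Bool) (j : Bool) :
    (v s).length < (v (j :: s)).length := by
  obtain ⟨w, hw⟩ := h.split s
  have h1 := hw j (h.mem (j :: s))
  have h2 := hw (!j) (h.mem ((!j) :: s))
  have h3 := (prefix_splitting_node (h.sub s j (h.mem _)).2 (h.sub s (!j) (h.mem _)).2
    h1 h2).length_le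
  have h4 := List.IsPrefix.length_le h1
  simp only [List.length_append, List.length_singleton] at h4
  omega

lemma injective (h : IsScheme P v) : Function.Injective v := by
  have key : ∀ s t, s <:+ t → v s = v t → s = t := by
    intro s t hs he
    rcases suffix_eq_or_cons hs with rfl | ⟨j, hj⟩
    · rfl
    · have := (h.prefix_of_suffix hj).length_le
      have := h.length_lt s j
      rw [he] at this
      omega
  intro s t he
  by_cases h1 : s <:+ t
  · exact key s t h1 he
  by_cases h2 : t <:+ s
  · exact (key t s h2 he.symm).symm
  obtain ⟨r, w, j, -, -, h3, h4⟩ := h.exists_side h1 h2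
  exact absurd h4 (not_prefix_of_concat (he ▸ h3))

lemma suffix_of_prefix_apply (h : IsScheme P v) {s t : List Bool} (hv : v s <+: v t) :
    s <:+ t := by
  by_contra h1
  by_cases h2 : t <:+ s
  · have he := h.injective (hv.eq_of_length_le (h.prefix_of_suffix h2).length_le)
    exact h1 (he ▸ List.suffix_rfl)
  obtain ⟨r, w, j, -, -, h3, h4⟩ := h.exists_side h1 h2
  exact not_comparable_of_concat h3 h4 hv

lemma branching_range (h : IsScheme P v) : Branching (range v) := by
  refine ⟨range_nonempty v, ?_⟩
  rintro _ ⟨s, rfl⟩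
  obtain ⟨w, hw⟩ := h.split s
  refine ⟨w, prefix_splitting_node (j := true) (h.sub s true (h.mem _)).2
    (h.sub s false (h.mem _)).2 (hw true (h.mem _)) (hw false (h.mem _)), fun j => ?_⟩
  exact ⟨_, mem_range_self (j :: s), hw j (h.mem _)⟩

lemma range_subset (h : IsScheme P v) (n : ℕ) :
    range v ⊆ v '' {s | s.length ≤ n} ∪ ⋃ s ∈ {s : List Bool | s.length = n + 1}, P s := by
  rintro _ ⟨s, rfl⟩
  by_cases hs : s.length ≤ n
  · exact Or.inl ⟨s, hs, rfl⟩
  · refine Or.inr (mem_biUnion (x := s.drop (s.length - (n + 1))) ?_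
      (h.mem_of_suffix (List.drop_suffix _ _)))
    simp only [mem_ofPred_eq, List.length_drop]
    omega

end IsScheme

lemma exists_isScheme {T : Set (List Bool)} (hT : Branching T)
    (G : ℕ → (Bool → Set (List Bool)) → Prop)
    (hG : ∀ n, ∀ P ⊆ T, Branching P → ∃ Q, SplitPair P Q ∧ G n Q) :
    ∃ P v, IsScheme P v ∧ (∀ s, Branching (P s) ∧ P s ⊆ T) ∧
      ∀ s : List Bool, G s.length fun j => P (j :: s) := by
  let S := {P : Set (List Bool) // Branching P ∧ P ⊆ T}
  have hv : ∀ P : S, ∃ a, a ∈ P.1 := fun P => P.2.1.1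
  choose c hc using hv
  have hQ : ∀ (n : ℕ) (P : S), ∃ Q : Bool → S, SplitPair (P.1 ∩ cone (c P)) (fun j => (Q j).1) ∧
      G n (fun j => (Q j).1) := by
    intro n P
    obtain ⟨Q, hQ, hGQ⟩ := hG n (P.1 ∩ cone (c P)) (inter_subset_left.trans P.2.2)
      (P.2.1.inter_cone_self (hc P))
    exact ⟨fun j => ⟨Q j, (hQ.1 j).1, (hQ.1 j).2.trans (inter_subset_left.trans P.2.2)⟩, hQ, hGQ⟩
  choose Q hQ hGQ using hQ
  let R : List Bool → S := fun s => List.rec ⟨T, hT, Subset.rfl⟩ (fun j s P => Q s.length P j) s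
  refine ⟨fun s => (R s).1, fun s => c (R s), ⟨fun s => hc _, fun s j => ?_, fun s => ?_⟩,
    fun s => (R s).2, fun s => hGQ s.length (R s)⟩
  · exact ((hQ s.length (R s)).1 j).2
  · exact (hQ s.length (R s)).2

/-! ### Fusion arguments -/

/-- An ideal of sets containing all finite sets. -/
structure IsFreeIdeal {α : Type*} (I : Set (Set α)) : Prop where
  mono : ∀ ⦃X Y : Set α⦄, X ⊆ Y → Y ∈ I → X ∈ I
  union : ∀ ⦃X Y : Set α⦄, X ∈ I → Y ∈ I → X ∪ Y ∈ I
  finite : ∀ ⦃X : Set α⦄, X.Finite → X ∈ I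

lemma IsFreeIdeal.biUnion {α β : Type*} {I : Set (Set α)} (hI : IsFreeIdeal I) {S : Set β}
    (hS : S.Finite) {X : β → Set α} (hX : ∀ s ∈ S, X s ∈ I) : ⋃ s ∈ S, X s ∈ I := by
  induction S, hS using Set.Finite.induction_on with
  | empty => simpa using hI.finite Set.finite_empty
  | @insert a S _ _ ih =>
    rw [biUnion_insert]
    exact hI.union (hX a (mem_insert a S)) (ih fun s hs => hX s (mem_insert_of_mem a hs))

lemma IsScheme.range_mem {P : List Bool → Set (List Bool)} {v : List Bool → List Bool}
    (h : IsScheme P v) {I : Set (Set (List Bool))} (hI : IsFreeIdeal I) (n : ℕ)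
    (hn : ∀ s : List Bool, s.length = n + 1 → P s ∈ I) : range v ∈ I :=
  hI.mono (h.range_subset n) (hI.union
    (hI.finite ((List.finite_length_le Bool n).image v))
    (hI.biUnion (List.finite_length_eq Bool (n + 1)) hn))

/-- If each of countably many ideals is dense among the branching subsets of `T`, then some
branching subset of `T` belongs to all of them. -/
lemma exists_branching_mem_ideals {T : Set (List Bool)} (hT : Branching T)
    {I : ℕ → Set (Set (List Bool))} (hI : ∀ n, IsFreeIdeal (I n))
    (hd : ∀ n, ∀ P ⊆ T, Branching P → ∃ P' ⊆ P, Branching P' ∧ P' ∈ I n) :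
    ∃ T' ⊆ T, Branching T' ∧ ∀ n, T' ∈ I n := by
  obtain ⟨P, v, hPv, hP, hG⟩ := exists_isScheme hT (fun n Q => ∀ j, Q j ∈ I n) (by
    intro n P hPT hP
    obtain ⟨Q, hQ⟩ := hP.exists_splitPair
    choose Q' hQ' hb hQ'I using fun j => hd n (Q j) ((hQ.1 j).2.trans hPT) (hQ.1 j).1
    exact ⟨Q', hQ.shrink fun j => ⟨hb j, hQ' j⟩, hQ'I⟩)
  refine ⟨range v, ?_, hPv.branching_range, fun n => hPv.range_mem (hI n) n ?_⟩
  · rintro _ ⟨s, rfl⟩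
    exact (hP s).2 (hPv.mem s)
  · intro s hs
    cases s with
    | nil => simp at hs
    | cons j s =>
      have := hG s j
      simp only [List.length_cons, Nat.add_right_cancel_iff] at hs
      rwa [hs] at this

/-- If every branching subset of `T` contains a split pair whose side `!i` belongs to all the
ideals indexed by the side `i`, then some branching subset of `T` has this property at
every node. -/
lemma exists_branching_all_splits {T : Set (List Bool)} (hT : Branching T) (i : Bool)
    {K : List Bool → Set (Set (List Bool))} (hK : ∀ t, IsFreeIdeal (K t))
    (hd : ∀ P ⊆ T, Branching P → ∃ Q, SplitPair P Q ∧ ∀ t ∈ Q i, Q (!i) ∈ K t) :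
    ∃ T' ⊆ T, Branching T' ∧
      ∀ w, ∀ t ∈ T', w ++ [i] <+: t → T' ∩ cone (w ++ [!i]) ∈ K t := by
  obtain ⟨P, v, hPv, hP, hG⟩ := exists_isScheme hT (fun _ Q => ∀ t ∈ Q i, Q (!i) ∈ K t)
    fun _ => hd
  refine ⟨range v, ?_, hPv.branching_range, ?_⟩
  · rintro _ ⟨s, rfl⟩
    exact (hP s).2 (hPv.mem s)
  rintro w _ ⟨s, rfl⟩ hs
  have hfin : {r : List Bool | i :: r <:+ s}.Finite := by
    refine (List.finite_length_le Bool s.length).subset fun r hr => ?_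
    have := List.IsSuffix.length_le hr
    simp only [List.length_cons] at this
    exact (Nat.le_succ _).trans this
  refine (hK (v s)).mono ?_ ((hK (v s)).biUnion hfin (X := fun r => P ((!i) :: r))
    fun r hr => hG r (v s) (hPv.mem_of_suffix hr))
  rintro _ ⟨⟨t, rfl⟩, ht⟩
  have h1 : ¬ s <:+ t := fun h =>
    not_comparable_of_concat hs ht (hPv.prefix_of_suffix h)
  have h2 : ¬ t <:+ s := fun h =>
    not_prefix_of_concat hs (List.IsPrefix.trans ht (hPv.prefix_of_suffix h))
  obtain ⟨r, w', j, hjs, hjt, hw, hw'⟩ := hPv.exists_side h1 h2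
  obtain rfl := splitting_side_unique hs ht hw hw'
  exact mem_biUnion (x := r) hjs (hPv.mem_of_suffix hjt)

section Product

variable {A B : Set (List Bool)} {G : List Bool → Set (Set (List Bool))}

lemma exists_branching_forall_shrink
    (hd : ∀ A' ⊆ A, ∀ B' ⊆ B, Branching A' → Branching B' →
      ∃ t ∈ A', ∃ B'' ⊆ B', Branching B'' ∧ B'' ∈ G t)
    (L : Finset (List Bool)) {PB : List Bool → Set (List Bool)}
    (hPB : ∀ s, Branching (PB s) ∧ PB s ⊆ B) {A' : Set (List Bool)} (hA' : Branching A')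
    (hAA' : A' ⊆ A) :
    ∃ A'' ⊆ A', Branching A'' ∧
      ∀ t ∈ A'', ∀ s ∈ L, ∃ B' ⊆ PB s, Branching B' ∧ B' ∈ G t := by
  induction L using Finset.induction_on with
  | empty => exact ⟨A', Subset.rfl, hA', by simp⟩
  | insert a L _ ih =>
    obtain ⟨A₁, hA₁A', hA₁, h₁⟩ := ih
    obtain ⟨b, hb, hbX⟩ := hA₁.exists_cone_disjoint
      (X := {t | ¬ ∃ B' ⊆ PB a, Branching B' ∧ B' ∈ G t}) (by
        intro A₂ hA₂ hbr hsub
        obtain ⟨t, ht, B', hB'⟩ := hd A₂ (hA₂.trans (hA₁A'.trans hAA')) (PB a) (hPB a).2 hbr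
          (hPB a).1
        exact hsub ht ⟨B', hB'⟩)
    refine ⟨A₁ ∩ cone b, inter_subset_left.trans hA₁A', hA₁.inter_cone_self hb, fun t ht s hs => ?_⟩
    rcases Finset.mem_insert.1 hs with rfl | hs
    · exact not_not.1 (hbX t ht)
    · exact h₁ t ht.1 s hs

lemma exists_nodes_forall_shrink (hG : ∀ t, IsFreeIdeal (G t))
    (hd : ∀ A' ⊆ A, ∀ B' ⊆ B, Branching A' → Branching B' →
      ∃ t ∈ A', ∃ B'' ⊆ B', Branching B'' ∧ B'' ∈ G t)
    (L M : Finset (List Bool)) {PA PB : List Bool → Set (List Bool)}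
    (hPA : ∀ s, Branching (PA s) ∧ PA s ⊆ A) (hPB : ∀ s, Branching (PB s) ∧ PB s ⊆ B) :
    ∃ (v : List Bool → List Bool) (PB' : List Bool → Set (List Bool)),
      (∀ s, v s ∈ PA s) ∧ (∀ s, Branching (PB' s) ∧ PB' s ⊆ PB s) ∧
      ∀ s ∈ M, ∀ r ∈ L, PB' r ∈ G (v s) := by
  induction M using Finset.induction_on with
  | empty =>
    choose v hv using fun s => (hPA s).1.1
    exact ⟨v, PB, hv, fun s => ⟨(hPB s).1, Subset.rfl⟩, by simp⟩
  | insert a M ha ih =>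
    obtain ⟨v, PB₁, hv, hPB₁, h₁⟩ := ih
    obtain ⟨A₂, hA₂, hA₂b, h₂⟩ := exists_branching_forall_shrink hd L
      (fun s => ⟨(hPB₁ s).1, (hPB₁ s).2.trans (hPB s).2⟩) (hPA a).1 (hPA a).2
    obtain ⟨t, ht⟩ := hA₂b.1
    have h₃ : ∀ s, ∃ B' ⊆ PB₁ s, Branching B' ∧ (s ∈ L → B' ∈ G t) := by
      intro s
      by_cases hs : s ∈ L
      · obtain ⟨B', h1, h2, h3⟩ := h₂ t ht s hs
        exact ⟨B', h1, h2, fun _ => h3⟩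
      · exact ⟨PB₁ s, Subset.rfl, (hPB₁ s).1, fun h => absurd h hs⟩
    choose PB₂ hs hb hm using h₃
    refine ⟨Function.update v a t, PB₂, fun s => ?_,
      fun s => ⟨hb s, (hs s).trans (hPB₁ s).2⟩, fun s hsM r hr => ?_⟩
    · by_cases h : s = a
      · subst h
        simpa using hA₂ ht
      · simpa [h] using hv s
    · by_cases h : s = a
      · subst h
        simpa using hm r hr
      · rw [Function.update_of_ne h]
        exact (hG _).mono (hs r) (h₁ s (Finset.mem_of_mem_insert_of_ne hsM h) r hr)

/-- A Halpern–Läuchli type theorem: if every pair of branching subsets `A' ⊆ A`, `B' ⊆ B` admits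
`t ∈ A'` and a branching subset of `B'` in the ideal `G t`, then there are branching `A' ⊆ A`
and `B' ⊆ B` such that `B'` belongs to `G t` for all `t ∈ A'`. -/
lemma exists_branching_prod (hA : Branching A) (hB : Branching B) (hG : ∀ t, IsFreeIdeal (G t))
    (hd : ∀ A' ⊆ A, ∀ B' ⊆ B, Branching A' → Branching B' →
      ∃ t ∈ A', ∃ B'' ⊆ B', Branching B'' ∧ B'' ∈ G t) :
    ∃ A' ⊆ A, ∃ B' ⊆ B, Branching A' ∧ Branching B' ∧ ∀ t ∈ A', B' ∈ G t := by
  classical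
  let SA := {P : Set (List Bool) // Branching P ∧ P ⊆ A}
  let SB := {P : Set (List Bool) // Branching P ∧ P ⊆ B}
  have step : ∀ (n : ℕ) (p : (List Bool → SA) × (List Bool → SB)),
      ∃ (q : (List Bool → SA) × (List Bool → SB)) (v b : List Bool → List Bool),
        (∀ s, v s ∈ (p.1 s).1) ∧ (∀ s, b s ∈ (p.2 s).1) ∧
        (∀ s, SplitPair ((p.1 s).1 ∩ cone (v s)) fun j => (q.1 (j :: s)).1) ∧
        (∀ s, SplitPair ((p.2 s).1 ∩ cone (b s)) fun j => (q.2 (j :: s)).1) ∧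
        ∀ s : List Bool, s.length = n → ∀ r : List Bool, r.length = n → ∀ j,
          (q.2 (j :: r)).1 ∈ G (v s) := by
    rintro n ⟨PA, PB⟩
    let L := (List.finite_length_eq Bool n).toFinset
    obtain ⟨v, PB', hv, hPB', h⟩ := exists_nodes_forall_shrink hG hd L L
      (fun s => (PA s).2) (fun s => (PB s).2)
    choose QA hQA using fun s => ((PA s).2.1.inter_cone_self (hv s)).exists_splitPair
    choose b hb using fun s => (hPB' s).1.1
    choose QB hQB using fun s => ((hPB' s).1.inter_cone_self (hb s)).exists_splitPair
    refine ⟨(fun s => match s with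
        | [] => ⟨A, hA, Subset.rfl⟩
        | j :: s => ⟨QA s j, ((hQA s).1 j).1,
            ((hQA s).1 j).2.trans (inter_subset_left.trans (PA s).2.2)⟩,
      fun s => match s with
        | [] => ⟨B, hB, Subset.rfl⟩
        | j :: s => ⟨QB s j, ((hQB s).1 j).1,
            ((hQB s).1 j).2.trans (inter_subset_left.trans ((hPB' s).2.trans (PB s).2.2))⟩),
      v, b, hv, fun s => (hPB' s).2 (hb s), hQA,
      fun s => (hQB s).mono (inter_subset_inter_left _ (hPB' s).2), fun s hs r hr j => ?_⟩
    exact (hG _).mono (((hQB r).1 j).2.trans inter_subset_left)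
      (h s (by simpa [L] using hs) r (by simpa [L] using hr))
  choose q v b hv hb hqv hqb hq using step
  let p : ℕ → (List Bool → SA) × (List Bool → SB) := fun n =>
    Nat.rec (fun _ => ⟨A, hA, Subset.rfl⟩, fun _ => ⟨B, hB, Subset.rfl⟩) (fun n p => q n p) n
  have hA' : IsScheme (fun s => ((p s.length).1 s).1) (fun s => v s.length (p s.length) s) :=
    ⟨fun s => hv _ _ _, fun s j => ((hqv s.length (p s.length) s).1 j).2,
      fun s => (hqv s.length (p s.length) s).2⟩
  have hB' : IsScheme (fun s => ((p s.length).2 s).1) (fun s => b s.length (p s.length) s) :=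
    ⟨fun s => hb _ _ _, fun s j => ((hqb s.length (p s.length) s).1 j).2,
      fun s => (hqb s.length (p s.length) s).2⟩
  refine ⟨_, ?_, _, ?_, hA'.branching_range, hB'.branching_range, ?_⟩
  · rintro _ ⟨s, rfl⟩
    exact ((p s.length).1 s).2.2 (hv _ _ _)
  · rintro _ ⟨s, rfl⟩
    exact ((p s.length).2 s).2.2 (hb _ _ _)
  · rintro _ ⟨s, rfl⟩
    refine hB'.range_mem (hG _) s.length fun r hr => ?_
    cases r with
    | nil => simp at hr
    | cons j r =>
      simp only [List.length_cons, Nat.add_right_cancel_iff] at hr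
      have := hq s.length (p s.length) s rfl r hr j
      simpa only [List.length_cons, hr] using this

end Product

/-! ### Nested sequences in the Baire space -/

lemma exists_limit_of_nested {V : ℕ → Set (ℕ → ℕ)} (hV : Antitone V)
    (hne : ∀ n, (V n).Nonempty)
    (hagree : ∀ n, ∀ z ∈ V n, ∀ z' ∈ V n, ∀ k < n, z k = z' k) :
    ∃ z, ∀ C : Set (ℕ → ℕ), IsClosed C → (∃ n, V n ⊆ C) → z ∈ C := by
  choose y hy using hne
  refine ⟨fun k => y (k + 1) k, fun C hC => ?_⟩
  rintro ⟨n, hn⟩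
  refine hC.mem_of_tendsto (f := y) (b := Filter.atTop) ?_ ?_
  · rw [tendsto_pi_nhds]
    intro k
    refine tendsto_const_nhds.congr' ?_
    filter_upwards [Filter.eventually_ge_atTop (k + 1)] with m hm
    exact hagree (k + 1) _ (hy _) _ (hV hm (hy m)) k (Nat.lt_succ_self k)
  · filter_upwards [Filter.eventually_ge_atTop n] with m hm
    exact hn (hV hm (hy m))

/-! ### Sets without combs on a given side -/

/-- A set of nodes is tame on the side `i` if for every `x` it meets only finitely many of
the cones leaving `x` on the side `i`. -/
def Tame (i : Bool) (Y : Set (List Bool)) : Prop :=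
  ∀ x : ℕ → Bool, {n | x n = !i ∧ ∃ t ∈ Y, initSeg x n ++ [i] <+: t}.Finite

lemma isFreeIdeal_tame (i : Bool) : IsFreeIdeal {Y | Tame i Y} where
  mono X Y h hY x := (hY x).subset fun n hn => ⟨hn.1, hn.2.imp fun t ht => ⟨h ht.1, ht.2⟩⟩
  union X Y hX hY x := by
    refine ((hX x).union (hY x)).subset ?_
    rintro n ⟨hn, t, ht | ht, h⟩
    exacts [Or.inl ⟨hn, t, ht, h⟩, Or.inr ⟨hn, t, ht, h⟩]
  finite X hX x := by
    refine (hX.biUnion fun t _ => Set.finite_lt_nat t.length).subset ?_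
    rintro n ⟨-, t, ht, h⟩
    refine mem_biUnion ht ?_
    have := h.length_le
    simp only [List.length_append, length_initSeg, List.length_singleton] at this
    exact this

lemma tame_of_splits {i : Bool} {Y : Set (List Bool)}
    (h : ∀ w, ∀ t ∈ Y, w ++ [i] <+: t → Tame i (Y ∩ cone (w ++ [!i]))) : Tame i Y := by
  intro x
  by_cases hx : ∃ n, x n = !i ∧ ∃ t ∈ Y, initSeg x n ++ [i] <+: t
  · obtain ⟨n, hn, t, ht, hnt⟩ := hx
    refine ((Set.finite_le_nat n).union (h _ t ht hnt x)).subset ?_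
    rintro m ⟨hm, t', ht', hmt⟩
    by_cases hmn : m ≤ n
    · exact Or.inl hmn
    · refine Or.inr ⟨hm, t', ⟨ht', ?_⟩, hmt⟩
      rw [← hn, ← initSeg_succ]
      exact ((initSeg_prefix_of_le x (by omega)).trans (List.prefix_append _ _)).trans hmt
  · push Not at hx
    convert Set.finite_empty (α := ℕ) using 1
    ext n
    simp only [mem_ofPred_eq, mem_empty_iff_false, iff_false]
    rintro ⟨hn, t, ht, h⟩
    exact hx n hn t ht h

lemma tame_branch (i : Bool) (x : ℕ → Bool) : Tame i (branch x) := by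
  refine tame_of_splits fun w t ht hw => (isFreeIdeal_tame i).finite ?_
  convert Set.finite_empty (α := List Bool) using 1
  ext t'
  simp only [mem_inter_iff, mem_empty_iff_false, iff_false, not_and]
  intro ht' hw'
  rcases prefix_or_prefix_of_mem_branch ht ht' with h | h
  · exact not_comparable_of_concat hw hw' h
  · exact not_prefix_of_concat hw (List.IsPrefix.trans hw' h)

/-- A set which is tame on both sides and meets every branch in a finite set is finite. -/
lemma finite_of_tame {Y : Set (List Bool)} (hY : ∀ i, Tame i Y)
    (hb : ∀ x, (Y ∩ branch x).Finite) : Y.Finite := by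
  by_contra hinf
  have step : ∀ w : List Bool, (Y ∩ cone w).Infinite → ∃ j, (Y ∩ cone (w ++ [j])).Infinite := by
    intro w hw
    by_contra! h
    refine hw (((Set.finite_singleton w).union ((h false).union (h true))).subset ?_)
    rintro t ⟨htY, l, rfl⟩
    rcases l with _ | ⟨j, l⟩
    · exact Or.inl (by simp)
    · cases j
      · exact Or.inr (Or.inl ⟨htY, l, by simp⟩)
      · exact Or.inr (Or.inr ⟨htY, l, by simp⟩)
  have hroot : (Y ∩ cone []).Infinite := by
    convert (show Y.Infinite from hinf) using 1
    exact inter_eq_left.2 fun t _ => ⟨t, rfl⟩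
  choose! nxt hnxt using step
  let seg : ℕ → List Bool := fun n => Nat.rec [] (fun _ w => w ++ [nxt w]) n
  let x : ℕ → Bool := fun n => nxt (seg n)
  have hseg : ∀ n, initSeg x n = seg n := by
    intro n
    induction n with
    | zero => simp [seg]
    | succ n ih => rw [initSeg_succ, ih]
  have hx : ∀ n, (Y ∩ cone (initSeg x n)).Infinite := by
    intro n
    induction n with
    | zero => simpa using hroot
    | succ n ih =>
      rw [initSeg_succ]
      have h := hnxt _ ih
      rw [hseg] at h ⊢
      exact h
  obtain ⟨n, hn⟩ : ∃ n, ∀ m ≥ n, ∀ t ∈ Y, ¬ initSeg x m ++ [!x m] <+: t := by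
    obtain ⟨n, hn⟩ := ((hY true x).union (hY false x)).bddAbove
    refine ⟨n + 1, fun m hm t ht h => ?_⟩
    have : m ≤ n := by
      refine hn ?_
      cases hxm : x m <;> rw [hxm] at h
      · exact Or.inl ⟨by simp [hxm], t, ht, h⟩
      · exact Or.inr ⟨by simp [hxm], t, ht, h⟩
    omega
  refine hx n ((hb x).subset fun t ht => ⟨ht.1, ?_⟩)
  by_contra htx
  rw [mem_branch_iff] at htx
  obtain ⟨w, j, h1, h2⟩ := exists_prefix_split (s := initSeg x t.length) (t := t)
    (fun h => htx (h.eq_of_length (by simp)).symm) (fun h => htx (h.eq_of_length (by simp)))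
  have hlen := h1.length_le
  simp only [List.length_append, length_initSeg, List.length_singleton] at hlen
  have h3 : w ++ [j] = initSeg x (w.length + 1) :=
    (List.prefix_of_prefix_length_le h1 (initSeg_prefix_of_le x hlen) (by simp)).eq_of_length
      (by simp)
  rw [initSeg_succ] at h3
  obtain ⟨hw, hj⟩ := List.append_inj' h3 rfl
  obtain rfl : j = x w.length := by simpa using hj
  have hwn : n ≤ w.length := by
    by_contra hlt
    have h4 : initSeg x (w.length + 1) <+: t :=
      (initSeg_prefix_of_le x (by omega)).trans ht.2
    rw [initSeg_succ, ← h3] at h4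
    exact not_prefix_of_concat h4 h2
  exact hn _ hwn t ht.1 (hw ▸ h2)

/-! ### Making all traces tame -/

section Traces

variable {Z : Type*} (i : Bool) (f : Z → Set (List Bool))

/-- All the sets `f z`, for `z ∈ V`, have tame traces on `X`. -/
def TameOn (V : Set Z) (X : Set (List Bool)) : Prop := ∀ z ∈ V, Tame i (f z ∩ X)

/-- No branching subset of `T` has tame traces of all the sets `f z`, for `z ∈ V`. -/
def NowhereTame (V : Set Z) (T : Set (List Bool)) : Prop :=
  ∀ P ⊆ T, Branching P → ¬ TameOn i f V P

variable {i f}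

lemma isFreeIdeal_tameOn (V : Set Z) : IsFreeIdeal {X | TameOn i f V X} where
  mono X Y h hY z hz := (isFreeIdeal_tame i).mono (inter_subset_inter_right _ h) (hY z hz)
  union X Y hX hY z hz := by
    rw [inter_union_distrib_left]
    exact (isFreeIdeal_tame i).union (hX z hz) (hY z hz)
  finite X hX z hz := (isFreeIdeal_tame i).finite (hX.subset inter_subset_right)

lemma NowhereTame.mono {V : Set Z} {T T' : Set (List Bool)} (h : NowhereTame i f V T)
    (hT : T' ⊆ T) : NowhereTame i f V T' :=
  fun P hP => h P (hP.trans hT)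

lemma NowhereTame.exists_piece {V : Set Z} {T : Set (List Bool)} (hT : Branching T)
    (h : NowhereTame i f V T) {W : ℕ → Set Z} (hW : V ⊆ ⋃ n, W n) :
    ∃ n, ∃ T' ⊆ T, Branching T' ∧ NowhereTame i f (V ∩ W n) T' := by
  by_contra! hcon
  obtain ⟨T', hT'T, hT', hT'W⟩ := exists_branching_mem_ideals hT
    (fun n => isFreeIdeal_tameOn (i := i) (f := f) (V ∩ W n)) (by
      intro n P hPT hP
      have := hcon n P hPT hP
      simpa only [NowhereTame, mem_ofPred_eq, not_forall, not_not, exists_prop] using this)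
  refine h T' hT'T hT' fun z hz => ?_
  obtain ⟨n, hn⟩ := mem_iUnion.1 (hW hz)
  exact hT'W n z ⟨hz, hn⟩

/-- Below a set on which `f` is nowhere tame there is a branching set whose split pairs `Q`
all have a node `t ∈ Q i` such that the sets containing `t` are not all tame on `Q (!i)`. -/
lemma NowhereTame.exists_forall_splitPair {V : Set Z} {T : Set (List Bool)} (hT : Branching T)
    (h : NowhereTame i f V T) : ∃ T' ⊆ T, Branching T' ∧ ∀ Q, SplitPair T' Q →
      ¬ ∀ t ∈ Q i, TameOn i f (V ∩ {z | t ∈ f z}) (Q (!i)) := by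
  by_contra! hcon
  obtain ⟨T', hT'T, hT', hsplit⟩ := exists_branching_all_splits hT i
    (fun t => isFreeIdeal_tameOn (i := i) (f := f) (V ∩ {z | t ∈ f z})) hcon
  refine h T' hT'T hT' fun z hz => tame_of_splits fun w t ht hw => ?_
  have := hsplit w t ht.2 hw z ⟨hz, ht.1⟩
  rwa [← inter_assoc] at this

lemma exists_nowhereTame_of_forall_splitPair {V : Set Z} {T : Set (List Bool)}
    {Q : Bool → Set (List Bool)} (hQ : SplitPair T Q)
    (hT : ∀ Q, SplitPair T Q → ¬ ∀ t ∈ Q i, TameOn i f (V ∩ {z | t ∈ f z}) (Q (!i)))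
    {A B : Set (List Bool)} (hA : A ⊆ Q i) (hB : B ⊆ Q (!i)) (hAb : Branching A)
    (hBb : Branching B) :
    ∃ t ∈ A, ∃ B' ⊆ B, Branching B' ∧ NowhereTame i f (V ∩ {z | t ∈ f z}) B' := by
  by_contra! hcon
  obtain ⟨t₀, ht₀⟩ := hAb.1
  have : Nonempty A := ⟨⟨t₀, ht₀⟩⟩
  obtain ⟨e, he⟩ := exists_surjective_nat A
  obtain ⟨B', hB'B, hB', hB'W⟩ := exists_branching_mem_ideals hBb
    (fun n => isFreeIdeal_tameOn (i := i) (f := f) (V ∩ {z | (e n).1 ∈ f z})) (by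
      intro n P hPT hP
      have := hcon (e n) (e n).2 P hPT hP
      simpa only [NowhereTame, mem_ofPred_eq, not_forall, not_not, exists_prop] using this)
  refine hT (fun j => if j = i then A else B') (hQ.shrink fun j => ?_) fun t ht => ?_
  · by_cases hj : j = i
    · subst hj
      simpa using ⟨hAb, hA⟩
    · obtain rfl : j = !i := by cases i <;> cases j <;> simp_all
      simpa using ⟨hB', hB'B.trans hB⟩
  · obtain ⟨n, hn⟩ := he ⟨t, by simpa using ht⟩
    have := hB'W n
    rw [hn] at this
    simpa using this

/-- Two incompatible nowhere tame pieces can be found. -/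
lemma NowhereTame.exists_split (hchain : ∀ z x, (f z ∩ branch x).Infinite → f z = branch x)
    {V : Set Z} {T : Set (List Bool)} (hT : Branching T) (h : NowhereTame i f V T) :
    ∃ t, ∃ T' ⊆ T, Branching T' ∧ NowhereTame i f (V ∩ {z | t ∈ f z}) T' ∧
      NowhereTame i f (V ∩ {z | t ∉ f z}) T' := by
  by_contra! hcon
  obtain ⟨T₁, hT₁T, hT₁, hsp⟩ := h.exists_forall_splitPair hT
  obtain ⟨Q, hQ⟩ := hT₁.exists_splitPair
  obtain ⟨A, hA, B, hB, hAb, hBb, hAB⟩ := exists_branching_prod (hQ.1 i).1 (hQ.1 (!i)).1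
    (fun t => isFreeIdeal_tameOn (i := i) (f := f) (V ∩ {z | t ∉ f z})) (by
      intro A hA B hB hAb hBb
      obtain ⟨t, ht, B', hB'B, hB', hn⟩ :=
        exists_nowhereTame_of_forall_splitPair hQ hsp hA hB hAb hBb
      have := hcon t B' (hB'B.trans (hB.trans ((hQ.1 _).2.trans hT₁T))) hB' hn
      simp only [NowhereTame, not_forall, not_not] at this
      obtain ⟨P, hP, hPb, hPt⟩ := this
      exact ⟨t, ht, P, hP.trans hB'B, hPb, hPt⟩)
  have hBV := h B (hB.trans ((hQ.1 _).2.trans hT₁T)) hBb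
  simp only [TameOn, not_forall] at hBV
  obtain ⟨z, hz, hzB⟩ := hBV
  have hAz : A ⊆ f z := by
    intro t ht
    by_contra htz
    exact hzB (hAB t ht z ⟨hz, htz⟩)
  obtain ⟨P, v, hPv, hP, -⟩ := exists_isScheme hAb (fun _ _ => True)
    (fun _ P _ hPb => hPb.exists_splitPair.imp fun _ h => ⟨h, trivial⟩)
  have hinj : Function.Injective fun n : ℕ => v (List.replicate n true) := by
    intro m n hmn
    simpa using congrArg List.length (hPv.injective hmn)
  obtain ⟨x, hx⟩ := exists_branch_of_chain (Set.infinite_range_of_injective hinj) (by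
    rintro _ ⟨m, rfl⟩ _ ⟨n, rfl⟩
    exact (le_total m n).imp
      (fun hmn => hPv.prefix_of_suffix (by simp [List.suffix_replicate_iff, hmn]))
      (fun hmn => hPv.prefix_of_suffix (by simp [List.suffix_replicate_iff, hmn])))
  have hzx := hchain z x ((Set.infinite_range_of_injective hinj).mono
    (subset_inter (by rintro _ ⟨n, rfl⟩; exact hAz ((hP _).2 (hPv.mem _))) hx))
  exact hzB ((isFreeIdeal_tame i).mono inter_subset_left (hzx ▸ tame_branch i x))

/-- Two nowhere tame pieces stay nowhere tame after requiring that a common, arbitrarily long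
node belongs to the sets. -/
lemma NowhereTame.exists_common {V V' : Set Z} {T : Set (List Bool)} (hT : Branching T)
    (h : NowhereTame i f V T) (h' : NowhereTame i f V' T) (n : ℕ) :
    ∃ t, n ≤ t.length ∧ ∃ T' ⊆ T, Branching T' ∧ NowhereTame i f (V ∩ {z | t ∈ f z}) T' ∧
      NowhereTame i f (V' ∩ {z | t ∈ f z}) T' := by
  by_contra! hcon
  obtain ⟨T₁, hT₁T, hT₁, hsp₁⟩ := h.exists_forall_splitPair hT
  obtain ⟨T₂, hT₂T₁, hT₂, hsp₂⟩ := (h'.mono hT₁T).exists_forall_splitPair hT₁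
  obtain ⟨Q, hQ⟩ := hT₂.exists_splitPair
  obtain ⟨a, ha, han⟩ := (hQ.1 i).1.exists_length n
  obtain ⟨A, hA, B, hB, hAb, hBb, hAB⟩ := exists_branching_prod
    ((hQ.1 i).1.inter_cone_self ha) (hQ.1 (!i)).1
    (fun t => isFreeIdeal_tameOn (i := i) (f := f) (V' ∩ {z | t ∈ f z})) (by
      intro A hA B hB hAb hBb
      obtain ⟨t, ht, B', hB'B, hB', hn⟩ :=
        exists_nowhereTame_of_forall_splitPair (hQ.mono hT₂T₁) hsp₁
          (hA.trans inter_subset_left) hB hAb hBb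
      have := hcon t (han.trans (List.IsPrefix.length_le (hA ht).2)) B'
        (hB'B.trans (hB.trans ((hQ.1 _).2.trans (hT₂T₁.trans hT₁T)))) hB' hn
      simp only [NowhereTame, not_forall, not_not] at this
      obtain ⟨P, hP, hPb, hPt⟩ := this
      exact ⟨t, ht, P, hP.trans hB'B, hPb, hPt⟩)
  obtain ⟨t, ht, B', hB'B, hB', hn⟩ := exists_nowhereTame_of_forall_splitPair hQ hsp₂
    (hA.trans inter_subset_left) hB hAb hBb
  exact hn B' Subset.rfl hB'
    ((isFreeIdeal_tameOn (i := i) (f := f) (V' ∩ {z | t ∈ f z})).mono hB'B (hAB t ht))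

end Traces

lemma NowhereTame.nonempty {Z : Type*} {i : Bool} {f : Z → Set (List Bool)} {V : Set Z}
    {T : Set (List Bool)} (hT : Branching T) (h : NowhereTame i f V T) : V.Nonempty := by
  by_contra hV
  rw [Set.not_nonempty_iff_eq_empty] at hV
  exact h T Subset.rfl hT (by simp [TameOn, hV])

/-- A nowhere tame piece can be shrunk to one on which the first `n` values are fixed. -/
lemma NowhereTame.exists_agree {i : Bool} {f : (ℕ → ℕ) → Set (List Bool)} {V : Set (ℕ → ℕ)}
    {T : Set (List Bool)} (hT : Branching T) (h : NowhereTame i f V T) (n : ℕ) :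
    ∃ V' ⊆ V, ∃ T' ⊆ T, Branching T' ∧ NowhereTame i f V' T' ∧
      ∀ z ∈ V', ∀ z' ∈ V', ∀ k < n, z k = z' k := by
  obtain ⟨e, he⟩ := exists_surjective_nat (Fin n → ℕ)
  obtain ⟨m, T', hT'T, hT', hm⟩ := h.exists_piece hT
    (W := fun m => {z | (fun k : Fin n => z k) = e m}) (by
      intro z _
      obtain ⟨m, hm⟩ := he fun k : Fin n => z k
      exact mem_iUnion.2 ⟨m, hm.symm⟩)
  refine ⟨_, inter_subset_left, T', hT'T, hT', hm, fun z hz z' hz' k hk => ?_⟩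
  exact congrFun (hz.2.trans hz'.2.symm) ⟨k, hk⟩

/-- For a continuously parametrized almost disjoint family of sets of nodes, whose members
having an infinite trace on a branch are branches, every branching set has a branching subset
on which all traces are tame. -/
lemma exists_branching_tameOn {f : (ℕ → ℕ) → Set (List Bool)} (i : Bool)
    (hf : ∀ t, IsClopen {z | t ∈ f z})
    (had : ∀ z z', f z ≠ f z' → (f z ∩ f z').Finite)
    (hchain : ∀ z x, (f z ∩ branch x).Infinite → f z = branch x)
    {T : Set (List Bool)} (hT : Branching T) :
    ∃ T' ⊆ T, Branching T' ∧ ∀ z, Tame i (f z ∩ T') := by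
  by_contra! hcon
  have h : NowhereTame i f univ T := by
    intro P hP hPb hPt
    obtain ⟨z, hz⟩ := hcon P hP hPb
    exact hz (hPt z trivial)
  obtain ⟨t₀, T₀, -, hT₀, h₀, h₀'⟩ := h.exists_split hchain hT
  let S := {p : Set (ℕ → ℕ) × Set (ℕ → ℕ) × Set (List Bool) //
    Branching p.2.2 ∧ NowhereTame i f p.1 p.2.2 ∧ NowhereTame i f p.2.1 p.2.2}
  have step : ∀ (n : ℕ) (p : S), ∃ (q : S) (t : List Bool), n ≤ t.length ∧
      q.1.1 ⊆ p.1.1 ∩ {z | t ∈ f z} ∧ q.1.2.1 ⊆ p.1.2.1 ∩ {z | t ∈ f z} ∧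
      (∀ z ∈ q.1.1, ∀ z' ∈ q.1.1, ∀ k < n + 1, z k = z' k) ∧
      (∀ z ∈ q.1.2.1, ∀ z' ∈ q.1.2.1, ∀ k < n + 1, z k = z' k) := by
    rintro n ⟨⟨V, V', T⟩, hT, hV, hV'⟩
    obtain ⟨t, htn, T₁, -, hT₁, h₁, h₁'⟩ := hV.exists_common hT hV' n
    obtain ⟨W, hW, T₂, hT₂T₁, hT₂, h₂, ha⟩ := h₁.exists_agree hT₁ (n + 1)
    obtain ⟨W', hW', T₃, hT₃T₂, hT₃, h₃, ha'⟩ := (h₁'.mono hT₂T₁).exists_agree hT₂ (n + 1)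
    exact ⟨⟨(W, W', T₃), hT₃, h₂.mono hT₃T₂, h₃⟩, t, htn, hW, hW', ha, ha'⟩
  choose q t htn hq hq' ha ha' using step
  let p : ℕ → S := fun n => Nat.rec ⟨(_, _, T₀), hT₀, h₀, h₀'⟩ (fun n p => q n p) n
  have hp : Antitone fun n => (p n).1.1 :=
    antitone_nat_of_succ_le fun n => (hq n (p n)).trans inter_subset_left
  have hp' : Antitone fun n => (p n).1.2.1 :=
    antitone_nat_of_succ_le fun n => (hq' n (p n)).trans inter_subset_left
  obtain ⟨z, hz⟩ := exists_limit_of_nested hp (fun n => (p n).2.2.1.nonempty (p n).2.1) (by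
    rintro (_ | n)
    · simp
    · exact ha n (p n))
  obtain ⟨z', hz'⟩ := exists_limit_of_nested hp' (fun n => (p n).2.2.2.nonempty (p n).2.1) (by
    rintro (_ | n)
    · simp
    · exact ha' n (p n))
  have h1 : t₀ ∈ f z := hz _ (hf t₀).1 ⟨0, inter_subset_right⟩
  have h2 : t₀ ∉ f z' := hz' _ (hf t₀).compl.1 ⟨0, inter_subset_right⟩
  refine Set.Infinite.mono (s := range fun n => t n (p n)) ?_ ?_
    (had z z' fun he => h2 (he ▸ h1))
  · rintro _ ⟨n, rfl⟩
    exact ⟨hz _ (hf _).1 ⟨n + 1, (hq n (p n)).trans inter_subset_right⟩,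
      hz' _ (hf _).1 ⟨n + 1, (hq' n (p n)).trans inter_subset_right⟩⟩
  · intro hfin
    obtain ⟨m, hm⟩ := (hfin.image List.length).bddAbove
    have := hm (mem_image_of_mem _ (mem_range_self (m + 1)))
    have := htn (m + 1) (p (m + 1))
    omega

/-! ### A perfect subfamily -/

section Perfect

variable {N : Type*} {F : (ℕ → ℕ) → Set N}

lemma exists_mem_forall_uncountable_image {V : Set (ℕ → ℕ)} (hV : ¬ (F '' V).Countable)
    {D : Set (Set N)} (hD : D.Finite) :
    ∃ z ∈ V, F z ∉ D ∧ ∀ W, IsOpen W → z ∈ W → ¬ (F '' W).Countable := by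
  by_contra! h
  have hB := TopologicalSpace.isBasis_countableBasis (ℕ → ℕ)
  refine hV ((hD.countable.union (Set.Countable.biUnion
    (s := {W ∈ TopologicalSpace.countableBasis (ℕ → ℕ) | (F '' W).Countable})
    (t := fun W _ => F '' W)
    ((TopologicalSpace.countable_countableBasis _).mono (sep_subset _ _))
    fun W hW => hW.2)).mono ?_)
  rintro _ ⟨z, hz, rfl⟩
  by_cases hzD : F z ∈ D
  · exact Or.inl hzD
  · obtain ⟨W, hWo, hzW, hW⟩ := h z hz hzD
    obtain ⟨B, hB, hzB, hBW⟩ := hB.exists_subset_of_mem_open hzW hWo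
    exact Or.inr (mem_biUnion (x := B) ⟨hB, hW.mono (image_mono hBW)⟩ ⟨z, hzB, rfl⟩)

lemma exists_injOn_selection {ι : Type*} {V : ι → Set (ℕ → ℕ)}
    (hV : ∀ s, ¬ (F '' V s).Countable) {M : Set ι} (hM : M.Finite) :
    ∃ x : ι → ℕ → ℕ, (∀ s, x s ∈ V s ∧ ∀ W, IsOpen W → x s ∈ W → ¬ (F '' W).Countable) ∧
      InjOn (fun s => F (x s)) M := by
  classical
  induction M, hM using Set.Finite.induction_on with
  | empty =>
    choose x hx _ hW using fun s => exists_mem_forall_uncountable_image (hV s) finite_empty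
    exact ⟨x, fun s => ⟨hx s, hW s⟩, injOn_empty _⟩
  | @insert a M ha hM ih =>
    obtain ⟨x, hx, hinj⟩ := ih
    obtain ⟨z, hz, hzD, hW⟩ :=
      exists_mem_forall_uncountable_image (hV a) (hM.image fun s => F (x s))
    have heq : EqOn (fun s => F (x s)) (fun s => F (Function.update x a z s)) M := by
      intro s hs
      have : s ≠ a := fun h => ha (h ▸ hs)
      simp [this]
    refine ⟨Function.update x a z, fun s => ?_, (injOn_insert ha).2 ⟨hinj.congr heq, ?_⟩⟩
    · by_cases h : s = a
      · subst h
        simpa using ⟨hz, hW⟩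
      · simpa [h] using hx s
    · rw [← heq.image_eq]
      simpa using hzD

lemma exists_separating_level (hF : ∀ n, IsClopen {z | n ∈ F z}) (hinf : ∀ z, (F z).Infinite)
    (had : ∀ z z', F z ≠ F z' → (F z ∩ F z').Finite) {ι : Type*} {V : ι → Set (ℕ → ℕ)}
    (hVo : ∀ s, IsOpen (V s)) (hV : ∀ s, ¬ (F '' V s).Countable) {M : Set ι} (hM : M.Finite)
    {E : Set N} (hE : E.Finite) (n : ℕ) :
    ∃ (u : ι → N) (V' : ι → Set (ℕ → ℕ)),
      (∀ s, IsOpen (V' s)) ∧ (∀ s, ¬ (F '' V' s).Countable) ∧ (∀ s, V' s ⊆ V s) ∧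
      (∀ s ∈ M, u s ∉ E) ∧ (∀ s ∈ M, ∀ z ∈ V' s, u s ∈ F z) ∧
      (∀ s ∈ M, ∀ r ∈ M, r ≠ s → ∀ z ∈ V' s, u r ∉ F z) ∧
      ∀ s, ∀ z ∈ V' s, ∀ z' ∈ V' s, ∀ k < n, z k = z' k := by
  obtain ⟨x, hx, hinj⟩ := exists_injOn_selection hV hM
  have hu : ∀ s, ∃ m, s ∈ M → m ∈ F (x s) ∧ m ∉ E ∧ ∀ r ∈ M, r ≠ s → m ∉ F (x r) := by
    intro s
    by_cases hs : s ∈ M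
    · have hfin : (E ∪ ⋃ r ∈ M \ {s}, F (x s) ∩ F (x r)).Finite := by
        refine hE.union ((hM.subset sdiff_subset).biUnion fun r hr => had _ _ fun h => ?_)
        exact hr.2 (hinj hs hr.1 h).symm
      obtain ⟨m, hm, hm'⟩ := (hinf (x s)).exists_notMem_finite hfin
      refine ⟨m, fun _ => ⟨hm, fun h => hm' (Or.inl h), fun r hr hrs h => hm' (Or.inr ?_)⟩⟩
      exact mem_biUnion (x := r) ⟨hr, hrs⟩ ⟨hm, h⟩
    · obtain ⟨m, -⟩ := (hinf (x s)).nonempty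
      exact ⟨m, fun h => absurd h hs⟩
  choose u hu using hu
  have hcyl : ∀ s, IsOpen {z : ℕ → ℕ | ∀ k < n, z k = x s k} := by
    intro s
    have : {z : ℕ → ℕ | ∀ k < n, z k = x s k} = ⋂ k ∈ Iio n, {z | z k = x s k} := by
      ext; simp
    rw [this]
    refine (finite_Iio n).isOpen_biInter fun k _ => ?_
    change IsOpen ((fun z : ℕ → ℕ => z k) ⁻¹' {x s k})
    exact (isOpen_discrete _).preimage (continuous_apply k)
  let C : ι → ι → Set (ℕ → ℕ) := fun s r => {z | u r ∈ F z ↔ r = s}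
  have hC : ∀ s r, IsOpen (C s r) := by
    intro s r
    by_cases h : r = s
    · simpa [C, h] using (hF (u s)).isOpen
    · have : C s r = {z | u r ∈ F z}ᶜ := by ext; simp [C, h]
      exact this ▸ (hF (u r)).compl.isOpen
  let V' : ι → Set (ℕ → ℕ) := fun s =>
    V s ∩ ((⋂ r ∈ M, {z | s ∈ M → z ∈ C s r}) ∩ {z | ∀ k < n, z k = x s k})
  have hV'o : ∀ s, IsOpen (V' s) := by
    intro s
    refine (hVo s).inter (IsOpen.inter (hM.isOpen_biInter fun r _ => ?_) (hcyl s))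
    by_cases h : s ∈ M
    · simpa [h] using hC s r
    · simp [h]
  refine ⟨u, V', hV'o, fun s => (hx s).2 _ (hV'o s) ⟨(hx s).1, ?_, fun _ _ => rfl⟩,
    fun s => inter_subset_left, fun s hs => (hu s hs).2.1, fun s hs z hz => ?_,
    fun s hs r hr hrs z hz => ?_, fun s z hz z' hz' k hk => ?_⟩
  · refine mem_iInter₂.2 fun r hr hs => ?_
    by_cases h : r = s
    · subst h
      simpa [C] using (hu r hr).1
    · simpa [C, h] using (hu r hr).2.2 s hs (Ne.symm h)
  · exact (mem_iInter₂.1 hz.2.1 s hs hs).2 rfl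
  · exact fun h => hrs ((mem_iInter₂.1 hz.2.1 r hr hs).1 h)
  · rw [hz.2.2 k hk, hz'.2.2 k hk]

/-- An uncountable almost disjoint family with a continuous parametrization has members whose
traces on a copy of the dyadic tree are the branches. -/
lemma exists_tree_trace_eq_branch (hF : ∀ n, IsClopen {z | n ∈ F z})
    (hinf : ∀ z, (F z).Infinite) (had : ∀ z z', F z ≠ F z' → (F z ∩ F z').Finite)
    (hunc : ¬ (range F).Countable) :
    ∃ (u : List Bool → N) (ζ : (ℕ → Bool) → ℕ → ℕ), Function.Injective u ∧
      ∀ x t, u t ∈ F (ζ x) ↔ t ∈ branch x := by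
  let M : ℕ → Set (List Bool) := fun n => {s | s.length = n}
  have hM : ∀ n, (M n).Finite := fun n => List.finite_length_eq Bool n
  let S := {p : (List Bool → Set (ℕ → ℕ)) × Set N //
    (∀ s, IsOpen (p.1 s)) ∧ (∀ s, ¬ (F '' p.1 s).Countable) ∧ p.2.Finite}
  choose u V hVo hV hsub huE hmem hnot hagree using fun (n : ℕ) (p : S) =>
    exists_separating_level hF hinf had p.2.1 p.2.2.1 (hM n) p.2.2.2 n
  let next : ℕ → S → S := fun n p => ⟨(fun s => V n p s.tail, p.1.2 ∪ u n p '' M n),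
    fun s => hVo n p _, fun s => hV n p _, p.2.2.2.union ((hM n).image _)⟩
  let p : ℕ → S := fun n => Nat.rec
    ⟨(fun _ => univ, ∅), fun _ => isOpen_univ, fun _ => by simpa using hunc, finite_empty⟩ next n
  let U : List Bool → N := fun s => u s.length (p s.length) s
  let W : List Bool → Set (ℕ → ℕ) := fun s => V s.length (p s.length) s
  have hWsub : ∀ j s, W (j :: s) ⊆ W s := fun j s => hsub (s.length + 1) (p (s.length + 1)) (j :: s)
  have hWne : ∀ s, (W s).Nonempty := by
    intro s
    by_contra h
    refine hV s.length (p s.length) s ?_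
    have : W s = ∅ := not_nonempty_iff_eq_empty.1 h
    simp only [W] at this
    simp [this]
  have hUmem : ∀ s, ∀ z ∈ W s, U s ∈ F z := fun s => hmem s.length _ s rfl
  have hUnot : ∀ s r, r.length = s.length → r ≠ s → ∀ z ∈ W s, U r ∉ F z := by
    intro s r hl hne z hz
    have := hnot s.length (p s.length) s rfl r hl hne z hz
    simpa only [U, hl] using this
  have hE : ∀ m n, m ≤ n → (p m).1.2 ⊆ (p n).1.2 := fun m n h =>
    monotone_nat_of_le_succ (f := fun n => (p n).1.2) (fun n => subset_union_left) h
  have hUlt : ∀ s r, s.length < r.length → U s ≠ U r := by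
    intro s r hl he
    refine huE r.length (p r.length) r rfl (hE (s.length + 1) _ hl ?_)
    exact Or.inr ⟨s, rfl, he⟩
  have hUinj : Function.Injective U := by
    intro s r he
    rcases lt_trichotomy s.length r.length with h | h | h
    · exact absurd he (hUlt s r h)
    · by_contra hne
      obtain ⟨z, hz⟩ := hWne r
      exact hUnot r s h hne z hz (he ▸ hUmem r z hz)
    · exact absurd he.symm (hUlt r s h)
  have hlim : ∀ x : ℕ → Bool, ∃ z, ∀ C : Set (ℕ → ℕ), IsClosed C →
      (∃ n, W (initSeg x n).reverse ⊆ C) → z ∈ C := by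
    intro x
    refine exists_limit_of_nested (V := fun n => W (initSeg x n).reverse)
      (antitone_nat_of_succ_le fun n => ?_) (fun n => hWne _) fun n => ?_
    · simpa [initSeg_succ] using hWsub (x n) (initSeg x n).reverse
    · simpa [W] using hagree (initSeg x n).reverse.length _ (initSeg x n).reverse
  choose ζ hζ using hlim
  refine ⟨fun t => U t.reverse, ζ, hUinj.comp List.reverse_injective, fun x t => ?_⟩
  rw [mem_branch_iff]
  constructor
  · intro h
    by_contra hne
    refine hζ x _ (hF (U t.reverse)).compl.isClosed ⟨t.length, fun z hz => ?_⟩ h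
    exact hUnot _ _ (by simp) (fun h => hne (List.reverse_injective h)) z hz
  · intro h
    refine hζ x _ (hF (U t.reverse)).isClosed ⟨t.length, fun z hz => ?_⟩
    rw [← h] at hz
    exact hUmem _ z hz

end Perfect

/-- A branching set of nodes contains a copy of the dyadic tree. -/
lemma Branching.exists_embedding {T : Set (List Bool)} (hT : Branching T) :
    ∃ v : List Bool → List Bool, (∀ s, v s ∈ T) ∧ ∀ s t, v s <+: v t ↔ s <+: t := by
  obtain ⟨P, v, h, hP, -⟩ := exists_isScheme hT (fun _ _ => True) fun n P hP hPb =>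
    hPb.exists_splitPair.imp fun Q hQ => ⟨hQ, trivial⟩
  refine ⟨fun s => v s.reverse, fun s => (hP _).2 (h.mem _), fun s t => ?_⟩
  rw [← List.reverse_suffix (l₁ := s)]
  exact ⟨h.suffix_of_prefix_apply, h.prefix_of_suffix⟩

/-- every uncountable analytic almost disjoint family 𝒜 on a countable
set N contains a copy of the family of branches of the dyadic tree: there are
injections u : 2^{<ω} → N and a : 2^ω → 𝒜 with u(b_x) ⊆ a(x) for every x, and
u(c) ∈ 𝒜^⊥ whenever c meets every branch in a finite set. -/
theorem statement_18 (N : Type) [Countable N] [Infinite N] (𝒜 : Set (Set N))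
    (hinf : ∀ a ∈ 𝒜, a.Infinite)
    (had : ∀ a ∈ 𝒜, ∀ b ∈ 𝒜, a ≠ b → (a ∩ b).Finite)
    (hunc : ¬ 𝒜.Countable) (hana : AnalyticFam 𝒜) :
    ∃ (u : List Bool → N) (a : (ℕ → Bool) → Set N),
      Function.Injective u ∧ Function.Injective a ∧ (∀ x, a x ∈ 𝒜) ∧
      (∀ x, u '' branch x ⊆ a x) ∧
      (∀ c : Set (List Bool), (∀ x, (c ∩ branch x).Finite) →
        u '' c ∈ orthFamC 𝒜) := by
  classical
  have hchar : ∀ A : Set N, {n | decide (n ∈ A) = true} = A := fun A => by ext; simp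
  obtain ⟨F, hF, hFr⟩ : ∃ F : (ℕ → ℕ) → Set N, (∀ n, IsClopen {z | n ∈ F z}) ∧ range F = 𝒜 := by
    rw [AnalyticFam, MeasureTheory.AnalyticSet] at hana
    rcases hana with h | ⟨g, hg, hgr⟩
    · refine absurd ?_ hunc
      convert Set.countable_empty (α := Set N)
      refine eq_empty_of_forall_notMem fun A hA => ?_
      have : (fun n => decide (n ∈ A)) ∈ {f : N → Bool | {x | f x = true} ∈ 𝒜} := by
        simpa only [mem_ofPred_eq, hchar] using hA
      rw [h] at this
      exact this
    · refine ⟨fun z => {n | g z n = true}, fun n => ?_, Subset.antisymm ?_ fun A hA => ?_⟩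
      · exact (isClopen_discrete {true}).preimage ((continuous_apply n).comp hg)
      · rintro _ ⟨z, rfl⟩
        have : g z ∈ {f : N → Bool | {x | f x = true} ∈ 𝒜} := hgr ▸ mem_range_self z
        exact this
      · have : (fun n => decide (n ∈ A)) ∈ {f : N → Bool | {x | f x = true} ∈ 𝒜} := by
          simpa only [mem_ofPred_eq, hchar] using hA
        rw [← hgr] at this
        obtain ⟨z, hz⟩ := this
        exact ⟨z, by simp only [hz, hchar]⟩
  have hFA : ∀ z, F z ∈ 𝒜 := fun z => hFr ▸ mem_range_self z
  have hFad : ∀ z z', F z ≠ F z' → (F z ∩ F z').Finite := fun z z' => had _ (hFA z) _ (hFA z')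
  obtain ⟨w, ζ, hw, hζ⟩ := exists_tree_trace_eq_branch hF (fun z => hinf _ (hFA z)) hFad
    (by rwa [hFr])
  have htrace : ∀ x, w ⁻¹' F (ζ x) = branch x := fun x => ext (hζ x)
  have hfad : ∀ z z', w ⁻¹' F z ≠ w ⁻¹' F z' → (w ⁻¹' F z ∩ w ⁻¹' F z').Finite :=
    fun z z' h => Set.Finite.preimage (f := w) hw.injOn (hFad z z' fun he => h (by rw [he]))
  have hchain : ∀ z x, (w ⁻¹' F z ∩ branch x).Infinite → w ⁻¹' F z = branch x := by
    intro z x h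
    by_contra hne
    rw [← htrace] at h hne
    exact h (hfad _ _ hne)
  have hclopen : ∀ t, IsClopen {z | t ∈ w ⁻¹' F z} := fun t => hF (w t)
  obtain ⟨T₀, -, hT₀, h₀⟩ := exists_branching_tameOn false hclopen hfad hchain branching_univ
  obtain ⟨T, hTT₀, hT, h₁⟩ := exists_branching_tameOn true hclopen hfad hchain hT₀
  obtain ⟨v, hvT, hv⟩ := hT.exists_embedding
  have hvinj : Function.Injective v := fun s t h =>
    ((hv s t).1 (h ▸ List.prefix_rfl)).eq_of_length_le
      ((hv t s).1 (h ▸ List.prefix_rfl)).length_le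
  have hbr : ∀ x, ∃ y, v '' branch x ⊆ branch y := by
    intro x
    refine exists_branch_of_chain ((branch_infinite x).image hvinj.injOn) ?_
    rintro _ ⟨s, hs, rfl⟩ _ ⟨t, ht, rfl⟩
    simpa only [hv] using prefix_or_prefix_of_mem_branch hs ht
  choose γ hγ using hbr
  refine ⟨w ∘ v, fun x => F (ζ (γ x)), hw.comp hvinj, fun x y h => ?_, fun x => hFA _, ?_, ?_⟩
  · have he : branch (γ x) = branch (γ y) := by
      rw [← htrace, ← htrace]
      exact congrArg (w ⁻¹' ·) h
    refine branch_injective (Subset.antisymm ?_ ?_)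
    all_goals
      intro s hs
      rw [mem_branch_iff] at hs ⊢
      have h1 := hγ x (mem_image_of_mem v (initSeg_mem_branch x s.length))
      have h2 := hγ y (mem_image_of_mem v (initSeg_mem_branch y s.length))
      rw [← he] at h2
      have h3 := prefix_or_prefix_of_mem_branch h1 h2
      simp only [hv] at h3
      have h4 : initSeg x s.length = initSeg y s.length :=
        h3.elim (fun h => h.eq_of_length (by simp)) fun h => (h.eq_of_length (by simp)).symm
      simpa only [h4] using hs
  · rintro x _ ⟨s, hs, rfl⟩
    exact (hζ _ _).2 (hγ x (mem_image_of_mem v hs))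
  · intro c hc A hA
    obtain ⟨z, rfl⟩ : A ∈ range F := hFr ▸ hA
    have hfin : (w ⁻¹' F z ∩ v '' c).Finite := by
      have hsub : v '' c ⊆ T := image_subset_iff.2 fun s _ => hvT s
      refine finite_of_tame (fun i => ?_) fun y => ?_
      · cases i
        · exact (isFreeIdeal_tame false).mono
            (inter_subset_inter_right _ (hsub.trans hTT₀)) (h₀ z)
        · exact (isFreeIdeal_tame true).mono (inter_subset_inter_right _ hsub) (h₁ z)
      · by_contra hinf'
        have hs : {s ∈ c | v s ∈ branch y}.Infinite := by
          refine Set.Infinite.of_image v (Set.Infinite.mono ?_ hinf')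
          rintro _ ⟨⟨-, s, hs, rfl⟩, hy⟩
          exact ⟨s, ⟨hs, hy⟩, rfl⟩
        obtain ⟨x, hx⟩ := exists_branch_of_chain hs fun s hs t ht => by
          simpa only [hv] using prefix_or_prefix_of_mem_branch hs.2 ht.2
        exact hs ((hc x).subset fun s hs => ⟨hs.1, hx hs⟩)
    refine (hfin.image w).subset ?_
    rintro _ ⟨hz, s, hs, rfl⟩
    exact ⟨v s, ⟨hz, s, hs, rfl⟩, rfl⟩
end
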